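/- arXiv:1701.05383 — 6 statements merged into one kernel-verified Lean document; each statement's English description precedes it below -/
import Mathlib

section
/- Let f_s: [0,1] → [0,1] be a tent map with s ∈ (√2, 2] and let C = [f_s²(1/2), f_s(1/2)] be its core (an f_s-invariant interval). Then the following conditions are equivalent: (1) f_s has s-limit shadowing; (2) f_s has shadowing; (3) f_s has limit shadowing; (4) f_s restricted to C has s-limit shadowing; (5) f_s restricted to C has shadowing; (6) f_s restricted to C has limit shadowing. -/
/-!
Write `f` for the tent map, `c = 1/2` for its turning point. All six properties are equivalent to
`s = 2 ∨ Linked s`. A small neighbourhood of `c` is mapped by `f^i` to an interval with one end at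
`f^i c` (`crit s i`), on a side determined by the itinerary of `c` (`side s i`). Linking says that
at every scale these one-sided intervals at some time come to contain `c`.

*Linking gives s-limit shadowing on `[0, 1]`* (`sLimit_of_linked`). A pseudo-orbit `x` is followed
by closed intervals `[l, q]` inside the `r n`-neighbourhood of `x n`, each contained in the image of
the previous one; by compactness they are followed by a true orbit (`exists_orbit`). Each end of an
interval is either at distance `r n` from `x n`, or a point `f^i c` created `i` steps ago when the
interval was folded at `c`. The pseudo-orbit can pass an end of the second kind only by the errors
accumulated over `i` steps. By linking, once `i` reaches a bound depending only on the scale, the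
interval is folded near that end and the end is discarded, so only boundedly many errors matter
(`exists_adm`); for `s = 2` the points `f^i c` are `0` and `1` and are never passed. The length of
the intervals stays comparable to `r n`, because a fold at worst halves it up to a small loss, is
not followed immediately by another fold, and `s^2 > 2` (`step`). Constant radii give shadowing.
If the errors tend to `0`, the radii can decrease to `0` (`exists_radii`), which gives asymptotic
shadowing by the same point.

*Without linking shadowing and limit shadowing fail* (`exists_bad`). If `s < 2` and linking fails
at scale `ε₀`, the points `f^j w`, for `w` near `c`, lie on the side `side s j` of `f^j c` with
distance growing by the factor `s`, as long as it is at most `ε₀`. The loop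
`c, f c, f^2 c, y, f y, …, c`, where `y` is close to `f^3 c` but on the wrong side and is
eventually mapped to `c` (`exists_wrong_side`), then repels every orbit that follows it. A
concatenation of such loops with errors tending to `0` lies in the core and is not followed
`ε₀`-closely, not even eventually, by any orbit.

The remaining implications are soft: s-limit shadowing passes from `[0, 1]` to the core
(`sLimit_core`), and it implies limit shadowing by applying it to a tail and pulling back along
the surjection of the core onto itself.
-/

/-- `x` is a `δ`-pseudo-orbit for `f` contained in `A`, and `z ∈ A` `ε`-shadows it. -/
def ShadowingOn {X : Type*} [MetricSpace X] (f : X → X) (A : Set X) : Prop :=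
  ∀ ε : ℝ, 0 < ε → ∃ δ : ℝ, 0 < δ ∧
    ∀ x : ℕ → X, (∀ n, x n ∈ A) → (∀ n, dist (f (x n)) (x (n + 1)) < δ) →
      ∃ z ∈ A, ∀ n, dist (f^[n] z) (x n) < ε

def LimitShadowingOn {X : Type*} [MetricSpace X] (f : X → X) (A : Set X) : Prop :=
  ∀ x : ℕ → X, (∀ n, x n ∈ A) →
    Filter.Tendsto (fun n => dist (f (x n)) (x (n + 1))) Filter.atTop (nhds 0) →
    ∃ z ∈ A, Filter.Tendsto (fun n => dist (f^[n] z) (x n)) Filter.atTop (nhds 0)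

def SLimitShadowingOn {X : Type*} [MetricSpace X] (f : X → X) (A : Set X) : Prop :=
  ∀ ε : ℝ, 0 < ε → ∃ δ : ℝ, 0 < δ ∧
    (∀ x : ℕ → X, (∀ n, x n ∈ A) → (∀ n, dist (f (x n)) (x (n + 1)) < δ) →
      ∃ z ∈ A, ∀ n, dist (f^[n] z) (x n) < ε) ∧
    (∀ x : ℕ → X, (∀ n, x n ∈ A) → (∀ n, dist (f (x n)) (x (n + 1)) < δ) →
      Filter.Tendsto (fun n => dist (f (x n)) (x (n + 1))) Filter.atTop (nhds 0) →
      ∃ z ∈ A, (∀ n, dist (f^[n] z) (x n) < ε) ∧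
        Filter.Tendsto (fun n => dist (f^[n] z) (x n)) Filter.atTop (nhds 0))
/-- The tent map with slope `s`. -/
noncomputable def tentMap (s : ℝ) : ℝ → ℝ := fun x => if x ≤ 1 / 2 then s * x else s * (1 - x)

open Filter Topology

/-! ### Basic facts about the tent map -/

theorem tent_left {s x : ℝ} (h : x ≤ 1 / 2) : tentMap s x = s * x := by
  simp only [tentMap, if_pos h]

theorem tent_right {s x : ℝ} (h : 1 / 2 ≤ x) : tentMap s x = s * (1 - x) := by
  rcases eq_or_lt_of_le h with h | h
  · subst h
    norm_num [tentMap]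
  · simp only [tentMap, if_neg (not_le.mpr h)]

theorem tent_eq (s x : ℝ) : tentMap s x = s * (1 / 2 - |x - 1 / 2|) := by
  rcases le_total x (1 / 2) with h | h
  · rw [tent_left h, abs_of_nonpos (by linarith)]; ring
  · rw [tent_right h, abs_of_nonneg (by linarith)]; ring

theorem tent_reflect (s x : ℝ) : tentMap s (1 - x) = tentMap s x := by
  rw [tent_eq, tent_eq, show 1 - x - 1 / 2 = -(x - 1 / 2) by ring, abs_neg]

theorem tent_half (s : ℝ) : tentMap s (1 / 2) = s * (1 / 2) := tent_left le_rfl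

theorem tent_le_left {s : ℝ} (hs : 0 ≤ s) (x : ℝ) : tentMap s x ≤ s * x := by
  rw [tent_eq]
  exact mul_le_mul_of_nonneg_left (by linarith [neg_abs_le (x - 1 / 2)]) hs

theorem tent_le_right {s : ℝ} (hs : 0 ≤ s) (x : ℝ) : tentMap s x ≤ s * (1 - x) := by
  rw [tent_eq]
  exact mul_le_mul_of_nonneg_left (by linarith [le_abs_self (x - 1 / 2)]) hs

theorem tent_le_top {s : ℝ} (hs : 0 ≤ s) (x : ℝ) : tentMap s x ≤ s * (1 / 2) := by
  rw [tent_eq]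
  exact mul_le_mul_of_nonneg_left (by linarith [abs_nonneg (x - 1 / 2)]) hs

theorem tent_continuous (s : ℝ) : Continuous (tentMap s) := by
  have : tentMap s = fun x => s * (1 / 2 - |x - 1 / 2|) := funext (tent_eq s)
  rw [this]
  fun_prop

theorem tent_mem_unit {s : ℝ} (h0 : 0 ≤ s) (h2 : s ≤ 2) {x : ℝ} (hx : x ∈ Set.Icc (0 : ℝ) 1) :
    tentMap s x ∈ Set.Icc (0 : ℝ) 1 := by
  obtain ⟨hx0, hx1⟩ := hx
  refine ⟨?_, by linarith [tent_le_top h0 x]⟩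
  rcases le_total x (1 / 2) with h | h
  · rw [tent_left h]; positivity
  · rw [tent_right h]; exact mul_nonneg h0 (by linarith)

theorem tent_iter_le {s : ℝ} (hs : 0 ≤ s) (x : ℝ) (n : ℕ) : (tentMap s)^[n] x ≤ s ^ n * x := by
  induction n with
  | zero => simp
  | succ n ih =>
    rw [Function.iterate_succ_apply']
    calc tentMap s ((tentMap s)^[n] x) ≤ s * (tentMap s)^[n] x := tent_le_left hs _
      _ ≤ s * (s ^ n * x) := mul_le_mul_of_nonneg_left ih hs
      _ = s ^ (n + 1) * x := by ring

/-- Points outside `[0, 1]` have orbits tending to `-∞`, so an orbit bounded below by `-1` lies in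
`[0, 1]`. -/
theorem mem_unit_of_bounded {s : ℝ} (hs : 1 < s) {z : ℝ}
    (h : ∀ n, -1 ≤ (tentMap s)^[n] z) : z ∈ Set.Icc (0 : ℝ) 1 := by
  have key : ∀ y : ℝ, (∀ n, -1 ≤ (tentMap s)^[n] y) → 0 ≤ y := by
    intro y hy
    by_contra! hneg
    obtain ⟨n, hn⟩ := pow_unbounded_of_one_lt (1 / (-y)) hs
    rw [div_lt_iff₀ (by linarith)] at hn
    linarith [hy n, tent_iter_le (by linarith : (0 : ℝ) ≤ s) y n]
  refine ⟨key z h, ?_⟩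
  have h1 : 0 ≤ tentMap s z := key _ fun n => by
    rw [← Function.iterate_succ_apply]; exact h _
  have h2 := tent_le_right (by linarith : (0 : ℝ) ≤ s) z
  by_contra! h3
  nlinarith

/-! ### The kneading data of the turning point -/

/-- The `i`-th point of the orbit of the turning point `1/2`. -/
noncomputable def crit (s : ℝ) (i : ℕ) : ℝ := (tentMap s)^[i] (1 / 2)

/-- The side of `crit s i` on which the `i`-th image of a small neighbourhood of `1/2` lies: `1` for
the right, `-1` for the left. This reading is valid for `i ≥ 1` as long as the orbit of `1/2`
has not returned to `1/2`; afterwards the value is a convention. -/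
noncomputable def side (s : ℝ) : ℕ → ℝ
  | 0 => -1
  | i + 1 => if crit s i ≤ 1 / 2 then side s i else -side s i

/-- The `i`-th image of a neighbourhood of `1/2` reaches `1/2` when it is allowed to have
length `η`. -/
def Hit (s η : ℝ) (i : ℕ) : Prop :=
  0 ≤ side s i * (1 / 2 - crit s i) ∧ side s i * (1 / 2 - crit s i) ≤ η

/-- The linking property: at every scale, small neighbourhoods of the turning point `1/2` come back
to cover `1/2` while they stay close to the orbit of `1/2`. -/
def Linked (s : ℝ) : Prop := ∀ η : ℝ, 0 < η → ∃ m, 1 ≤ m ∧ Hit s η m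

theorem crit_zero (s : ℝ) : crit s 0 = 1 / 2 := rfl

theorem crit_succ (s : ℝ) (i : ℕ) : crit s (i + 1) = tentMap s (crit s i) :=
  Function.iterate_succ_apply' _ _ _

theorem crit_one (s : ℝ) : crit s 1 = s * (1 / 2) := by rw [crit_succ, crit_zero, tent_half]

theorem side_one (s : ℝ) : side s 1 = -1 := by simp [side, crit_zero]

theorem side_succ_left {s : ℝ} {i : ℕ} (h : crit s i ≤ 1 / 2) : side s (i + 1) = side s i := by
  simp only [side, if_pos h]

theorem side_succ_right {s : ℝ} {i : ℕ} (h : 1 / 2 < crit s i) :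
    side s (i + 1) = -side s i := by
  simp only [side, if_neg (not_le.mpr h)]

theorem side_eq (s : ℝ) (i : ℕ) : side s i = 1 ∨ side s i = -1 := by
  induction i with
  | zero => right; rfl
  | succ i ih =>
    rcases le_or_gt (crit s i) (1 / 2) with h | h
    · rwa [side_succ_left h]
    · rw [side_succ_right h]
      rcases ih with h | h <;> simp [h]

/-! ### One step of the interval tracking -/

/-- The new interval produced by one step: a subinterval `[L, R]` of `f [l, q]` with good endpoints
that is either of length `(2h+κ) r`, or of length `s h r` and to the right of `1/2`,
where `h = 1/20`. -/
def StepConcl (s r κ l q : ℝ) (NL NR : ℝ → Prop) : Prop :=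
  ∃ L R : ℝ, Set.Icc L R ⊆ tentMap s '' Set.Icc l q ∧ NL L ∧ NR R ∧
    ((1 / 10 + κ) * r ≤ R - L ∨ (s / 20 * r ≤ R - L ∧ 1 / 2 ≤ L))

/-- An endpoint `l` bounding the tracked interval on the left, close to `x` or to the left of it,
whose image may serve as an endpoint of the next interval (`NL` for left, `NR` for right endpoints)
on the side dictated by the branch. -/
def OrbL (s r κ x : ℝ) (NL NR : ℝ → Prop) (l : ℝ) : Prop :=
  l ≤ x + κ * r ∧ (1 / 2 < l → NR (tentMap s l)) ∧
    (l < 1 / 2 - κ * r → (x ≤ 1 / 2 ∨ l ≤ 1 - x) → NL (tentMap s l))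

/-- The mirror image of `OrbL` for right endpoints. -/
def OrbR (s r κ x : ℝ) (NL NR : ℝ → Prop) (q : ℝ) : Prop :=
  x - κ * r ≤ q ∧ (q < 1 / 2 → NR (tentMap s q)) ∧
    (1 / 2 + κ * r < q → (1 / 2 ≤ x ∨ 1 - x ≤ q) → NL (tentMap s q))

theorem image_left {s l q : ℝ} (hs : 0 < s) (hlq : l ≤ q) (hq : q ≤ 1 / 2) :
    Set.Icc (tentMap s l) (tentMap s q) ⊆ tentMap s '' Set.Icc l q := by
  rintro y ⟨h1, h2⟩
  rw [tent_left hq] at h2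
  rw [tent_left (hlq.trans hq)] at h1
  have hyq : y / s ≤ q := by rw [div_le_iff₀ hs]; linarith
  refine ⟨y / s, ⟨?_, hyq⟩, ?_⟩
  · rw [le_div_iff₀ hs]; linarith
  · rw [tent_left (hyq.trans hq)]; field_simp

theorem image_reflect (s l q : ℝ) :
    tentMap s '' Set.Icc (1 - q) (1 - l) = tentMap s '' Set.Icc l q := by
  have key : ∀ l q : ℝ, tentMap s '' Set.Icc l q ⊆ tentMap s '' Set.Icc (1 - q) (1 - l) := by
    rintro l q _ ⟨y, ⟨h1, h2⟩, rfl⟩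
    exact ⟨1 - y, ⟨by linarith, by linarith⟩, tent_reflect s y⟩
  refine Set.Subset.antisymm ?_ (key l q)
  have := key (1 - q) (1 - l)
  simpa using this

theorem OrbL.reflect {s r κ x l : ℝ} {NL NR : ℝ → Prop} (h : OrbL s r κ x NL NR l) :
    OrbR s r κ (1 - x) NL NR (1 - l) := by
  obtain ⟨h1, h2, h3⟩ := h
  refine ⟨by linarith, fun h => ?_, fun h h' => ?_⟩
  · rw [tent_reflect]; exact h2 (by linarith)
  · rw [tent_reflect]
    exact h3 (by linarith) (h'.imp (fun h => by linarith) (fun h => by linarith))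

theorem OrbR.reflect {s r κ x q : ℝ} {NL NR : ℝ → Prop} (h : OrbR s r κ x NL NR q) :
    OrbL s r κ (1 - x) NL NR (1 - q) := by
  obtain ⟨h1, h2, h3⟩ := h
  refine ⟨by linarith, fun h => ?_, fun h h' => ?_⟩
  · rw [tent_reflect]; exact h2 (by linarith)
  · rw [tent_reflect]
    exact h3 (by linarith) (h'.imp (fun h => by linarith) (fun h => by linarith))

/-- The tracked interval lies on the left branch. -/
theorem step_left {s r κ x l q : ℝ} {NL NR : ℝ → Prop} (hs : 141 / 100 < s)
    (hr : 0 < r) (hκ0 : 0 < κ) (hκ1 : κ ≤ 1 / 40) (hκ2 : 1 / 10 + κ ≤ s * s / 20)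
    (hlen : s / 20 * r ≤ q - l)
    (hl : l ≤ x - r ∨ OrbL s r κ x NL NR l) (hq : x + r ≤ q ∨ OrbR s r κ x NL NR q)
    (gL : ∀ y, y ≤ tentMap s x - (1 + κ) * r → NL y)
    (gR : ∀ y, tentMap s x + (1 + κ) * r ≤ y → NR y) (gT : NR (tentMap s (1 / 2)))
    (hqc : q ≤ 1 / 2) : StepConcl s r κ l q NL NR := by
  have hs0 : 0 < s := by linarith
  have hκr : κ * r ≤ 1 / 40 * r := by gcongr
  have hsr : 141 / 100 * r ≤ s * r := by gcongr
  have hlq : l ≤ q := by linarith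
  have hl2 : l ≤ 1 / 2 := hlq.trans hqc
  refine ⟨tentMap s l, tentMap s q, image_left hs0 hlq hqc, ?_, ?_, ?_⟩
  · rcases hl with hl | hl
    · apply gL
      rw [tent_left hl2]
      rcases le_total x (1 / 2) with hx | hx
      · rw [tent_left hx]
        have := mul_le_mul_of_nonneg_left hl hs0.le
        nlinarith
      · -- Here `x` has passed the right endpoint, hence `1/2`, by at most `κ r`.
        rw [tent_right hx]
        have hxq : x - κ * r ≤ q := by
          rcases hq with hq | hq
          · linarith
          · exact hq.1
        have h1 : l ≤ (1 - x) - 95 / 100 * r := by linarith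
        have := mul_le_mul_of_nonneg_left h1 hs0.le
        nlinarith
    · apply hl.2.2
      · linarith
      · rcases le_total x (1 / 2) with hx | hx
        · exact Or.inl hx
        · right
          rcases hq with hq | hq
          · linarith
          · linarith [hq.1]
  · rcases hq with hq | hq
    · apply gR
      rw [tent_left hqc, tent_left (by linarith)]
      have := mul_le_mul_of_nonneg_left hq hs0.le
      nlinarith
    · rcases eq_or_lt_of_le hqc with h | h
      · rw [h]; exact gT
      · exact hq.2.1 h
  · left
    rw [tent_left hqc, tent_left hl2]
    have := mul_le_mul_of_nonneg_left hlen hs0.le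
    have := mul_le_mul_of_nonneg_right hκ2 hr.le
    linarith

/-- The tracked interval folds over the turning point and `x` lies on the right of it. -/
theorem step_fold {s r κ x l q : ℝ} {NL NR : ℝ → Prop} (hs : 141 / 100 < s) (hs2 : s ≤ 2)
    (hr : 0 < r) (hr1 : r ≤ 1 / 20) (hκ0 : 0 < κ) (hκ1 : κ ≤ 1 / 40)
    (hxl : x - r ≤ l) (hqx : q ≤ x + r) (hlen : (1 / 10 + κ) * r ≤ q - l)
    (hl : l ≤ x - r ∨ OrbL s r κ x NL NR l) (hq : x + r ≤ q ∨ OrbR s r κ x NL NR q)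
    (gL : ∀ y, y ≤ tentMap s x - (1 + κ) * r → NL y) (gT : NR (tentMap s (1 / 2)))
    (hlc : l < 1 / 2) (hcq : 1 / 2 < q) (hx : 1 / 2 ≤ x) : StepConcl s r κ l q NL NR := by
  have hs0 : 0 < s := by linarith
  have hκr : κ * r ≤ 1 / 40 * r := by gcongr
  have hκr0 : 0 < κ * r := by positivity
  have hsr : 141 / 100 * r ≤ s * r := by gcongr
  have hsr2 : s * r ≤ 2 * r := by gcongr
  -- Either the image of `q` or the image of `l` is used as the left endpoint.
  have chooseQ : 1 / 20 * r ≤ q - 1 / 2 → NL (tentMap s q) → StepConcl s r κ l q NL NR := by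
    intro h1 h2
    refine ⟨tentMap s q, tentMap s (1 / 2), ?_, h2, gT, Or.inr ?_⟩
    · rw [← tent_reflect s q, ← image_reflect]
      exact (image_left hs0 (by linarith) le_rfl).trans
        (Set.image_mono (Set.Icc_subset_Icc le_rfl (by linarith)))
    · rw [tent_half, tent_right hcq.le]
      constructor
      · have := mul_le_mul_of_nonneg_left h1 hs0.le
        linarith
      · have := mul_le_mul_of_nonneg_left (show q - 1 / 2 ≤ 2 * r by linarith) hs0.le
        linarith
  have chooseL : 1 / 20 * r ≤ 1 / 2 - l → NL (tentMap s l) → StepConcl s r κ l q NL NR := by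
    intro h1 h2
    refine ⟨tentMap s l, tentMap s (1 / 2), ?_, h2, gT, Or.inr ?_⟩
    · exact (image_left hs0 hlc.le le_rfl).trans
        (Set.image_mono (Set.Icc_subset_Icc le_rfl hcq.le))
    · rw [tent_half, tent_left hlc.le]
      constructor
      · have := mul_le_mul_of_nonneg_left h1 hs0.le
        linarith
      · have := mul_le_mul_of_nonneg_left (show 1 / 2 - l ≤ 2 * r by linarith) hs0.le
        linarith
  rcases hq with hq | hq
  · apply chooseQ (by linarith)
    apply gL
    rw [tent_right hx, tent_right hcq.le]
    have := mul_le_mul_of_nonneg_left hq hs0.le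
    linarith
  · rcases le_total (1 / 20 * r) (q - 1 / 2) with h | h
    · exact chooseQ h (hq.2.2 (by linarith) (Or.inl hx))
    · have hxq := hq.1
      apply chooseL (by linarith)
      rcases hl with hl | hl
      · apply gL
        rw [tent_right hx, tent_left hlc.le]
        have h1 : l ≤ (1 - x) - 85 / 100 * r := by linarith
        have := mul_le_mul_of_nonneg_left h1 hs0.le
        linarith
      · exact hl.2.2 (by linarith) (Or.inr (by linarith))

/-- One step of the tracking: from an interval `[l, q]` around `x`, each of whose ends is either at
distance `r` from `x` or has an admissible image, one obtains a subinterval of its image with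
admissible ends and length comparable to `r`. -/
theorem step {s r κ x l q : ℝ} {NL NR : ℝ → Prop} (hs : 141 / 100 < s) (hs2 : s ≤ 2)
    (hr : 0 < r) (hr1 : r ≤ 1 / 20) (hκ0 : 0 < κ) (hκ1 : κ ≤ 1 / 40)
    (hκ2 : 1 / 10 + κ ≤ s * s / 20) (hxl : x - r ≤ l) (hqx : q ≤ x + r)
    (hlen : (1 / 10 + κ) * r ≤ q - l ∨ (s / 20 * r ≤ q - l ∧ 1 / 2 ≤ l))
    (hl : l ≤ x - r ∨ OrbL s r κ x NL NR l) (hq : x + r ≤ q ∨ OrbR s r κ x NL NR q)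
    (gL : ∀ y, y ≤ tentMap s x - (1 + κ) * r → NL y)
    (gR : ∀ y, tentMap s x + (1 + κ) * r ≤ y → NR y) (gT : NR (tentMap s (1 / 2))) :
    StepConcl s r κ l q NL NR := by
  have hs0 : 0 < s := by linarith
  have hκr0 : 0 < κ * r := by positivity
  have hsr2 : s * r ≤ 2 * r := by gcongr
  have hlen' : s / 20 * r ≤ q - l := by
    rcases hlen with h | h
    · linarith
    · exact h.1
  have hl' : 1 - x + r ≤ 1 - l ∨ OrbR s r κ (1 - x) NL NR (1 - l) :=
    hl.imp (fun h => by linarith) OrbL.reflect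
  have hq' : 1 - q ≤ 1 - x - r ∨ OrbL s r κ (1 - x) NL NR (1 - q) :=
    hq.imp (fun h => by linarith) OrbR.reflect
  have back : StepConcl s r κ (1 - q) (1 - l) NL NR → StepConcl s r κ l q NL NR := by
    intro h
    unfold StepConcl at h
    rwa [image_reflect] at h
  rcases le_or_gt q (1 / 2) with hqc | hqc
  · exact step_left hs hr hκ0 hκ1 hκ2 hlen' hl hq gL gR gT hqc
  rcases le_or_gt (1 / 2) l with hlc | hlc
  · refine back (step_left hs hr hκ0 hκ1 hκ2 (by linarith) hq' hl' ?_ ?_ gT (by linarith))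
    · rwa [tent_reflect]
    · rwa [tent_reflect]
  have hlen2 : (1 / 10 + κ) * r ≤ q - l := by
    rcases hlen with h | h
    · exact h
    · linarith [h.2]
  rcases le_total (1 / 2) x with hx | hx
  · exact step_fold hs hs2 hr hr1 hκ0 hκ1 hxl hqx hlen2 hl hq gL gT hlc hqc hx
  · refine back (step_fold hs hs2 hr hr1 hκ0 hκ1 (by linarith) (by linarith) (by linarith) hq' hl'
      ?_ gT (by linarith) (by linarith) (by linarith))
    rwa [tent_reflect]

/-! ### Tracking a pseudo-orbit by a chain of intervals -/

/-- The error of the pseudo-orbit `x` at step `n`. -/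
noncomputable def err (s : ℝ) (x : ℕ → ℝ) (n : ℕ) : ℝ := |tentMap s (x n) - x (n + 1)|

/-- The accumulated effect at time `n` of the last `i` errors of `x`. -/
noncomputable def drift (s : ℝ) (x : ℕ → ℝ) : ℕ → ℕ → ℝ
  | 0, _ => 0
  | _ + 1, 0 => 0
  | n + 1, i + 1 => s * drift s x n i + err s x n

/-- No hit of the turning point at scale `η` has occurred strictly before time `i`. -/
def Young (s η : ℝ) (i : ℕ) : Prop := ∀ j, 1 ≤ j → j < i → ¬ Hit s η j

/-- A point `P` that may bound the tracked interval at time `n`, from the left for `τ = 1` and from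
the right for `τ = -1`: it is at distance at least `r` from `x n` on the outer side, or it is a
point of the orbit of `1/2` which `x n` has passed by no more than the accumulated errors. -/
def GoodEnd (s κ : ℝ) (x : ℕ → ℝ) (n : ℕ) (r τ P : ℝ) : Prop :=
  τ * (P - x n) ≤ -r ∨ ∃ i, 1 ≤ i ∧ P = crit s i ∧ side s i = τ ∧ Young s (κ * r) i ∧
    τ * (P - x n) ≤ drift s x n i

/-- The radius `ρ` is admissible at time `n`: the last error is small compared to `ρ`, and `x n` can
pass a young point of the orbit of `1/2` only by a small fraction of `ρ`. -/
def Adm (s κ : ℝ) (x : ℕ → ℝ) (n : ℕ) (ρ : ℝ) : Prop :=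
  (∀ i, 1 ≤ i → Young s (κ * ρ) i → side s i * (crit s i - x n) ≤ drift s x n i →
    side s i * (crit s i - x n) ≤ κ * ρ) ∧ ∀ m, n = m + 1 → err s x m ≤ κ * ρ

/-- The properties of the tracked interval `[l, q]` at time `n` that are preserved by the
tracking. -/
structure Tracked (s κ : ℝ) (x : ℕ → ℝ) (n : ℕ) (r l q : ℝ) : Prop where
  lower : x n - r ≤ l
  upper : q ≤ x n + r
  len : (1 / 10 + κ) * r ≤ q - l ∨ (s / 20 * r ≤ q - l ∧ 1 / 2 ≤ l)
  left : GoodEnd s κ x n r 1 l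
  right : GoodEnd s κ x n r (-1) q

theorem err_nonneg (s : ℝ) (x : ℕ → ℝ) (n : ℕ) : 0 ≤ err s x n := abs_nonneg _

theorem drift_nonneg {s : ℝ} (hs : 0 ≤ s) (x : ℕ → ℝ) (n i : ℕ) : 0 ≤ drift s x n i := by
  induction n generalizing i with
  | zero => simp [drift]
  | succ n ih =>
    cases i with
    | zero => simp [drift]
    | succ i =>
      have := mul_nonneg hs (ih i)
      simp only [drift]
      linarith [err_nonneg s x n]

theorem drift_succ (s : ℝ) (x : ℕ → ℝ) (n i : ℕ) :
    drift s x (n + 1) (i + 1) = s * drift s x n i + err s x n := rfl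

theorem Young.mono {s η η' : ℝ} (h : η' ≤ η) {i : ℕ} (hy : Young s η i) : Young s η' i :=
  fun j h1 h2 hj => hy j h1 h2 ⟨hj.1, hj.2.trans h⟩

theorem Young.succ {s η : ℝ} {i : ℕ} (hy : Young s η i) (h : ¬ Hit s η i) : Young s η (i + 1) := by
  intro j h1 h2
  rcases Nat.lt_succ_iff_lt_or_eq.mp h2 with h3 | rfl
  · exact hy j h1 h3
  · exact h

theorem GoodEnd.orbL {s κ : ℝ} {x : ℕ → ℝ} {n : ℕ} {r r' l : ℝ} (hs : 0 < s) (hκ : 0 < κ)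
    (hr : 0 < r) (hr' : r' ≤ r) (ha : Adm s κ x n r) (h : GoodEnd s κ x n r 1 l) :
    l ≤ x n - r ∨
      OrbL s r κ (x n) (GoodEnd s κ x (n + 1) r' 1) (GoodEnd s κ x (n + 1) r' (-1)) l := by
  rcases h with h | ⟨i, hi1, rfl, hσ, hy, hd⟩
  · left; linarith
  · right
    have hκr : κ * r' ≤ κ * r := by gcongr
    have hκr0 : 0 < κ * r := by positivity
    have he := abs_le.mp (le_refl (err s x n))
    have hb := ha.1 i hi1 hy (by rw [hσ]; exact hd)
    rw [hσ] at hb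
    have hdn := mul_nonneg hs.le (drift_nonneg hs.le x n i)
    have hsd := mul_le_mul_of_nonneg_left hd hs.le
    refine ⟨by linarith, fun hl => Or.inr ⟨i + 1, by omega, (crit_succ s i).symm, ?_, ?_, ?_⟩,
      fun hl hx => Or.inr ⟨i + 1, by omega, (crit_succ s i).symm, ?_, ?_, ?_⟩⟩
    · rw [side_succ_right hl, hσ]
    · refine (hy.mono hκr).succ fun hh => ?_
      have := hh.1
      rw [hσ] at this
      linarith
    · rw [drift_succ, tent_right hl.le]
      linarith [tent_le_right hs.le (x n), he.1]
    · rw [side_succ_left (by linarith), hσ]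
    · refine (hy.mono hκr).succ fun hh => ?_
      have := hh.2
      rw [hσ] at this
      linarith
    · rw [drift_succ, tent_left (by linarith)]
      rcases le_total (x n) (1 / 2) with hx' | hx'
      · rw [err, tent_left hx'] at he ⊢
        linarith [he.2]
      · have : crit s i ≤ 1 - x n := by
          rcases hx with hx | hx <;> linarith
        have := mul_le_mul_of_nonneg_left this hs.le
        rw [err, tent_right hx'] at he ⊢
        linarith [he.2]

theorem GoodEnd.orbR {s κ : ℝ} {x : ℕ → ℝ} {n : ℕ} {r r' q : ℝ} (hs : 0 < s) (hκ : 0 < κ)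
    (hr : 0 < r) (hr' : r' ≤ r) (ha : Adm s κ x n r) (h : GoodEnd s κ x n r (-1) q) :
    x n + r ≤ q ∨
      OrbR s r κ (x n) (GoodEnd s κ x (n + 1) r' 1) (GoodEnd s κ x (n + 1) r' (-1)) q := by
  rcases h with h | ⟨i, hi1, rfl, hσ, hy, hd⟩
  · left; linarith
  · right
    have hκr : κ * r' ≤ κ * r := by gcongr
    have hκr0 : 0 < κ * r := by positivity
    have he := abs_le.mp (le_refl (err s x n))
    have hb := ha.1 i hi1 hy (by rw [hσ]; exact hd)
    rw [hσ] at hb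
    have hdn := mul_nonneg hs.le (drift_nonneg hs.le x n i)
    have hsd := mul_le_mul_of_nonneg_left hd hs.le
    refine ⟨by linarith, fun hl => Or.inr ⟨i + 1, by omega, (crit_succ s i).symm, ?_, ?_, ?_⟩,
      fun hl hx => Or.inr ⟨i + 1, by omega, (crit_succ s i).symm, ?_, ?_, ?_⟩⟩
    · rw [side_succ_left hl.le, hσ]
    · refine (hy.mono hκr).succ fun hh => ?_
      have := hh.1
      rw [hσ] at this
      linarith
    · rw [drift_succ, tent_left hl.le]
      linarith [tent_le_left hs.le (x n), he.1]
    · rw [side_succ_right (by linarith), hσ, neg_neg]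
    · refine (hy.mono hκr).succ fun hh => ?_
      have := hh.2
      rw [hσ] at this
      linarith
    · rw [drift_succ, tent_right (by linarith)]
      rcases le_total (1 / 2) (x n) with hx' | hx'
      · rw [err, tent_right hx'] at he ⊢
        linarith [he.2]
      · have : 1 - x n ≤ crit s i := by
          rcases hx with hx | hx <;> linarith
        have := mul_le_mul_of_nonneg_left this hs.le
        rw [err, tent_left hx'] at he ⊢
        linarith [he.2]

theorem GoodEnd.le {s κ : ℝ} {x : ℕ → ℝ} {n : ℕ} {r τ P : ℝ} (hκ : 0 < κ) (hr : 0 < r)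
    (ha : Adm s κ x n r) (h : GoodEnd s κ x n r τ P) : τ * (P - x n) ≤ κ * r := by
  have : 0 < κ * r := by positivity
  rcases h with h | ⟨i, hi, rfl, rfl, hy, hd⟩
  · linarith
  · exact ha.1 i hi hy hd

/-- Cutting an interval with good ends down to the `r`-neighbourhood of `x n`. -/
theorem trim {s κ : ℝ} {x : ℕ → ℝ} {n : ℕ} {r L R : ℝ} (hκ : 0 < κ) (hκ1 : κ ≤ 1 / 40)
    (hr : 0 < r) (ha : Adm s κ x n r)
    (hlen : (1 / 10 + κ) * r ≤ R - L ∨ (s / 20 * r ≤ R - L ∧ 1 / 2 ≤ L))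
    (hL : GoodEnd s κ x n r 1 L) (hR : GoodEnd s κ x n r (-1) R) :
    Tracked s κ x n r (max L (x n - r)) (min R (x n + r)) := by
  have h1 := hL.le hκ hr ha
  have h2 := hR.le hκ hr ha
  have hκr : κ * r ≤ 1 / 40 * r := by gcongr
  refine ⟨le_max_right _ _, min_le_right _ _, ?_, ?_, ?_⟩
  · rcases le_total L (x n - r) with hl | hl <;> rcases le_total R (x n + r) with hr | hr
    · rw [max_eq_right hl, min_eq_left hr]; left; linarith
    · rw [max_eq_right hl, min_eq_right hr]; left; linarith
    · rw [max_eq_left hl, min_eq_left hr]; exact hlen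
    · rw [max_eq_left hl, min_eq_right hr]; left; linarith
  · rcases le_total L (x n - r) with hl | hl
    · rw [max_eq_right hl]; left; linarith
    · rwa [max_eq_left hl]
  · rcases le_total R (x n + r) with hl | hl
    · rwa [min_eq_left hl]
    · rw [min_eq_right hl]; left; linarith

theorem tracked_step {s κ : ℝ} {x : ℕ → ℝ} {n : ℕ} {r r' l q : ℝ} (hs : 141 / 100 < s)
    (hs2 : s ≤ 2) (hκ : 0 < κ) (hκ1 : κ ≤ 1 / 40) (hκ2 : 1 / 10 + κ ≤ s * s / 20)
    (hr : 0 < r) (hr1 : r ≤ 1 / 20) (hr'0 : 0 < r') (hr' : r' ≤ r)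
    (ha : Adm s κ x n r) (ha' : Adm s κ x (n + 1) r') (h : Tracked s κ x n r l q) :
    ∃ l' q', Tracked s κ x (n + 1) r' l' q' ∧ Set.Icc l' q' ⊆ tentMap s '' Set.Icc l q := by
  have hs0 : 0 < s := by linarith
  have he : err s x n ≤ κ * r' := ha'.2 n rfl
  have he' : err s x n ≤ κ * r := he.trans (by gcongr)
  have hab := abs_le.mp (le_refl (err s x n))
  obtain ⟨L, R, hsub, hL, hR, hlen⟩ :=
    step (NL := GoodEnd s κ x (n + 1) r' 1) (NR := GoodEnd s κ x (n + 1) r' (-1))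
      hs hs2 hr hr1 hκ hκ1 hκ2 h.lower h.upper h.len
      (h.left.orbL hs0 hκ hr hr' ha) (h.right.orbR hs0 hκ hr hr' ha)
      (fun y hy => Or.inl (by linarith [hab.2])) (fun y hy => Or.inl (by linarith [hab.1]))
      (Or.inr ⟨1, le_rfl, (crit_succ s 0).symm, side_one s, fun j h1 h2 => by omega, by
        have h0 : drift s x n 0 = 0 := by cases n <;> rfl
        rw [drift_succ, h0, tent_half]
        linarith [tent_le_top hs0.le (x n), hab.1]⟩)
  have hlen' : (1 / 10 + κ) * r' ≤ R - L ∨ (s / 20 * r' ≤ R - L ∧ 1 / 2 ≤ L) := by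
    rcases hlen with h | ⟨h, h'⟩
    · exact Or.inl (le_trans (by gcongr) h)
    · exact Or.inr ⟨le_trans (by gcongr) h, h'⟩
  exact ⟨_, _, trim hκ hκ1 hr'0 ha' hlen' hL hR,
    (Set.Icc_subset_Icc (le_max_left _ _) (min_le_left _ _)).trans hsub⟩

/-- A chain of compact intervals, each covered by the image of the previous one, is followed by an
orbit. -/
theorem exists_orbit {f : ℝ → ℝ} (hf : Continuous f) (l q : ℕ → ℝ) (hne : ∀ n, l n ≤ q n)
    (hcov : ∀ n, Set.Icc (l (n + 1)) (q (n + 1)) ⊆ f '' Set.Icc (l n) (q n)) :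
    ∃ z, ∀ n, f^[n] z ∈ Set.Icc (l n) (q n) := by
  let K : ℕ → Set ℝ := fun n => {z | ∀ i ≤ n, f^[i] z ∈ Set.Icc (l i) (q i)}
  have pull : ∀ n, ∀ y ∈ Set.Icc (l n) (q n), ∃ z ∈ K n, f^[n] z = y := by
    intro n
    induction n with
    | zero =>
      intro y hy
      refine ⟨y, fun i hi => ?_, rfl⟩
      obtain rfl : i = 0 := by omega
      exact hy
    | succ n ih =>
      intro y hy
      obtain ⟨y', hy', rfl⟩ := hcov n hy
      obtain ⟨z, hz, rfl⟩ := ih y' hy'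
      refine ⟨z, fun i hi => ?_, Function.iterate_succ_apply' _ _ _⟩
      rcases Nat.le_succ_iff.mp hi with h | rfl
      · exact hz i h
      · rw [Function.iterate_succ_apply']; exact hy
  have hclosed : ∀ n, IsClosed (K n) := by
    intro n
    have : K n = ⋂ i, ⋂ _ : i ≤ n, f^[i] ⁻¹' Set.Icc (l i) (q i) := by
      ext z; simp [K]
    rw [this]
    exact isClosed_iInter fun i => isClosed_iInter fun _ => isClosed_Icc.preimage (hf.iterate i)
  have hcomp : IsCompact (K 0) :=
    isCompact_Icc.of_isClosed_subset (hclosed 0) (fun z hz => hz 0 le_rfl)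
  obtain ⟨z, hz⟩ := IsCompact.nonempty_iInter_of_sequence_nonempty_isCompact_isClosed K
    (fun n z hz i hi => hz i (by omega))
    (fun n => by
      obtain ⟨z, hz, -⟩ := pull n (l n) ⟨le_rfl, hne n⟩
      exact ⟨z, hz⟩) hcomp hclosed
  exact ⟨z, fun n => Set.mem_iInter.mp hz n n le_rfl⟩

/-- If nonincreasing radii `r n` are admissible at every time, then `x` is followed by a true orbit
within distance `r n` at time `n`. -/
theorem track {s κ : ℝ} {x : ℕ → ℝ} {r : ℕ → ℝ} (hs : 141 / 100 < s)
    (hs2 : s ≤ 2) (hκ : 0 < κ) (hκ1 : κ ≤ 1 / 40) (hκ2 : 1 / 10 + κ ≤ s * s / 20)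
    (hx : ∀ n, x n ∈ Set.Icc (0 : ℝ) 1) (hr : ∀ n, 0 < r n) (hr1 : ∀ n, r n ≤ 1 / 20)
    (hmono : Antitone r) (ha : ∀ n, Adm s κ x n (r n)) :
    ∃ z ∈ Set.Icc (0 : ℝ) 1, ∀ n, |(tentMap s)^[n] z - x n| ≤ r n := by
  have hstep : ∀ n, ∀ p : ℝ × ℝ, Tracked s κ x n (r n) p.1 p.2 → ∃ p' : ℝ × ℝ,
      Tracked s κ x (n + 1) (r (n + 1)) p'.1 p'.2 ∧
        Set.Icc p'.1 p'.2 ⊆ tentMap s '' Set.Icc p.1 p.2 := by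
    intro n p hp
    obtain ⟨l', q', h⟩ := tracked_step hs hs2 hκ hκ1 hκ2 (hr n) (hr1 n) (hr (n + 1))
      (hmono (Nat.le_succ n)) (ha n) (ha (n + 1)) hp
    exact ⟨(l', q'), h⟩
  have h0 : Tracked s κ x 0 (r 0) (x 0 - r 0) (x 0 + r 0) := by
    have := hr 0
    have hκr : κ * r 0 ≤ 1 / 40 * r 0 := by gcongr
    exact ⟨le_rfl, le_rfl, Or.inl (by linarith), Or.inl (by linarith), Or.inl (by linarith)⟩
  choose! g hg1 hg2 using hstep
  let P : ℕ → ℝ × ℝ := fun n => Nat.rec (x 0 - r 0, x 0 + r 0) (fun n p => g n p) n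
  have hP : ∀ n, Tracked s κ x n (r n) (P n).1 (P n).2 := by
    intro n
    induction n with
    | zero => exact h0
    | succ n ih => exact hg1 n (P n) ih
  obtain ⟨z, hz⟩ := exists_orbit (tent_continuous s) (fun n => (P n).1) (fun n => (P n).2)
    (fun n => by
      have := hr n
      have h1 : 0 < κ * r n := by positivity
      have h2 : 0 < s / 20 * r n := by
        have : 0 < s := by linarith
        positivity
      rcases (hP n).len with h | ⟨h, -⟩ <;> linarith)
    (fun n => hg2 n (P n) (hP n))
  have hd : ∀ n, |(tentMap s)^[n] z - x n| ≤ r n := fun n => by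
    have h1 := (hz n).1
    have h2 := (hz n).2
    have h3 := (hP n).lower
    have h4 := (hP n).upper
    exact abs_le.mpr ⟨by linarith, by linarith⟩
  have hs1 : 1 < s := by linarith
  refine ⟨z, mem_unit_of_bounded hs1 fun n => ?_, hd⟩
  linarith [(abs_le.mp (hd n)).1, hr1 n, (hx n).1]


/-! ### Linking implies s-limit shadowing -/

theorem drift_le {s : ℝ} (hs0 : 0 ≤ s) (hs2 : s ≤ 2) {x : ℕ → ℝ} {δ : ℝ} (hδ : 0 < δ) (n i : ℕ)
    (h : ∀ k, k < n → n ≤ k + i → err s x k ≤ δ) : drift s x n i ≤ (2 ^ i - 1) * δ := by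
  have hpow : ∀ i : ℕ, (0 : ℝ) ≤ 2 ^ i - 1 := fun i => by
    linarith [one_le_pow₀ (by norm_num : (1 : ℝ) ≤ 2) (n := i)]
  induction n generalizing i with
  | zero => simpa [drift] using mul_nonneg (hpow i) hδ.le
  | succ n ih =>
    cases i with
    | zero => simp [drift]
    | succ i =>
      have h1 := ih i fun k hk hk' => h k (by omega) (by omega)
      have h2 := h n (by omega) (by omega)
      have h3 := mul_le_mul_of_nonneg_right hs2 (drift_nonneg hs0 x n i)
      rw [drift_succ, pow_succ]
      linarith

theorem side_crit_two {i : ℕ} (hi : 1 ≤ i) :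
    (crit 2 i = 1 ∧ side 2 i = -1) ∨ (crit 2 i = 0 ∧ side 2 i = 1) := by
  induction i, hi using Nat.le_induction with
  | base => left; exact ⟨by rw [crit_one]; norm_num, side_one 2⟩
  | succ i _ ih =>
    right
    rcases ih with ⟨h1, h2⟩ | ⟨h1, h2⟩
    · rw [crit_succ, side_succ_right (by rw [h1]; norm_num), h1, h2]
      exact ⟨by rw [tent_right (by norm_num)]; norm_num, by norm_num⟩
    · rw [crit_succ, side_succ_left (by rw [h1]; norm_num), h1, h2]
      exact ⟨by rw [tent_left (by norm_num)]; norm_num, rfl⟩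

/-- A radius is admissible as soon as finitely many of the latest errors are small. Linking bounds
the age of a young point of the orbit of `1/2`; for `s = 2` such points are ends of `[0, 1]`
and cannot be passed at all. -/
theorem exists_adm {s κ ρ : ℝ} (hs0 : 0 ≤ s) (hs2 : s ≤ 2) (hκ : 0 < κ) (hρ : 0 < ρ)
    (h : s = 2 ∨ Linked s) :
    ∃ δ : ℝ, 0 < δ ∧ ∃ M : ℕ, ∀ x : ℕ → ℝ, (∀ n, x n ∈ Set.Icc (0 : ℝ) 1) → ∀ n,
      (∀ k, k < n → n ≤ k + M → err s x k ≤ δ) → Adm s κ x n ρ := by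
  have hκρ : 0 < κ * ρ := by positivity
  rcases h with rfl | h
  · refine ⟨κ * ρ, hκρ, 1, fun x hx n he => ⟨fun i hi _ _ => ?_, ?_⟩⟩
    · have := hx n
      rcases side_crit_two hi with ⟨h1, h2⟩ | ⟨h1, h2⟩ <;> rw [h1, h2] <;>
        linarith [this.1, this.2]
    · rintro m rfl
      exact he m (by omega) (by omega)
  · obtain ⟨m, hm1, hm⟩ := h (κ * ρ) hκρ
    have hpow : (1 : ℝ) ≤ 2 ^ m := one_le_pow₀ (by norm_num)
    refine ⟨κ * ρ / 2 ^ m, by positivity, m, fun x hx n he => ⟨fun i hi hy hd => ?_, ?_⟩⟩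
    · have him : i ≤ m := by
        by_contra! hlt
        exact hy m hm1 hlt hm
      have h1 := drift_le hs0 hs2 (by positivity) n i fun k hk hk' => he k hk (by omega)
      have h2 : (2 ^ i - 1 : ℝ) * (κ * ρ / 2 ^ m) ≤ 2 ^ m * (κ * ρ / 2 ^ m) := by
        have : (2 : ℝ) ^ i ≤ 2 ^ m := pow_le_pow_right₀ (by norm_num) him
        gcongr
        linarith
      rw [mul_div_cancel₀ _ (by positivity)] at h2
      linarith
    · rintro k rfl
      exact (he k (by omega) (by omega)).trans (div_le_self hκρ.le hpow)

/-- A diagonal choice: if each positive radius is eventually admissible, and `ρ₀` always is, then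
there are admissible radii decreasing to `0`. -/
theorem exists_radii {P : ℕ → ℝ → Prop} {ρ₀ : ℝ} (hρ : 0 < ρ₀) (h0 : ∀ n, P n ρ₀)
    (h : ∀ ρ, 0 < ρ → ∀ᶠ n in atTop, P n ρ) :
    ∃ r : ℕ → ℝ, Antitone r ∧ (∀ n, 0 < r n) ∧ (∀ n, r n ≤ ρ₀) ∧ Tendsto r atTop (𝓝 0) ∧
      ∀ n, P n (r n) := by
  classical
  let ρ : ℕ → ℝ := fun k => ρ₀ / ((k : ℝ) + 1)
  have hρpos : ∀ k, 0 < ρ k := fun k => by positivity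
  have hρanti : Antitone ρ := fun a b hab => by
    have : (a : ℝ) ≤ b := by exact_mod_cast hab
    simp only [ρ]
    gcongr
  have hρ0 : ρ 0 = ρ₀ := by simp [ρ]
  have hρlim : Tendsto ρ atTop (𝓝 0) := by
    have := (tendsto_one_div_add_atTop_nhds_zero_nat (𝕜 := ℝ)).const_mul ρ₀
    simpa [ρ, div_eq_mul_inv] using this
  let Q : ℕ → ℕ → Prop := fun n k => ∀ m, n ≤ m → P m (ρ k)
  let K : ℕ → ℕ := fun n => Nat.findGreatest (Q n) n
  have hK : ∀ n, Q n (K n) := fun n =>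
    Nat.findGreatest_spec (P := Q n) (Nat.zero_le n) (fun m _ => by rw [hρ0]; exact h0 m)
  have hKmono : Monotone K := fun a b hab =>
    Nat.findGreatest_mono (fun k hk m hm => hk m (hab.trans hm)) hab
  have hKlim : Tendsto K atTop atTop := by
    refine tendsto_atTop.mpr fun k => ?_
    obtain ⟨N, hN⟩ := eventually_atTop.mp (h (ρ k) (hρpos k))
    filter_upwards [eventually_ge_atTop (max N k)] with n hn
    exact Nat.le_findGreatest ((le_max_right _ _).trans hn)
      (fun m hm => hN m (((le_max_left _ _).trans hn).trans hm))
  exact ⟨fun n => ρ (K n), fun a b hab => hρanti (hKmono hab), fun n => hρpos _,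
    fun n => hρ0 ▸ hρanti (Nat.zero_le _), hρlim.comp hKlim, fun n => hK n n le_rfl⟩

theorem sLimit_of_linked {s : ℝ} (hs : s ∈ Set.Ioc (Real.sqrt 2) 2) (h : s = 2 ∨ Linked s) :
    SLimitShadowingOn (tentMap s) (Set.Icc (0 : ℝ) 1) := by
  obtain ⟨hs1, hs2⟩ := hs
  have hsq : 2 < s * s := by
    have h1 := Real.sq_sqrt (show (0 : ℝ) ≤ 2 by norm_num)
    nlinarith [Real.sqrt_nonneg 2]
  have hs141 : 141 / 100 < s := by
    have := Real.sqrt_nonneg 2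
    by_contra! hc
    nlinarith
  have hs0 : 0 ≤ s := by linarith
  have hs4 : s * s ≤ 4 := by nlinarith
  obtain ⟨κ, hκdef⟩ : ∃ κ : ℝ, κ = (s * s - 2) / 80 := ⟨_, rfl⟩
  have hκ : 0 < κ := by linarith
  have hκ1 : κ ≤ 1 / 40 := by linarith
  have hκ2 : 1 / 10 + κ ≤ s * s / 20 := by linarith
  intro ε hε
  obtain ⟨ρ₀, hρdef⟩ : ∃ ρ₀ : ℝ, ρ₀ = min (ε / 2) (1 / 20) := ⟨_, rfl⟩
  have hρ : 0 < ρ₀ := by rw [hρdef]; exact lt_min (by linarith) (by norm_num)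
  have hρε : ρ₀ < ε := by
    have := min_le_left (ε / 2) (1 / 20)
    linarith
  have hρ1 : ρ₀ ≤ 1 / 20 := hρdef ▸ min_le_right _ _
  obtain ⟨δ, hδ, M, hM⟩ := exists_adm hs0 hs2 hκ hρ h
  refine ⟨δ, hδ, fun x hx he => ?_, fun x hx he hlim => ?_⟩
  · obtain ⟨z, hz, hd⟩ := track hs141 hs2 hκ hκ1 hκ2 hx (r := fun _ => ρ₀) (fun _ => hρ)
      (fun _ => hρ1) antitone_const (fun n => hM x hx n fun k _ _ => (he k).le)
    exact ⟨z, hz, fun n => (hd n).trans_lt hρε⟩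
  · obtain ⟨r, hanti, hpos, hle, hr0, hadm⟩ := exists_radii (P := Adm s κ x) hρ
      (fun n => hM x hx n fun k _ _ => (he k).le) (by
        intro ρ hρ'
        obtain ⟨δ', hδ', M', hM'⟩ := exists_adm hs0 hs2 hκ hρ' h
        obtain ⟨N, hN⟩ := eventually_atTop.mp (hlim.eventually (gt_mem_nhds hδ'))
        filter_upwards [eventually_ge_atTop (N + M')] with n hn
        exact hM' x hx n fun k _ hk => (hN k (by omega)).le)
    obtain ⟨z, hz, hd⟩ := track hs141 hs2 hκ hκ1 hκ2 hx hpos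
      (fun n => (hle n).trans hρ1) hanti hadm
    exact ⟨z, hz, fun n => (hd n).trans_lt ((hle n).trans_lt hρε),
      squeeze_zero (fun _ => dist_nonneg) hd hr0⟩

/-! ### The core -/

/-- The core, in explicit form. -/
def core (s : ℝ) : Set ℝ := Set.Icc (s * (1 - s * (1 / 2))) (s * (1 / 2))

theorem core_eq {s : ℝ} (hs : 1 ≤ s) :
    Set.Icc (tentMap s (tentMap s (1 / 2))) (tentMap s (1 / 2)) = core s := by
  rw [tent_half, tent_right (by linarith), core]

theorem tent_mem_core {s x : ℝ} (hs : 1 ≤ s) (hs2 : s ≤ 2) (hx : x ∈ core s) :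
    tentMap s x ∈ core s := by
  obtain ⟨h1, h2⟩ := hx
  refine ⟨?_, tent_le_top (by linarith) x⟩
  rcases le_total x (1 / 2) with h | h
  · rw [tent_left h]
    have h0 : 0 ≤ x := le_trans (mul_nonneg (by linarith) (by linarith)) h1
    have := mul_le_mul_of_nonneg_right hs h0
    linarith
  · rw [tent_right h]
    exact mul_le_mul_of_nonneg_left (by linarith) (by linarith)

theorem iter_mem_core {s x : ℝ} (hs : 1 ≤ s) (hs2 : s ≤ 2) (hx : x ∈ core s) (n : ℕ) :
    (tentMap s)^[n] x ∈ core s := by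
  induction n with
  | zero => exact hx
  | succ n ih => rw [Function.iterate_succ_apply']; exact tent_mem_core hs hs2 ih

theorem half_mem_core {s : ℝ} (hs : 1 ≤ s) : (1 / 2 : ℝ) ∈ core s :=
  ⟨by nlinarith [sq_nonneg (s - 1)], by linarith⟩

theorem core_subset {s : ℝ} (hs : 1 ≤ s) (hs2 : s ≤ 2) : core s ⊆ Set.Icc (0 : ℝ) 1 :=
  Set.Icc_subset_Icc (mul_nonneg (by linarith) (by linarith)) (by linarith)

theorem core_surj {s y : ℝ} (hs : 1 ≤ s) (hy : y ∈ core s) :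
    ∃ x ∈ core s, tentMap s x = y := by
  obtain ⟨h1, h2⟩ := hy
  have hs0 : 0 < s := by linarith
  have h3 : y / s ≤ 1 / 2 := by rw [div_le_iff₀ hs0]; linarith
  have h4 : 1 - s * (1 / 2) ≤ y / s := by rw [le_div_iff₀ hs0]; linarith
  refine ⟨1 - y / s, ⟨?_, by linarith⟩, ?_⟩
  · linarith [(half_mem_core hs).1]
  · rw [tent_right (by linarith)]; field_simp; ring

theorem core_surj_iter {s y : ℝ} (hs : 1 ≤ s) (hy : y ∈ core s) (n : ℕ) :
    ∃ x ∈ core s, (tentMap s)^[n] x = y := by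
  induction n with
  | zero => exact ⟨y, hy, rfl⟩
  | succ n ih =>
    obtain ⟨x, hx, rfl⟩ := ih
    obtain ⟨w, hw, rfl⟩ := core_surj hs hx
    exact ⟨w, hw, Function.iterate_succ_apply _ _ _⟩

/-! ### Without linking there are pseudo-orbits that are not shadowed -/

theorem tent_along {s v : ℝ} {j : ℕ}
    (h : (crit s j ≤ 1 / 2 ∧ crit s j + side s j * v ≤ 1 / 2) ∨
      (1 / 2 < crit s j ∧ 1 / 2 ≤ crit s j + side s j * v)) :
    tentMap s (crit s j + side s j * v) = crit s (j + 1) + side s (j + 1) * (s * v) := by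
  rcases h with ⟨h1, h2⟩ | ⟨h1, h2⟩
  · rw [tent_left h2, crit_succ, tent_left h1, side_succ_left h1]; ring
  · rw [tent_right h2, crit_succ, tent_right h1.le, side_succ_right h1]; ring

theorem tent_along_fwd {s v η : ℝ} {j : ℕ} (hj : ¬ Hit s η j) (h0 : 0 ≤ v) (hv : v ≤ η) :
    tentMap s (crit s j + side s j * v) = crit s (j + 1) + side s (j + 1) * (s * v) := by
  apply tent_along
  by_contra hc
  apply hj
  unfold Hit
  rcases side_eq s j with h | h <;> rw [h] at hc ⊢ <;>
    rcases le_or_gt (crit s j) (1 / 2) with hp | hp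
  · have : ¬ crit s j + 1 * v ≤ 1 / 2 := fun h' => hc (Or.inl ⟨hp, h'⟩)
    constructor <;> linarith
  · exact absurd (Or.inr ⟨hp, by linarith⟩) hc
  · exact absurd (Or.inl ⟨hp, by linarith⟩) hc
  · have : ¬ 1 / 2 ≤ crit s j + -1 * v := fun h' => hc (Or.inr ⟨hp, h'⟩)
    constructor <;> linarith

theorem tent_along_bwd {s v η : ℝ} {j : ℕ}
    (hj : ¬ (0 ≤ side s j * (crit s j - 1 / 2) ∧ side s j * (crit s j - 1 / 2) ≤ η))
    (h0 : 0 ≤ v) (hv : v ≤ η) :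
    tentMap s (crit s j + side s j * -v) = crit s (j + 1) + side s (j + 1) * -(s * v) := by
  rw [← mul_neg]
  apply tent_along
  by_contra hc
  apply hj
  rcases side_eq s j with h | h <;> rw [h] at hc ⊢ <;>
    rcases le_or_gt (crit s j) (1 / 2) with hp | hp
  · exact absurd (Or.inl ⟨hp, by linarith⟩) hc
  · have : ¬ 1 / 2 ≤ crit s j + 1 * -v := fun h' => hc (Or.inr ⟨hp, h'⟩)
    constructor <;> linarith
  · have : ¬ crit s j + -1 * -v ≤ 1 / 2 := fun h' => hc (Or.inl ⟨hp, h'⟩)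
    constructor <;> linarith
  · exact absurd (Or.inr ⟨hp, by linarith⟩) hc

/-- Arbitrarily close to `crit s 3`, on the side not reached by neighbourhoods of `1/2`, there is a
point whose orbit hits `1/2` while staying on the wrong side of the orbit of `1/2`. -/
theorem exists_wrong_side {s ε₀ δ : ℝ} (hs : 1 < s) (hs2 : s < 2) (hε : 0 < ε₀)
    (hL : ∀ m, 1 ≤ m → ¬ Hit s ε₀ m) (hδ : 0 < δ) :
    ∃ t : ℝ, 0 < t ∧ t < δ ∧ crit s 3 - t ∈ core s ∧ ∃ i : ℕ,
      (tentMap s)^[i] (crit s 3 - t) = 1 / 2 ∧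
      ∀ j ≤ i, (tentMap s)^[j] (crit s 3 - t) = crit s (3 + j) + side s (3 + j) * -(s ^ j * t) := by
  classical
  have hs0 : 0 < s := by linarith
  have ha0 : 0 < s * (1 - s * (1 / 2)) := mul_pos hs0 (by linarith)
  have hc1 : 1 / 2 < crit s 1 := by rw [crit_one]; linarith
  have hc2 : crit s 2 = s * (1 - s * (1 / 2)) := by
    rw [crit_succ, tent_right hc1.le, crit_one]
  have hc2' : crit s 2 < 1 / 2 := by
    rw [hc2]
    have : 0 < (s - 1) * (s - 1) := mul_pos (by linarith) (by linarith)
    linarith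
  have hc3 : crit s 3 = s * crit s 2 := by rw [crit_succ, tent_left hc2'.le]
  have hσ3 : side s 3 = 1 := by
    rw [side_succ_left hc2'.le, side_succ_right hc1, side_one]; norm_num
  obtain ⟨η, hηdef⟩ : ∃ η : ℝ, η = min (δ / 2) ((s - 1) * crit s 2) := ⟨_, rfl⟩
  have hη : 0 < η := by
    rw [hηdef]
    exact lt_min (by linarith) (mul_pos (by linarith) (by rw [hc2]; exact ha0))
  have hηδ : η < δ := by
    have := min_le_left (δ / 2) ((s - 1) * crit s 2)
    linarith
  have hηa : η ≤ (s - 1) * crit s 2 := hηdef ▸ min_le_right _ _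
  have hcore : ∀ t, 0 ≤ t → t ≤ η → crit s 3 - t ∈ core s := by
    intro t ht0 ht
    constructor
    · rw [hc3, ← hc2]; linarith
    · have := tent_le_top hs0.le (crit s 2)
      rw [← crit_succ] at this
      linarith
  let B : ℕ → Prop := fun i => 0 ≤ side s (3 + i) * (crit s (3 + i) - 1 / 2) ∧
    side s (3 + i) * (crit s (3 + i) - 1 / 2) ≤ s ^ i * η
  have hform : ∀ t, 0 ≤ t → t ≤ η → ∀ i, (∀ j < i, ¬ B j) → ∀ j ≤ i,
      (tentMap s)^[j] (crit s 3 - t) = crit s (3 + j) + side s (3 + j) * -(s ^ j * t) := by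
    intro t ht0 ht i hB j
    induction j with
    | zero => intro _; simp [hσ3]; ring
    | succ j ih =>
      intro hj
      rw [Function.iterate_succ_apply', ih (by omega),
        tent_along_bwd (hB j (by omega)) (by positivity) (by gcongr), ← add_assoc, pow_succ]
      ring
  have hex : ∃ i, B i := by
    by_contra! hno
    obtain ⟨n, hn⟩ := pow_unbounded_of_one_lt (1 / η) hs
    rw [div_lt_iff₀ hη] at hn
    have h1 := hform η hη.le le_rfl n (fun j _ => hno j) n le_rfl
    have h2 := core_subset hs.le hs2.le (iter_mem_core hs.le hs2.le (hcore η hη.le le_rfl) n)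
    have h3 := core_subset hs.le hs2.le (iter_mem_core hs.le hs2.le (half_mem_core hs.le) (3 + n))
    rw [h1] at h2
    change crit s (3 + n) ∈ _ at h3
    rcases side_eq s (3 + n) with h | h <;> rw [h] at h2 <;>
      linarith [h2.1, h2.2, h3.1, h3.2]
  obtain ⟨hB1, hB2⟩ := Nat.find_spec hex
  have hmin : ∀ j < Nat.find hex, ¬ B j := fun j hj => Nat.find_min hex hj
  generalize Nat.find hex = i at hB1 hB2 hmin
  have hpow : 0 < s ^ i := by positivity
  -- `t` is chosen so that the `i`-th image of `crit s 3 - t` is exactly `1/2`.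
  obtain ⟨t, htdef⟩ : ∃ t : ℝ, t = side s (3 + i) * (crit s (3 + i) - 1 / 2) / s ^ i := ⟨_, rfl⟩
  have hst : s ^ i * t = side s (3 + i) * (crit s (3 + i) - 1 / 2) := by
    rw [htdef]; field_simp
  have ht : t ≤ η := by rw [htdef, div_le_iff₀ hpow]; linarith
  have ht0 : 0 < t := by
    rw [htdef]
    refine div_pos (lt_of_le_of_ne hB1 fun h => hL (3 + i) (by omega) ?_) hpow
    have : side s (3 + i) * (1 / 2 - crit s (3 + i)) = 0 := by linarith
    exact ⟨this.ge, this.le.trans hε.le⟩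
  have hf := hform t ht0.le ht i hmin
  refine ⟨t, ht0, by linarith, hcore t ht0.le ht, i, ?_, hf⟩
  rw [hf i le_rfl, hst]
  rcases side_eq s (3 + i) with h | h <;> rw [h] <;> ring

/-- A closed `δ`-pseudo-orbit `X 0, …, X m` of the core based at the turning point, which repels
orbits: an orbit that follows it `ε₀`-closely gets farther away from `1/2`. -/
structure Loop (s ε₀ δ : ℝ) (m : ℕ) (X : ℕ → ℝ) : Prop where
  pos : 1 ≤ m
  start : X 0 = 1 / 2
  finish : X m = 1 / 2
  mem : ∀ j, X j ∈ core s
  err : ∀ j < m, |tentMap s (X j) - X (j + 1)| < δ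
  repel : ∀ w, (∀ j ≤ m, |(tentMap s)^[j] w - X j| < ε₀) →
    s * |w - 1 / 2| ≤ |(tentMap s)^[m] w - 1 / 2| ∧ 0 < |(tentMap s)^[m] w - 1 / 2|

theorem exists_loop {s ε₀ δ : ℝ} (hs : 1 < s) (hs2 : s < 2) (hε : 0 < ε₀)
    (hL : ∀ m, 1 ≤ m → ¬ Hit s ε₀ m) (hδ : 0 < δ) : ∃ m X, Loop s ε₀ δ m X := by
  have hs0 : 0 < s := by linarith
  obtain ⟨t, ht0, htδ, hcore, i, hi, hform⟩ := exists_wrong_side hs hs2 hε hL hδ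
  let X : ℕ → ℝ := fun j => if j < 3 then crit s j else (tentMap s)^[j - 3] (crit s 3 - t)
  -- The distance by which the loop is on the wrong side of the orbit of `1/2`.
  let v : ℕ → ℝ := fun j => if j < 3 then 0 else s ^ (j - 3) * t
  have hv0 : ∀ j, 0 ≤ v j := fun j => by simp only [v]; split_ifs <;> positivity
  have hX : ∀ j ≤ 3 + i, X j = crit s j + side s j * -(v j) := by
    intro j hj
    by_cases h : j < 3
    · simp [X, v, h]
    · simp only [X, v, h, if_false]
      rw [hform (j - 3) (by omega), show 3 + (j - 3) = j by omega]
  have hXm : X (3 + i) = 1 / 2 := by simp [X]; simpa using hi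
  refine ⟨3 + i, X, by omega, by simp [X, crit_zero], hXm, ?_, ?_, ?_⟩
  · intro j
    simp only [X]
    split_ifs
    · exact iter_mem_core hs.le hs2.le (half_mem_core hs.le) j
    · exact iter_mem_core hs.le hs2.le hcore _
  · intro j _
    rcases lt_trichotomy j 2 with h | rfl | h
    · have h1 : j < 3 := by omega
      have h2 : j + 1 < 3 := by omega
      simp only [X, h1, h2, if_true]
      rw [crit_succ, sub_self, abs_zero]; exact hδ
    · simp only [X]
      norm_num
      rw [← crit_succ, sub_sub_cancel, abs_of_pos ht0]; exact htδ
    · have h1 : ¬ j < 3 := by omega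
      have h2 : ¬ j + 1 < 3 := by omega
      simp only [X, h1, h2, if_false]
      rw [show j + 1 - 3 = (j - 3) + 1 by omega, Function.iterate_succ_apply', sub_self, abs_zero]
      exact hδ
  · intro w hw
    have hd : ∀ j ≤ 3 + i, 1 ≤ j →
        |(crit s j + side s j * (s ^ j * |w - 1 / 2|)) - X j| = s ^ j * |w - 1 / 2| + v j := by
      intro j hj _
      have hnn : 0 ≤ s ^ j * |w - 1 / 2| + v j := add_nonneg (by positivity) (hv0 j)
      rw [hX j hj, show crit s j + side s j * (s ^ j * |w - 1 / 2|) -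
        (crit s j + side s j * -(v j)) = side s j * (s ^ j * |w - 1 / 2| + v j) by ring]
      rcases side_eq s j with h | h <;> rw [h]
      · rw [one_mul, abs_of_nonneg hnn]
      · rw [neg_one_mul, abs_neg, abs_of_nonneg hnn]
    have hpos : ∀ j, 1 ≤ j → j ≤ 3 + i →
        (tentMap s)^[j] w = crit s j + side s j * (s ^ j * |w - 1 / 2|) := by
      intro j hj
      induction j, hj using Nat.le_induction with
      | base =>
        intro _
        rw [Function.iterate_one, tent_eq, crit_one, side_one]; ring
      | succ j hj ih =>
        intro hj'
        have h1 := ih (by omega)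
        have h2 := hw j (by omega)
        rw [h1, hd j (by omega) hj] at h2
        rw [Function.iterate_succ_apply', h1,
          tent_along_fwd (hL j hj) (by positivity) (by linarith [hv0 j]), pow_succ]
        ring
    have h1 := hd (3 + i) le_rfl (by omega)
    rw [← hpos (3 + i) (by omega) le_rfl, hXm] at h1
    have hvm : 0 < v (3 + i) := by
      simp only [v, show ¬ (3 + i < 3) by omega, if_false]; positivity
    rw [h1]
    have hp : s ≤ s ^ (3 + i) := le_self_pow₀ hs.le (by omega)
    have := mul_le_mul_of_nonneg_right hp (abs_nonneg (w - 1 / 2))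
    have h0 : 0 ≤ s ^ (3 + i) * |w - 1 / 2| := by positivity
    constructor <;> linarith

/-- Concatenation of finite blocks: block `k` occupies the times from `T k` to `T (k + 1)`. -/
theorem exists_concat (m : ℕ → ℕ) (X : ℕ → ℕ → ℝ) (hm : ∀ k, 1 ≤ m k) (c : ℝ)
    (h0 : ∀ k, X k 0 = c) (h1 : ∀ k, X k (m k) = c) :
    ∃ (x : ℕ → ℝ) (T : ℕ → ℕ), T 0 = 0 ∧ StrictMono T ∧ (∀ k, T (k + 1) = T k + m k) ∧
      (∀ k, ∀ j ≤ m k, x (T k + j) = X k j) ∧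
      ∀ K n, T K ≤ n → ∃ k ≥ K, ∃ j < m k, n = T k + j := by
  classical
  let T : ℕ → ℕ := fun k => ∑ i ∈ Finset.range k, m i
  have hT : ∀ k, T (k + 1) = T k + m k := fun k => Finset.sum_range_succ _ _
  have hTm : StrictMono T := strictMono_nat_of_lt_succ fun k => by
    rw [hT]; have := hm k; omega
  have hdec : ∀ K n, T K ≤ n → ∃ k ≥ K, ∃ j < m k, n = T k + j := by
    intro K n hn
    have hle : K ≤ n := (hTm.id_le K).trans hn
    let k := Nat.findGreatest (fun k => T k ≤ n) n
    have hk : T k ≤ n := Nat.findGreatest_spec (P := fun k => T k ≤ n) hle hn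
    have hk2 : n < T (k + 1) := by
      by_contra! h
      have h2 : k + 1 ≤ n := (hTm.id_le (k + 1)).trans h
      have := Nat.le_findGreatest (P := fun k => T k ≤ n) h2 h
      change k + 1 ≤ k at this
      omega
    rw [hT] at hk2
    exact ⟨k, Nat.le_findGreatest hle hn, n - T k, by omega, by omega⟩
  have huniq : ∀ k k' j j', j < m k → j' < m k' → T k + j = T k' + j' → k = k' := by
    intro k k' j j' hj hj' h
    rcases lt_trichotomy k k' with hlt | heq | hlt
    · have := hTm.monotone (Nat.succ_le_of_lt hlt)
      rw [Nat.succ_eq_add_one, hT] at this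
      omega
    · exact heq
    · have := hTm.monotone (Nat.succ_le_of_lt hlt)
      rw [Nat.succ_eq_add_one, hT] at this
      omega
  have hdec0 : ∀ n, ∃ k, ∃ j < m k, n = T k + j := fun n => by
    obtain ⟨k, -, h⟩ := hdec 0 n (by simp [T])
    exact ⟨k, h⟩
  choose κ ι hι hn using hdec0
  have hx : ∀ k, ∀ j < m k, X (κ (T k + j)) (ι (T k + j)) = X k j := by
    intro k j hj
    have h2 := hn (T k + j)
    have h3 := huniq _ _ _ _ hj (hι (T k + j)) h2
    rw [← h3] at h2 ⊢
    congr 1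
    omega
  refine ⟨fun n => X (κ n) (ι n), T, by simp [T], hTm, hT, fun k j hj => ?_, hdec⟩
  rcases Nat.lt_or_eq_of_le hj with h | rfl
  · exact hx k j h
  · have := hx (k + 1) 0 (hm _)
    rw [add_zero, hT] at this
    simp only [this, h0, h1]

/-- Without linking, the core contains asymptotic pseudo-orbits with arbitrarily small errors to
which no orbit eventually stays close. -/
theorem exists_bad {s : ℝ} (hs : 1 < s) (hs2 : s ≤ 2) (h : ¬ (s = 2 ∨ Linked s)) :
    ∃ ε₀ : ℝ, 0 < ε₀ ∧ ∀ δ : ℝ, 0 < δ → ∃ x : ℕ → ℝ, (∀ n, x n ∈ core s) ∧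
      (∀ n, dist (tentMap s (x n)) (x (n + 1)) < δ) ∧
      Tendsto (fun n => dist (tentMap s (x n)) (x (n + 1))) atTop (𝓝 0) ∧
      ∀ z, ¬ ∀ᶠ n in atTop, dist ((tentMap s)^[n] z) (x n) < ε₀ := by
  push Not at h
  obtain ⟨hne, hL⟩ := h
  have hlt : s < 2 := lt_of_le_of_ne hs2 hne
  unfold Linked at hL
  push Not at hL
  obtain ⟨ε₀, hε, hL⟩ := hL
  refine ⟨ε₀, hε, fun δ hδ => ?_⟩
  choose m X hX using fun k : ℕ =>
    exists_loop hs hlt hε hL (show 0 < δ / ((k : ℝ) + 1) by positivity)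
  obtain ⟨x, T, hTz, hTm, hT, hx, hdec⟩ := exists_concat m X (fun k => (hX k).pos) (1 / 2)
    (fun k => (hX k).start) (fun k => (hX k).finish)
  have hT0 : ∀ n, ∃ k, ∃ j < m k, n = T k + j := fun n => by
    obtain ⟨k, -, h⟩ := hdec 0 n (by omega)
    exact ⟨k, h⟩
  have herr : ∀ k, ∀ j < m k,
      dist (tentMap s (x (T k + j))) (x (T k + j + 1)) < δ / ((k : ℝ) + 1) := by
    intro k j hj
    rw [add_assoc, hx k j hj.le, hx k (j + 1) hj]
    exact (hX k).err j hj
  refine ⟨x, fun n => ?_, fun n => ?_, ?_, fun z hz => ?_⟩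
  · obtain ⟨k, j, hj, rfl⟩ := hT0 n
    rw [hx k j hj.le]
    exact (hX k).mem j
  · obtain ⟨k, j, hj, rfl⟩ := hT0 n
    refine (herr k j hj).trans_le (div_le_self hδ.le ?_)
    linarith [(Nat.cast_nonneg k : (0 : ℝ) ≤ k)]
  · rw [Metric.tendsto_atTop]
    intro ε hε'
    obtain ⟨K, hK⟩ := exists_nat_gt (δ / ε)
    refine ⟨T K, fun n hn => ?_⟩
    obtain ⟨k, hk, j, hj, rfl⟩ := hdec K n hn
    rw [Real.dist_0_eq_abs, abs_of_nonneg dist_nonneg]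
    refine (herr k j hj).trans_le ?_
    rw [div_le_iff₀ (by positivity)]
    rw [div_lt_iff₀ hε'] at hK
    have : (K : ℝ) ≤ k := by exact_mod_cast hk
    nlinarith
  · obtain ⟨N, hN⟩ := eventually_atTop.mp hz
    have hstep : ∀ k, N ≤ k →
        s * |(tentMap s)^[T k] z - 1 / 2| ≤ |(tentMap s)^[T (k + 1)] z - 1 / 2| ∧
          0 < |(tentMap s)^[T (k + 1)] z - 1 / 2| := by
      intro k hk
      have h1 := (hX k).repel ((tentMap s)^[T k] z) fun j hj => by
        rw [← Function.iterate_add_apply, add_comm j, ← hx k j hj]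
        exact hN _ (by have := hTm.id_le k; simp only [id] at this; omega)
      rwa [← Function.iterate_add_apply, add_comm (m k), ← hT] at h1
    have hgrow : ∀ i, s ^ i * |(tentMap s)^[T (N + 1)] z - 1 / 2| ≤
        |(tentMap s)^[T (N + 1 + i)] z - 1 / 2| := by
      intro i
      induction i with
      | zero => simp
      | succ i ih =>
        have h1 := (hstep (N + 1 + i) (by omega)).1
        have h2 := mul_le_mul_of_nonneg_left ih (by linarith : (0 : ℝ) ≤ s)
        rw [pow_succ, ← add_assoc]
        linarith
    have hpos := (hstep N le_rfl).2
    obtain ⟨i, hi⟩ := pow_unbounded_of_one_lt (ε₀ / |(tentMap s)^[T (N + 1)] z - 1 / 2|) hs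
    rw [div_lt_iff₀ hpos] at hi
    have h1 := hN (T (N + 1 + i)) (by have := hTm.id_le (N + 1 + i); simp only [id] at this; omega)
    have h2 := hx (N + 1 + i) 0 (Nat.zero_le _)
    rw [add_zero, (hX _).start] at h2
    rw [h2, Real.dist_eq] at h1
    linarith [hgrow i]

/-! ### Relations between the six properties -/

theorem SLimitShadowingOn.shadowing {X : Type*} [MetricSpace X] {f : X → X} {A : Set X}
    (h : SLimitShadowingOn f A) : ShadowingOn f A := by
  intro ε hε
  obtain ⟨δ, hδ, h1, -⟩ := h ε hε
  exact ⟨δ, hδ, h1⟩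

/-- The tail of an asymptotic pseudo-orbit is asymptotically shadowed by some `z`; the hypothesis
`hback` provides a point whose orbit, delayed by the length of the cut-off part, merges with that of
`z`. -/
theorem SLimitShadowingOn.limit {X : Type*} [MetricSpace X] {f : X → X} {A : Set X}
    (h : SLimitShadowingOn f A)
    (hback : ∀ z ∈ A, ∀ N, ∃ w ∈ A, ∃ k, f^[k + N] w = f^[k] z) : LimitShadowingOn f A := by
  intro x hx hlim
  obtain ⟨δ, hδ, -, h2⟩ := h 1 one_pos
  obtain ⟨N, hN⟩ := eventually_atTop.mp (hlim.eventually (gt_mem_nhds hδ))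
  have hlim' : Tendsto (fun n => dist (f (x (n + N))) (x (n + 1 + N))) atTop (𝓝 0) := by
    have := (tendsto_add_atTop_iff_nat N).mpr hlim
    refine this.congr fun n => ?_
    rw [add_right_comm]
  obtain ⟨z, hz, -, hzlim⟩ := h2 (fun n => x (n + N)) (fun n => hx _)
    (fun n => by
      have := hN (n + N) (by omega)
      rwa [add_right_comm] at this) hlim'
  obtain ⟨w, hw, k, hk⟩ := hback z hz N
  refine ⟨w, hw, (tendsto_add_atTop_iff_nat (k + N)).mp ?_⟩
  have := (tendsto_add_atTop_iff_nat k).mpr hzlim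
  refine this.congr fun n => ?_
  rw [Function.iterate_add_apply f n (k + N), hk, ← Function.iterate_add_apply, add_assoc]

/-- Every point of `(0, 1)` is eventually mapped into the core. -/
theorem exists_iter_mem_core {s z : ℝ} (hs : 1 < s) (h0 : 0 < z) (h1 : z < 1) :
    ∃ k, (tentMap s)^[k] z ∈ core s := by
  have hs0 : 0 < s := by linarith
  by_contra! hno
  have hlow : ∀ k, (tentMap s)^[k + 1] z < s * (1 - s * (1 / 2)) := by
    intro k
    by_contra! h
    refine hno (k + 1) ⟨h, ?_⟩
    rw [Function.iterate_succ_apply']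
    exact tent_le_top hs0.le _
  have hhalf := (half_mem_core hs.le).1
  have hgrow : ∀ k, (tentMap s)^[k + 1] z = s ^ k * tentMap s z := by
    intro k
    induction k with
    | zero => simp
    | succ k ih =>
      rw [Function.iterate_succ_apply', tent_left (by linarith [hlow k]), ih, pow_succ]
      ring
  have hpos : 0 < tentMap s z := by
    rcases le_total z (1 / 2) with h | h
    · rw [tent_left h]; positivity
    · rw [tent_right h]; exact mul_pos hs0 (by linarith)
  obtain ⟨n, hn⟩ := pow_unbounded_of_one_lt (1 / tentMap s z) hs
  rw [div_lt_iff₀ hpos] at hn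
  linarith [hlow n, hgrow n]

theorem unit_back {s : ℝ} (hs : 1 < s) (hs2 : s ≤ 2) :
    ∀ z ∈ Set.Icc (0 : ℝ) 1, ∀ N, ∃ w ∈ Set.Icc (0 : ℝ) 1, ∃ k,
      (tentMap s)^[k + N] w = (tentMap s)^[k] z := by
  intro z hz N
  have hfix : tentMap s 0 = 0 := by rw [tent_left (by norm_num), mul_zero]
  have hend : tentMap s z = 0 → ∃ w ∈ Set.Icc (0 : ℝ) 1, ∃ k,
      (tentMap s)^[k + N] w = (tentMap s)^[k] z := fun h =>
    ⟨0, ⟨le_rfl, zero_le_one⟩, 1, by rw [Function.iterate_fixed hfix, Function.iterate_one, h]⟩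
  rcases eq_or_lt_of_le hz.1 with h | h0
  · exact hend (by rw [← h, hfix])
  rcases eq_or_lt_of_le hz.2 with h | h1
  · exact hend (by rw [h, tent_right (by norm_num), sub_self, mul_zero])
  obtain ⟨k, hk⟩ := exists_iter_mem_core hs h0 h1
  obtain ⟨w, hw, hw'⟩ := core_surj_iter hs.le hk (k + N)
  exact ⟨w, core_subset hs.le hs2 hw, k, hw'⟩

/-- A pseudo-orbit in the core is extended backwards by two exact steps; the second image of a
point shadowing the extension is then forced into the core. -/
theorem sLimit_core {s : ℝ} (hs : 1 < s) (hs2 : s ≤ 2)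
    (h : SLimitShadowingOn (tentMap s) (Set.Icc (0 : ℝ) 1)) :
    SLimitShadowingOn (tentMap s) (core s) := by
  have hs0 : 0 < s := by linarith
  obtain ⟨a, ha⟩ : ∃ a : ℝ, a = s * (1 - s * (1 / 2)) := ⟨_, rfl⟩
  have ha0 : 0 ≤ a := by rw [ha]; exact mul_nonneg hs0.le (by linarith)
  -- A margin `μ` such that points of `[a - μ, s/2] ∩ [0, 1]` are mapped into the core.
  obtain ⟨μ, hμ, hμa⟩ : ∃ μ : ℝ, 0 < μ ∧
      ∀ y, 0 ≤ y → y ≤ s * (1 / 2) → a - μ < y → tentMap s y ∈ core s := by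
    have key : ∀ y, y ≤ s * (1 / 2) → a ≤ s * y → tentMap s y ∈ core s := by
      intro y h2 h3
      refine ⟨?_, tent_le_top hs0.le y⟩
      rcases le_total y (1 / 2) with h | h
      · rw [tent_left h, ← ha]; exact h3
      · rw [tent_right h]; exact mul_le_mul_of_nonneg_left (by linarith) hs0.le
    rcases eq_or_lt_of_le ha0 with h | h
    · exact ⟨1, one_pos, fun y h1 h2 _ => key y h2 (by rw [← h]; positivity)⟩
    · refine ⟨(s - 1) * a / s, div_pos (mul_pos (by linarith) h) hs0,
        fun y _ h2 h3 => key y h2 ?_⟩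
      have := mul_le_mul_of_nonneg_left h3.le hs0.le
      have h4 : s * (a - (s - 1) * a / s) = a := by field_simp; ring
      linarith
  intro ε hε
  obtain ⟨δ, hδ, h1, h2⟩ := h (min ε μ) (lt_min hε hμ)
  have hsub := core_subset hs.le hs2
  have hext : ∀ x : ℕ → ℝ, (∀ n, x n ∈ core s) →
      (∀ n, dist (tentMap s (x n)) (x (n + 1)) < δ) →
      ∃ x' : ℕ → ℝ, (∀ n, x' n ∈ core s) ∧ (∀ n, x' (n + 2) = x n) ∧
        (∀ n, dist (tentMap s (x' n)) (x' (n + 1)) < δ) := by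
    intro x hx he
    obtain ⟨p, hp, hp'⟩ := core_surj hs.le (hx 0)
    obtain ⟨p2, hp2, hp2'⟩ := core_surj hs.le hp
    refine ⟨fun n => match n with
      | 0 => p2
      | 1 => p
      | n + 2 => x n, ?_, fun n => rfl, ?_⟩
    · rintro (_ | _ | n)
      · exact hp2
      · exact hp
      · exact hx n
    · rintro (_ | _ | n)
      · simpa [hp2'] using hδ
      · simpa [hp'] using hδ
      · exact he n
  have hmem : ∀ x' : ℕ → ℝ, (∀ n, x' n ∈ core s) → ∀ z ∈ Set.Icc (0 : ℝ) 1,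
      (∀ n, dist ((tentMap s)^[n] z) (x' n) < min ε μ) → (tentMap s)^[2] z ∈ core s := by
    intro x' hx' z hz hd
    have h3 := (hd 1).trans_le (min_le_right _ _)
    rw [Function.iterate_one, Real.dist_eq] at h3
    have h4 := (hx' 1).1
    rw [← ha] at h4
    exact hμa _ (tent_mem_unit hs0.le hs2 hz).1 (tent_le_top hs0.le z)
      (by linarith [(abs_lt.mp h3).1])
  refine ⟨δ, hδ, fun x hx he => ?_, fun x hx he hlim => ?_⟩
  · obtain ⟨x', hx', hxx, he'⟩ := hext x hx he
    obtain ⟨z, hz, hd⟩ := h1 x' (fun n => hsub (hx' n)) he'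
    refine ⟨_, hmem x' hx' z hz hd, fun n => ?_⟩
    rw [← Function.iterate_add_apply, ← hxx]
    exact (hd (n + 2)).trans_le (min_le_left _ _)
  · obtain ⟨x', hx', hxx, he'⟩ := hext x hx he
    obtain ⟨z, hz, hd, hzlim⟩ := h2 x' (fun n => hsub (hx' n)) he' (by
      refine (tendsto_add_atTop_iff_nat 2).mp (hlim.congr fun n => ?_)
      rw [hxx, show n + 2 + 1 = (n + 1) + 2 by omega, hxx])
    refine ⟨_, hmem x' hx' z hz hd, fun n => ?_, ?_⟩
    · rw [← Function.iterate_add_apply, ← hxx]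
      exact (hd (n + 2)).trans_le (min_le_left _ _)
    · refine ((tendsto_add_atTop_iff_nat 2).mpr hzlim).congr fun n => ?_
      rw [← Function.iterate_add_apply, hxx]

theorem linked_of_shadowing {s : ℝ} (hs : 1 < s) (hs2 : s ≤ 2) {A : Set ℝ} (hA : core s ⊆ A)
    (h : ShadowingOn (tentMap s) A) : s = 2 ∨ Linked s := by
  by_contra hc
  obtain ⟨ε₀, hε, hbad⟩ := exists_bad hs hs2 hc
  obtain ⟨δ, hδ, h1⟩ := h ε₀ hε
  obtain ⟨x, hx, he, -, hno⟩ := hbad δ hδ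
  obtain ⟨z, -, hz⟩ := h1 x (fun n => hA (hx n)) he
  exact hno z (Eventually.of_forall hz)

theorem linked_of_limit {s : ℝ} (hs : 1 < s) (hs2 : s ≤ 2) {A : Set ℝ} (hA : core s ⊆ A)
    (h : LimitShadowingOn (tentMap s) A) : s = 2 ∨ Linked s := by
  by_contra hc
  obtain ⟨ε₀, hε, hbad⟩ := exists_bad hs hs2 hc
  obtain ⟨x, hx, -, hlim, hno⟩ := hbad 1 one_pos
  obtain ⟨z, -, hz⟩ := h x (fun n => hA (hx n)) hlim
  exact hno z (hz.eventually (gt_mem_nhds hε))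

/-- For a tent map with slope `s ∈ (√2, 2]` with core
`C = [f_s²(1/2), f_s(1/2)]`, the six shadowing conditions are equivalent. -/
theorem tentMap_shadowing_tfae (s : ℝ) (hs : s ∈ Set.Ioc (Real.sqrt 2) 2) :
    List.TFAE
      [SLimitShadowingOn (tentMap s) (Set.Icc (0 : ℝ) 1),
       ShadowingOn (tentMap s) (Set.Icc (0 : ℝ) 1),
       LimitShadowingOn (tentMap s) (Set.Icc (0 : ℝ) 1),
       SLimitShadowingOn (tentMap s)
         (Set.Icc (tentMap s (tentMap s (1 / 2))) (tentMap s (1 / 2))),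
       ShadowingOn (tentMap s)
         (Set.Icc (tentMap s (tentMap s (1 / 2))) (tentMap s (1 / 2))),
       LimitShadowingOn (tentMap s)
         (Set.Icc (tentMap s (tentMap s (1 / 2))) (tentMap s (1 / 2)))] := by
  have hs1 : 1 < s := lt_trans (by rw [Real.lt_sqrt] <;> norm_num) hs.1
  have hs2 : s ≤ 2 := hs.2
  rw [core_eq hs1.le]
  have hsub := core_subset hs1.le hs2
  tfae_have 1 → 2 := fun h => h.shadowing
  tfae_have 1 → 3 := fun h => h.limit (unit_back hs1 hs2)
  tfae_have 1 → 4 := sLimit_core hs1 hs2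
  tfae_have 4 → 5 := fun h => h.shadowing
  tfae_have 4 → 6 := fun h => h.limit fun z hz N => by
    obtain ⟨w, hw, h⟩ := core_surj_iter hs1.le hz N
    exact ⟨w, hw, 0, by simpa using h⟩
  tfae_have 2 → 1 := fun h => sLimit_of_linked hs (linked_of_shadowing hs1 hs2 hsub h)
  tfae_have 3 → 1 := fun h => sLimit_of_linked hs (linked_of_limit hs1 hs2 hsub h)
  tfae_have 5 → 1 := fun h => sLimit_of_linked hs (linked_of_shadowing hs1 hs2 subset_rfl h)
  tfae_have 6 → 1 := fun h => sLimit_of_linked hs (linked_of_limit hs1 hs2 subset_rfl h)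
  tfae_finish
end

section
/- Let f: X → X be a continuous map on a compact metric space. Assume there exist constants λ ≥ 1 and ε̂ > 0 such that for every ε ∈ (0, ε̂) there exist a positive integer N = N(ε) and η = η(ε) > 0 such that for each x ∈ X there is a positive integer n = n(x,ε) ≤ N satisfying f(B(f^n(x), ε+η)) ⊆ { f^{n+1}(y) : d(x,y) ≤ ε and d(f^i(x), f^i(y)) ≤ λε for 1 ≤ i ≤ n }, where B(p,r) denotes the open ball of radius r around p. Then f has s-limit shadowing. -/
/-!
Fix a scale `ε`, with `N` and `η` from the hypothesis, and a pseudo-orbit `x` whose errors are so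
small that `f^[i] (x j)` stays within `min η ε` of `x (j + i)` for `i ≤ N`. Then from time `j` there
is a jump length `n ≤ N` such that any point `y'` within `ε` of `x (j + n)` can be pulled back to a
point `y` within `ε` of `x j` that follows `x` up to `(lam + 1) * ε` during the jump and has
`f^[n + 1] y = f y'`; after the jump, the orbits of `y` and `y'` coincide. This is
`PullsBack f lam x j ε` (`exists_delta_pullsBack`).

Concatenating jumps, pulling back from far in the future, and passing to a limit by compactness gives
a shadowing point (`exists_shadow`). The radius may decrease from jump to jump, because a point
within the smaller radius is also within the larger one. For an asymptotic pseudo-orbit, the radii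
are therefore chosen to tend to zero, slowly enough that the pseudo-orbit is always accurate enough
for the current radius; this yields asymptotic shadowing.
-/

/-- `f` has the (classical) shadowing property. -/
def Shadowing {X : Type*} [MetricSpace X] (f : X → X) : Prop :=
  ∀ ε : ℝ, 0 < ε → ∃ δ : ℝ, 0 < δ ∧
    ∀ x : ℕ → X, (∀ n, dist (f (x n)) (x (n + 1)) < δ) →
      ∃ z : X, ∀ n, dist (f^[n] z) (x n) < ε

/-- `f` has the limit (asymptotic) shadowing property. -/
def LimitShadowing {X : Type*} [MetricSpace X] (f : X → X) : Prop :=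
  ∀ x : ℕ → X,
    Filter.Tendsto (fun n => dist (f (x n)) (x (n + 1))) Filter.atTop (nhds 0) →
    ∃ z : X, Filter.Tendsto (fun n => dist (f^[n] z) (x n)) Filter.atTop (nhds 0)

/-- `f` has the s-limit shadowing property. -/
def SLimitShadowing {X : Type*} [MetricSpace X] (f : X → X) : Prop :=
  ∀ ε : ℝ, 0 < ε → ∃ δ : ℝ, 0 < δ ∧
    (∀ x : ℕ → X, (∀ n, dist (f (x n)) (x (n + 1)) < δ) →
      ∃ z : X, ∀ n, dist (f^[n] z) (x n) < ε) ∧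
    (∀ x : ℕ → X, (∀ n, dist (f (x n)) (x (n + 1)) < δ) →
      Filter.Tendsto (fun n => dist (f (x n)) (x (n + 1))) Filter.atTop (nhds 0) →
      ∃ z : X, (∀ n, dist (f^[n] z) (x n) < ε) ∧
        Filter.Tendsto (fun n => dist (f^[n] z) (x n)) Filter.atTop (nhds 0))

/-- At time `j` and scale `e`, there is a jump length `n > 0` over which the sequence `x` is
`e`-close to the true orbit of `x j`, and every point `e`-close to `x (j + n)` has the same image
under `f` as `f^[n] y` for some `y` which is `e`-close to `x j` and whose orbit stays
`lam * e`-close to that of `x j` up to time `n`. -/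
def PullsBack {X : Type*} [MetricSpace X] (f : X → X) (lam : ℝ) (x : ℕ → X) (j : ℕ) (e : ℝ) :
    Prop :=
  ∃ n : ℕ, 0 < n ∧ (∀ i ≤ n, dist (f^[i] (x j)) (x (j + i)) ≤ e) ∧
    ∀ y' : X, dist (x (j + n)) y' ≤ e → ∃ y : X, dist (x j) y ≤ e ∧
      (∀ i : ℕ, 1 ≤ i → i ≤ n → dist (f^[i] (x j)) (f^[i] y) ≤ lam * e) ∧ f y' = f^[n + 1] y

lemma exists_delta_iterate {X : Type*} [MetricSpace X] [CompactSpace X] (f : X → X)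
    (hf : Continuous f) (N : ℕ) : ∀ θ : ℝ, 0 < θ → ∃ δ : ℝ, 0 < δ ∧ ∀ (x : ℕ → X) (j : ℕ),
      (∀ i, j ≤ i → dist (f (x i)) (x (i + 1)) < δ) →
        ∀ i ≤ N, dist (f^[i] (x j)) (x (j + i)) < θ := by
  induction N with
  | zero =>
    intro θ hθ
    refine ⟨1, one_pos, fun x j _ i hi => ?_⟩
    obtain rfl : i = 0 := by omega
    simpa using hθ
  | succ N ih =>
    intro θ hθ
    obtain ⟨ω, hω, hfω⟩ := Metric.uniformContinuous_iff.1
      (CompactSpace.uniformContinuous_of_continuous hf) (θ / 2) (half_pos hθ)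
    obtain ⟨δ, hδ, hd⟩ := ih (min θ ω) (lt_min hθ hω)
    refine ⟨min δ (θ / 2), lt_min hδ (half_pos hθ), fun x j hx i hi => ?_⟩
    have hd' := hd x j fun i hi => (hx i hi).trans_le (min_le_left _ _)
    rcases Nat.lt_or_ge N i with h | h
    · obtain rfl : i = N + 1 := by omega
      have h1 := hfω ((hd' N le_rfl).trans_le (min_le_right _ _))
      have h2 := (hx (j + N) (by omega)).trans_le (min_le_right _ _)
      rw [Function.iterate_succ_apply']
      have h3 := dist_triangle (f (f^[N] (x j))) (f (x (j + N))) (x (j + N + 1))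
      rw [← add_assoc]
      linarith
    · exact (hd' i h).trans_le (min_le_left _ _)

lemma exists_delta_pullsBack {X : Type*} [MetricSpace X] [CompactSpace X] (f : X → X)
    (hf : Continuous f) (lam ε : ℝ) (hε : 0 < ε)
    (H : ∃ N : ℕ, 0 < N ∧ ∃ η : ℝ, 0 < η ∧
        ∀ x : X, ∃ n : ℕ, 0 < n ∧ n ≤ N ∧
          f '' Metric.ball (f^[n] x) (ε + η) ⊆
            {w : X | ∃ y : X, dist x y ≤ ε ∧
              (∀ i : ℕ, 1 ≤ i → i ≤ n → dist (f^[i] x) (f^[i] y) ≤ lam * ε) ∧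
              w = f^[n + 1] y}) :
    ∃ δ : ℝ, 0 < δ ∧ ∀ (x : ℕ → X) (j : ℕ),
      (∀ i, j ≤ i → dist (f (x i)) (x (i + 1)) < δ) → PullsBack f lam x j ε := by
  obtain ⟨N, -, η, hη, H⟩ := H
  obtain ⟨δ, hδ, hd⟩ := exists_delta_iterate f hf N (min η ε) (lt_min hη hε)
  refine ⟨δ, hδ, fun x j hx => ?_⟩
  obtain ⟨n, hn, hnN, hsub⟩ := H (x j)
  have hd' := hd x j hx
  refine ⟨n, hn, fun i hi => ((hd' i (hi.trans hnN)).trans_le (min_le_right _ _)).le,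
    fun y' hy' => hsub ⟨y', ?_, rfl⟩⟩
  have h1 := (hd' n hnN).trans_le (min_le_left _ _)
  have h2 := dist_triangle (f^[n] (x j)) (x (j + n)) y'
  rw [Metric.mem_ball, dist_comm]
  linarith

/-- If the pull-back property holds at every time `j` with nonincreasing radii `e j`, then some
orbit shadows `x` within a multiple of `e 0`, and within the same multiple of `e (m l)` after each
jump time `m l`. -/
lemma exists_shadow {X : Type*} [MetricSpace X] [CompactSpace X] (f : X → X)
    (hf : Continuous f) (lam : ℝ) (hlam : 1 ≤ lam) (x : ℕ → X) (e : ℕ → ℝ) (he : Antitone e)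
    (he0 : ∀ j, 0 ≤ e j) (hP : ∀ j, PullsBack f lam x j (e j)) :
    ∃ (z : X) (m : ℕ → ℕ), StrictMono m ∧ (∀ i, dist (f^[i] z) (x i) ≤ (lam + 1) * e 0) ∧
      ∀ l i, m l < i → dist (f^[i] z) (x i) ≤ (lam + 1) * e (m l) := by
  choose n hn hclose hpull using hP
  -- The jump times: `m 0 = 0`, and each jump has the length given by the pull-back property.
  let m : ℕ → ℕ := fun k => Nat.rec 0 (fun _ t => t + n t) k
  have m0 : m 0 = 0 := rfl
  have msucc : ∀ k, m (k + 1) = m k + n (m k) := fun _ => rfl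
  have hm : StrictMono m := strictMono_nat_of_lt_succ fun k => by
    have := hn (m k)
    rw [msucc]; omega
  have hC : 0 ≤ lam + 1 := by linarith
  -- Points shadowing the segment of `x` from time `m k` to time `m (k + K)`.
  have key : ∀ K k, ∃ y, dist (x (m k)) y ≤ e (m k) ∧ ∀ l, k ≤ l → ∀ i, m l < i →
      i ≤ m (k + K) → dist (f^[i - m k] y) (x i) ≤ (lam + 1) * e (m l) := by
    intro K
    induction K with
    | zero =>
      intro k
      refine ⟨x (m k), by simpa using he0 _, fun l hl i h1 h2 => ?_⟩
      have := hm.monotone hl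
      simp only [add_zero] at h2
      omega
    | succ K ih =>
      intro k
      obtain ⟨y', hy', hs⟩ := ih (k + 1)
      have hy'' := hy'.trans (he (hm (Nat.lt_succ_self k)).le)
      rw [msucc] at hy''
      obtain ⟨y, hy, hyi, hfy⟩ := hpull (m k) y' hy''
      refine ⟨y, hy, fun l hl i h1 h2 => ?_⟩
      rcases Nat.lt_or_ge (m (k + 1)) i with h | h
      · -- After the jump, the orbits of `y` and `y'` coincide.
        have heq : f^[i - m k] y = f^[i - m (k + 1)] y' := by
          obtain ⟨t, rfl⟩ : ∃ t, i = m (k + 1) + (t + 1) := ⟨i - m (k + 1) - 1, by omega⟩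
          have e1 : m (k + 1) + (t + 1) - m k = t + (n (m k) + 1) := by
            rw [msucc]; omega
          have e2 : m (k + 1) + (t + 1) - m (k + 1) = t + 1 := by omega
          rw [e1, e2, Function.iterate_add_apply, ← hfy, Function.iterate_succ_apply]
        rw [heq]
        have h2' : i ≤ m (k + 1 + K) := by
          rwa [show k + 1 + K = k + (K + 1) by omega]
        rcases Nat.lt_or_ge k l with hkl | hkl
        · exact hs l hkl i h1 h2'
        · obtain rfl : l = k := by omega
          exact (hs (l + 1) le_rfl i h h2').trans
            (mul_le_mul_of_nonneg_left (he (hm (Nat.lt_succ_self l)).le) hC)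
      · have hlk : l < k + 1 := hm.lt_iff_lt.1 (h1.trans_le h)
        obtain rfl : l = k := by omega
        rw [msucc] at h
        have a1 := hyi (i - m l) (by omega) (by omega)
        have a2 := hclose (m l) (i - m l) (by omega)
        rw [show m l + (i - m l) = i by omega] at a2
        have a3 := dist_triangle_left (f^[i - m l] y) (x i) (f^[i - m l] (x (m l)))
        linarith
  choose y hy hys using fun K => key K 0
  obtain ⟨z, φ, hφ, hz⟩ := CompactSpace.tendsto_subseq y
  have hlim : ∀ i, Filter.Tendsto (fun K => dist (f^[i] (y (φ K))) (x i)) Filter.atTop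
      (nhds (dist (f^[i] z) (x i))) := fun i =>
    (((hf.iterate i).tendsto z).comp hz).dist tendsto_const_nhds
  have hmain : ∀ l i, m l < i → dist (f^[i] z) (x i) ≤ (lam + 1) * e (m l) := by
    intro l i hi
    refine le_of_tendsto (hlim i) ?_
    filter_upwards [Filter.eventually_ge_atTop i] with K hK
    have := hys (φ K) l (Nat.zero_le l) i hi (by
      rw [zero_add]
      exact hK.trans ((hφ.id_le K).trans (hm.id_le (φ K))))
    simpa [m0] using this
  refine ⟨z, m, hm, fun i => ?_, hmain⟩
  rcases Nat.eq_zero_or_pos i with rfl | hi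
  · refine le_of_tendsto (hlim 0) (Filter.Eventually.of_forall fun K => ?_)
    have h := hy (φ K)
    rw [m0, dist_comm] at h
    have := mul_nonneg (by linarith : 0 ≤ lam) (he0 0)
    simp only [Function.iterate_zero, id_eq]
    linarith
  · exact hmain 0 i hi

/-- A sufficient condition for s-limit shadowing on a compact metric
space. -/
theorem slimit_shadowing_of_expansion_condition
    {X : Type*} [MetricSpace X] [CompactSpace X] (f : X → X) (hf : Continuous f)
    (lam epshat : ℝ) (hlam : 1 ≤ lam) (hepshat : 0 < epshat)
    (H : ∀ ε : ℝ, 0 < ε → ε < epshat →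
      ∃ N : ℕ, 0 < N ∧ ∃ η : ℝ, 0 < η ∧
        ∀ x : X, ∃ n : ℕ, 0 < n ∧ n ≤ N ∧
          f '' Metric.ball (f^[n] x) (ε + η) ⊆
            {w : X | ∃ y : X, dist x y ≤ ε ∧
              (∀ i : ℕ, 1 ≤ i → i ≤ n → dist (f^[i] x) (f^[i] y) ≤ lam * ε) ∧
              w = f^[n + 1] y}) :
    SLimitShadowing f := by
  classical
  intro ε hε
  have hC : 0 < lam + 1 := by linarith
  -- Scales `r p` decreasing to zero, small enough for `H` and with `(lam + 1) * r 0 < ε`.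
  obtain ⟨c, hc, hc1, hc2⟩ : ∃ c : ℝ, 0 < c ∧ c < epshat ∧ (lam + 1) * c < ε := by
    obtain ⟨c, hc, hc'⟩ := exists_between (lt_min hepshat (div_pos hε hC))
    refine ⟨c, hc, hc'.trans_le (min_le_left _ _), ?_⟩
    have := hc'.trans_le (min_le_right _ _)
    rwa [lt_div_iff₀ hC, mul_comm] at this
  let r : ℕ → ℝ := fun p => c * (1 / ((p : ℝ) + 1))
  have hr0 : r 0 = c := by simp [r]
  have hrpos : ∀ p, 0 < r p := fun p => mul_pos hc Nat.one_div_pos_of_nat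
  have hranti : Antitone r := fun p q hpq =>
    mul_le_mul_of_nonneg_left (Nat.one_div_le_one_div hpq) hc.le
  have hrlim : Filter.Tendsto r Filter.atTop (nhds 0) := by
    simpa [r] using (tendsto_one_div_add_atTop_nhds_zero_nat (𝕜 := ℝ)).const_mul c
  have hrlt : ∀ p, r p < epshat := fun p =>
    ((hranti (Nat.zero_le p)).trans_eq hr0).trans_lt hc1
  choose δ hδ hpull using fun p =>
    exists_delta_pullsBack f hf lam (r p) (hrpos p) (H (r p) (hrpos p) (hrlt p))
  have main : ∀ x : ℕ → X, (∀ n, dist (f (x n)) (x (n + 1)) < δ 0) →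
      ∃ z : X, (∀ n, dist (f^[n] z) (x n) < ε) ∧
        (Filter.Tendsto (fun n => dist (f (x n)) (x (n + 1))) Filter.atTop (nhds 0) →
          Filter.Tendsto (fun n => dist (f^[n] z) (x n)) Filter.atTop (nhds 0)) := by
    intro x hx
    -- `P j` is the finest scale index, capped by `j`, whose accuracy `x` meets from time `j` on.
    let Q : ℕ → ℕ → Prop := fun j p => ∀ i, j ≤ i → dist (f (x i)) (x (i + 1)) < δ p
    let P : ℕ → ℕ := fun j => Nat.findGreatest (Q j) j
    have hQP : ∀ j, Q j (P j) := fun j =>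
      Nat.findGreatest_spec (P := Q j) (Nat.zero_le j) (fun i _ => hx i)
    have hPmono : Monotone P := fun j k hjk =>
      Nat.findGreatest_mono (fun p hp i hi => hp i (hjk.trans hi)) hjk
    obtain ⟨z, m, hm, hz0, hz⟩ := exists_shadow f hf lam hlam x (fun j => r (P j))
      (fun j k hjk => hranti (hPmono hjk)) (fun j => (hrpos _).le)
      (fun j => hpull (P j) x j (hQP j))
    refine ⟨z, fun i => (hz0 i).trans_lt ?_, fun hx0 => ?_⟩
    · have hP0 : r (P 0) ≤ c := (hranti (Nat.zero_le _)).trans_eq hr0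
      exact (mul_le_mul_of_nonneg_left hP0 hC.le).trans_lt hc2
    · have hPlim : Filter.Tendsto P Filter.atTop Filter.atTop := by
        refine Filter.tendsto_atTop.2 fun p => ?_
        obtain ⟨J, hJ⟩ := Filter.eventually_atTop.1 (hx0.eventually (gt_mem_nhds (hδ p)))
        filter_upwards [Filter.eventually_ge_atTop J, Filter.eventually_ge_atTop p] with j h1 h2
        exact Nat.le_findGreatest h2 fun i hi => hJ i (h1.trans hi)
      have hlim : Filter.Tendsto (fun l => (lam + 1) * r (P (m l))) Filter.atTop (nhds 0) := by
        simpa using (hrlim.comp (hPlim.comp hm.tendsto_atTop)).const_mul (lam + 1)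
      refine tendsto_order.2 ⟨fun a ha => Filter.Eventually.of_forall fun i =>
        ha.trans_le dist_nonneg, fun a ha => ?_⟩
      obtain ⟨l, hl⟩ := (hlim.eventually (gt_mem_nhds ha)).exists
      filter_upwards [Filter.eventually_gt_atTop (m l)] with i hi
      exact (hz l i hi).trans_lt hl
  refine ⟨δ 0, hδ 0, fun x hx => ?_, fun x hx hx0 => ?_⟩
  · obtain ⟨z, hz, -⟩ := main x hx
    exact ⟨z, hz⟩
  · obtain ⟨z, hz, hz'⟩ := main x hx
    exact ⟨z, hz, hz' hx0⟩
end

section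
/- There exists a dynamical system (X, f), with X a compact metric space and f: X → X continuous, which has the shadowing property but for which the collection of ω-limit sets of points of X is a proper subcollection of the collection of internally chain transitive subsets of X, i.e. ω_f ≠ ICT(f). In particular, such an f does not have limit shadowing. -/
/-- The ω-limit set of `x` under `f`: the set of limit points of the forward orbit. -/
def OmegaLimitSet {X : Type*} [TopologicalSpace X] (f : X → X) (x : X) : Set X :=
  {y | ∃ φ : ℕ → ℕ, StrictMono φ ∧
    Filter.Tendsto (fun k => f^[φ k] x) Filter.atTop (nhds y)}

/-- `A` is a (nonempty) closed `f`-invariant internally chain transitive set: any two of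
its points are joined by a finite `δ`-pseudo-orbit inside `A`, for every `δ > 0`. -/
def IsICT {X : Type*} [MetricSpace X] (f : X → X) (A : Set X) : Prop :=
  A.Nonempty ∧ IsClosed A ∧ Set.MapsTo f A A ∧
    ∀ δ : ℝ, 0 < δ → ∀ a ∈ A, ∀ b ∈ A,
      ∃ (l : ℕ) (c : ℕ → X), c 0 = a ∧ c l = b ∧ (∀ i ≤ l, c i ∈ A) ∧
        ∀ i < l, dist (f (c i)) (c (i + 1)) < δ

open Filter Topology

section General

variable {X : Type*} [MetricSpace X] {f : X → X}

lemma mem_omegaLimitSet_iff (x y : X) :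
    y ∈ OmegaLimitSet f x ↔ MapClusterPt y atTop (fun n => f^[n] x) := by
  constructor
  · rintro ⟨φ, hφ, h⟩
    exact MapClusterPt.of_comp hφ.tendsto_atTop h.mapClusterPt
  · intro h
    exact h.tendsto_subseq

variable [CompactSpace X]

lemma eventually_close_omegaLimitSet (x : X) {η : ℝ} (hη : 0 < η) :
    ∃ N, ∀ n ≥ N, ∃ w ∈ OmegaLimitSet f x, dist (f^[n] x) w < η := by
  by_contra! h
  obtain ⟨φ, hφ, hfar⟩ := extraction_of_frequently_atTop (frequently_atTop.2 h)
  obtain ⟨y, ψ, hψ, hy⟩ := CompactSpace.tendsto_subseq (fun k => f^[φ k] x)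
  obtain ⟨k, hk⟩ := ((Metric.tendsto_nhds.1 hy) η hη).exists
  exact absurd hk (not_lt.2 (hfar (ψ k) y ⟨φ ∘ ψ, hφ.comp hψ, hy⟩))

/-- ω-limit sets of continuous maps of compact metric spaces are internally chain transitive: a
long piece of the orbit, moved slightly into the ω-limit set, is a chain. -/
theorem isICT_omegaLimitSet (hf : Continuous f) (x : X) : IsICT f (OmegaLimitSet f x) := by
  refine ⟨?_, ?_, ?_, ?_⟩
  · obtain ⟨y, φ, hφ, hy⟩ := CompactSpace.tendsto_subseq (fun n => f^[n] x)
    exact ⟨y, φ, hφ, hy⟩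
  · have : OmegaLimitSet f x = {y | ClusterPt y (map (fun n => f^[n] x) atTop)} :=
      Set.ext fun y => mem_omegaLimitSet_iff x y
    rw [this]
    exact isClosed_setOfPred_clusterPt
  · rintro y ⟨φ, hφ, hy⟩
    refine ⟨fun k => φ k + 1, fun i j hij => Nat.succ_lt_succ (hφ hij), ?_⟩
    simp only [Function.iterate_succ_apply']
    exact (hf.tendsto y).comp hy
  · intro δ hδ a ha b hb
    obtain ⟨η₀, hη₀, hu⟩ := Metric.uniformContinuous_iff.1
      (CompactSpace.uniformContinuous_of_continuous hf) (δ / 2) (half_pos hδ)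
    obtain ⟨η, hη, h1, h2⟩ : ∃ η > 0, η ≤ η₀ ∧ η ≤ δ / 2 :=
      ⟨min η₀ (δ / 2), lt_min hη₀ (half_pos hδ), min_le_left _ _, min_le_right _ _⟩
    obtain ⟨N, hN⟩ := eventually_close_omegaLimitSet (f := f) x hη
    have : Nonempty X := ⟨a⟩
    choose! w hw hwd using hN
    have hit : ∀ y ∈ OmegaLimitSet f x, ∀ M, ∃ n ≥ M, dist (f^[n] x) y < η := by
      rintro y ⟨φ, hφ, hy⟩ M
      obtain ⟨k, hk, hkM⟩ :=
        (((Metric.tendsto_nhds.1 hy) η hη).and (eventually_ge_atTop M)).exists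
      exact ⟨φ k, hkM.trans (hφ.id_le k), hk⟩
    obtain ⟨n₁, hn₁, hd₁⟩ := hit a ha N
    obtain ⟨n₂, hn₂, hd₂⟩ := hit b hb (n₁ + 1)
    -- `W n` is a point of the ω-limit set close to `f^[n] x`, with prescribed ends `a` and `b`.
    let W : ℕ → X := fun n => if n = n₁ then a else if n = n₂ then b else w n
    have hW : ∀ n ≥ N, W n ∈ OmegaLimitSet f x ∧ dist (f^[n] x) (W n) < η := by
      intro n hn
      dsimp only [W]
      split_ifs with h h'
      · subst h; exact ⟨ha, hd₁⟩
      · subst h'; exact ⟨hb, hd₂⟩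
      · exact ⟨hw n hn, hwd n hn⟩
    refine ⟨n₂ - n₁, fun i => W (n₁ + i), by simp [W], ?_, fun i _ => (hW _ (by omega)).1, ?_⟩
    · have h3 : n₁ + (n₂ - n₁) = n₂ := by omega
      have h4 : n₂ ≠ n₁ := by omega
      simp [W, h3, h4]
    · intro i _
      have e1 := hu (lt_of_lt_of_le (hW (n₁ + i) (by omega)).2 h1)
      have e2 := (hW (n₁ + (i + 1)) (by omega)).2
      rw [← add_assoc, Function.iterate_succ_apply'] at e2
      rw [dist_comm] at e1
      calc _ ≤ _ := dist_triangle _ (f (f^[n₁ + i] x)) _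
        _ < δ / 2 + δ / 2 := add_lt_add e1 (lt_of_lt_of_le e2 h2)
        _ = δ := add_halves δ

end General

/-- Pairs `(x, T)` of a binary sequence `x i = (p i).1` and a set of forbidden gaps
`T = {d | (p d).2 = true}`, such that no two ones of `x` are at distance `d + 1` with `d ∈ T`. -/
def GapSpace : Type :=
  {p : ℕ → Bool × Bool // ∀ i d, (p i).1 = true → (p (i + d + 1)).1 = true → (p d).2 = false}

namespace GapSpace

/-- The metric of first differences on sequences, restricted to `GapSpace`. -/
noncomputable instance : MetricSpace GapSpace :=
  @Subtype.metricSpace _ _ (PiNat.metricSpace (E := fun _ => Bool × Bool))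

instance : CompactSpace GapSpace := by
  have hc : IsClosed {p : ℕ → Bool × Bool |
      ∀ i d, (p i).1 = true → (p (i + d + 1)).1 = true → (p d).2 = false} := by
    simp only [Set.ofPred_forall]
    refine isClosed_iInter fun i => isClosed_iInter fun d => ?_
    have h : Continuous fun p : ℕ → Bool × Bool => (p i, p (i + d + 1), p d) := by fun_prop
    exact (isClosed_discrete {q : (Bool × Bool) × (Bool × Bool) × (Bool × Bool) |
      q.1.1 = true → q.2.1.1 = true → q.2.2.2 = false}).preimage h
  exact isCompact_iff_compactSpace.1 hc.isCompact

/-- The map `(x, T) ↦ (σ x, T)`, where `σ` is the shift. -/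
def step (p : GapSpace) : GapSpace :=
  ⟨fun i => ((p.1 (i + 1)).1, (p.1 i).2), fun i d h1 h2 =>
    p.2 (i + 1) d h1 (by rwa [show i + 1 + d + 1 = i + d + 1 + 1 by ring])⟩

lemma step_iterate (p : GapSpace) (n i : ℕ) :
    (step^[n] p).1 i = ((p.1 (n + i)).1, (p.1 i).2) := by
  induction n generalizing i with
  | zero => simp
  | succ n ih =>
    rw [Function.iterate_succ_apply']
    simp only [step, ih]
    rw [show n + (i + 1) = n + 1 + i by ring]

lemma dist_lt_of_agree {ε : ℝ} (hε : 0 < ε) :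
    ∃ n, ∀ p q : GapSpace, (∀ i < n, p.1 i = q.1 i) → dist p q < ε := by
  obtain ⟨n, hn⟩ := exists_pow_lt_of_lt_one hε (one_half_lt_one (α := ℝ))
  exact ⟨n, fun p q h => lt_of_le_of_lt
    (PiNat.mem_cylinder_iff_dist_le.1 (PiNat.mem_cylinder_iff.2 h)) hn⟩

lemma agree_of_dist_lt {n : ℕ} {p q : GapSpace} (h : dist p q < (1 / 2) ^ n) {i : ℕ}
    (hi : i ≤ n) : p.1 i = q.1 i :=
  PiNat.apply_eq_of_dist_lt h hi

lemma tendsto_dist_iff (u v : ℕ → GapSpace) :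
    Tendsto (fun n => dist (u n) (v n)) atTop (𝓝 0) ↔
      ∀ i, ∀ᶠ n in atTop, (u n).1 i = (v n).1 i := by
  constructor
  · intro h i
    filter_upwards [h.eventually_lt_const (show (0 : ℝ) < (1 / 2) ^ i by positivity)] with n hn
    exact agree_of_dist_lt hn le_rfl
  · intro h
    rw [Metric.tendsto_nhds]
    intro ε hε
    obtain ⟨m, hm⟩ := dist_lt_of_agree hε
    have : ∀ᶠ n in atTop, ∀ i ∈ Finset.range m, (u n).1 i = (v n).1 i :=
      (Finset.eventually_all _).2 fun i _ => h i
    filter_upwards [this] with n hn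
    rw [Real.dist_0_eq_abs, abs_of_nonneg dist_nonneg]
    exact hm _ _ fun i hi => hn i (Finset.mem_range.2 hi)

lemma continuous_apply (i : ℕ) : Continuous fun p : GapSpace => p.1 i :=
  (_root_.continuous_apply i).comp continuous_subtype_val

lemma continuous_step : Continuous step := by
  refine Continuous.subtype_mk (continuous_pi fun i => ?_) _
  exact ((continuous_apply (i + 1)).fst).prodMk (continuous_apply i).snd

theorem shadowing_step : Shadowing step := by
  intro ε hε
  obtain ⟨n, hn⟩ := dist_lt_of_agree hε
  refine ⟨(1 / 2) ^ n, by positivity, fun u hu => ?_⟩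
  have hu1 : ∀ k, ∀ i ≤ n, ((u k).1 (i + 1)).1 = ((u (k + 1)).1 i).1 := by
    intro k i hi
    rw [← agree_of_dist_lt (hu k) hi]
    rfl
  have hu2 : ∀ k, ∀ i ≤ n, ((u k).1 i).2 = ((u (k + 1)).1 i).2 := by
    intro k i hi
    rw [← agree_of_dist_lt (hu k) hi]
    rfl
  have h1 : ∀ j ≤ n, ∀ k, ((u k).1 j).1 = ((u (k + j)).1 0).1 := by
    intro j
    induction j with
    | zero => simp
    | succ j ih =>
      intro hj k
      rw [hu1 k j (by omega), ih (by omega), show k + 1 + j = k + (j + 1) by ring]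
  have h2 : ∀ i ≤ n, ∀ k, ((u k).1 i).2 = ((u 0).1 i).2 := by
    intro i hi k
    induction k with
    | zero => rfl
    | succ k ih => rw [← hu2 k i hi, ih]
  let z : GapSpace := ⟨fun i => (((u i).1 0).1, decide (i < n) && ((u 0).1 i).2), by
    intro i d hi hj
    by_cases hd : d < n
    · have := (u i).2 0 d hi (by rw [zero_add, h1 (d + 1) hd i]; exact hj)
      simp only [← h2 d hd.le i, this, Bool.and_false]
    · simp [hd]⟩
  have hz : ∀ i, z.1 i = (((u i).1 0).1, decide (i < n) && ((u 0).1 i).2) := fun _ => rfl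
  refine ⟨z, fun k => hn _ _ fun i hi => ?_⟩
  rw [step_iterate, hz, hz]
  exact Prod.ext (h1 i hi.le k).symm (by simp [hi, h2 i hi.le k])

/-- The fibre of `GapSpace` over `T = ℕ`, where every gap is forbidden. -/
def fullFibre : Set GapSpace := {p | ∀ i, (p.1 i).2 = true}

/-- The first component of a point of `fullFibre` has at most one `1`, hence vanishes from some
point on. -/
lemma exists_zero_tail {p : GapSpace} (hp : p ∈ fullFibre) :
    ∃ K, ∀ k ≥ K, (p.1 k).1 = false := by
  by_cases h : ∃ i, (p.1 i).1 = true
  · obtain ⟨i, hi⟩ := h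
    refine ⟨i + 1, fun k hk => ?_⟩
    by_contra hk'
    obtain ⟨d, rfl⟩ := Nat.exists_eq_add_of_lt hk
    have := p.2 i d hi (by simpa using hk')
    simp [hp d] at this
  · exact ⟨0, fun k _ => by simpa using fun hk => h ⟨k, hk⟩⟩

lemma iterate_mem_fullFibre {p : GapSpace} (hp : p ∈ fullFibre) (n : ℕ) :
    step^[n] p ∈ fullFibre := fun i => by rw [step_iterate]; exact hp i

/-- The point `(0^M x, T)` obtained from `(x, T)`. -/
def pad (M : ℕ) (p : GapSpace) : GapSpace :=
  ⟨fun i => (decide (M ≤ i) && (p.1 (i - M)).1, (p.1 i).2), fun i d h1 h2 => by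
    simp only [Bool.and_eq_true, decide_eq_true_eq] at h1 h2
    refine p.2 (i - M) d h1.2 ?_
    rw [show i - M + d + 1 = i + d + 1 - M by omega]
    exact h2.2⟩

lemma pad_apply (M : ℕ) (p : GapSpace) (i : ℕ) :
    (pad M p).1 i = (decide (M ≤ i) && (p.1 (i - M)).1, (p.1 i).2) := rfl

lemma step_iterate_pad (M : ℕ) (p : GapSpace) : step^[M] (pad M p) = p := by
  refine Subtype.ext (funext fun i => ?_)
  rw [step_iterate]
  simp [pad_apply]

theorem isICT_fullFibre : IsICT step fullFibre := by
  refine ⟨?_, ?_, fun p hp => iterate_mem_fullFibre hp 1, ?_⟩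
  · exact ⟨⟨fun _ => (false, true), by simp⟩, fun _ => rfl⟩
  · simp only [fullFibre, Set.ofPred_forall]
    exact isClosed_iInter fun i => isClosed_eq (continuous_apply i).snd continuous_const
  · intro δ hδ a ha b hb
    obtain ⟨n, hn⟩ := dist_lt_of_agree hδ
    obtain ⟨K, hK⟩ := exists_zero_tail ha
    have hb' : pad n b ∈ fullFibre := hb
    -- Follow `a` until its first component is zero, then jump to `(0^n b, ℕ)` and follow it to `b`.
    refine ⟨K + 1 + n, fun i => if i ≤ K then step^[i] a else step^[i - (K + 1)] (pad n b),
      by simp, ?_, ?_, ?_⟩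
    · dsimp only
      rw [if_neg (by omega), Nat.add_sub_cancel_left, step_iterate_pad]
    · intro i _
      dsimp only
      split_ifs
      · exact iterate_mem_fullFibre ha i
      · exact iterate_mem_fullFibre hb' _
    · intro i _
      dsimp only
      rcases lt_trichotomy i K with h | rfl | h
      · rw [if_pos h.le, if_pos (by omega), ← Function.iterate_succ_apply' step, dist_self]
        exact hδ
      · rw [if_pos le_rfl, if_neg (by omega), ← Function.iterate_succ_apply' step]
        refine hn _ _ fun j hj => ?_
        rw [step_iterate, hK _ (by omega), ha j]
        rw [show i + 1 - (i + 1) = 0 by omega, Function.iterate_zero_apply, pad_apply, hb j]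
        simp [hj]
      · rw [if_neg (by omega), if_neg (by omega), ← Function.iterate_succ_apply' step,
          show (i - (K + 1)).succ = i + 1 - (K + 1) by omega, dist_self]
        exact hδ

theorem fullFibre_ne_omegaLimitSet (x : GapSpace) : fullFibre ≠ OmegaLimitSet step x := by
  intro h
  -- The point `(1 0^∞, ℕ)`.
  let q : GapSpace := ⟨fun i => (decide (i = 0), true), fun i d _ h2 => by simp at h2⟩
  have hq : q ∈ fullFibre := fun _ => rfl
  have hq' := hq
  rw [h] at hq'
  obtain ⟨φ, hφ, hlim⟩ := hq'
  rw [tendsto_iff_dist_tendsto_zero, tendsto_dist_iff _ fun _ => q] at hlim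
  have hx : x ∈ fullFibre := by
    intro i
    obtain ⟨k, hk⟩ := (hlim i).exists
    rw [step_iterate] at hk
    exact congrArg Prod.snd hk
  obtain ⟨K, hK⟩ := exists_zero_tail hx
  obtain ⟨k, hk, hkK⟩ := ((hlim 0).and (eventually_ge_atTop K)).exists
  rw [step_iterate, hK _ (by have := hφ.id_le k; simp only [id] at this; omega)] at hk
  simp [q] at hk

/-- Any gap occurring between two powers of two is at least as large as the smaller of them. -/
lemma le_of_pow_gap {i d a b : ℕ} (ha : 2 ^ a = i) (hb : 2 ^ b = i + d + 1) : i ≤ d + 1 := by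
  have hab : a < b := (Nat.pow_lt_pow_iff_right (one_lt_two)).1 (by omega : 2 ^ a < 2 ^ b)
  have : 2 ^ (a + 1) ≤ 2 ^ b := Nat.pow_le_pow_right two_pos hab
  rw [pow_succ] at this
  omega

open Classical in
/-- The point `(σ^k s, T_k)`, where `s` has its ones at the powers of two and `T_k` is the set of
gaps that do not occur in `s` at positions `≥ k`. -/
noncomputable def sparse (k : ℕ) : GapSpace :=
  ⟨fun i => (decide (∃ a, 2 ^ a = k + i),
      decide (¬ ∃ j ≥ k, (∃ a, 2 ^ a = j) ∧ ∃ b, 2 ^ b = j + i + 1)), fun i d h1 h2 => by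
    simp only [decide_eq_true_eq] at h1 h2
    simp only [decide_eq_false_iff_not, not_not]
    exact ⟨k + i, by omega, h1, h2.imp fun b hb => by omega⟩⟩

lemma sparse_snd {k i : ℕ} (h : i + 1 < k) : ((sparse k).1 i).2 = true := by
  simp only [sparse, decide_eq_true_eq]
  rintro ⟨j, hj, ⟨a, ha⟩, b, hb⟩
  have := le_of_pow_gap ha hb
  omega

theorem not_limitShadowing_step : ¬ LimitShadowing step := by
  intro h
  obtain ⟨z, hz⟩ := h sparse <| by
    rw [tendsto_dist_iff]
    intro i
    filter_upwards [eventually_gt_atTop (i + 1)] with k hk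
    refine Prod.ext ?_ ?_
    · simp only [step, sparse]
      rw [show k + (i + 1) = k + 1 + i by ring]
    · exact (sparse_snd hk).trans (sparse_snd (by omega)).symm
  rw [tendsto_dist_iff] at hz
  have hzf : z ∈ fullFibre := by
    intro i
    obtain ⟨k, hk, hki⟩ := ((hz i).and (eventually_gt_atTop (i + 1))).exists
    rw [step_iterate] at hk
    exact (congrArg Prod.snd hk).trans (sparse_snd hki)
  obtain ⟨K, hK⟩ := exists_zero_tail hzf
  obtain ⟨N, hN⟩ := eventually_atTop.1 (hz 0)
  have hlt : K + N < 2 ^ (K + N) := Nat.lt_two_pow_self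
  have := congrArg Prod.fst (hN (2 ^ (K + N)) (by omega))
  rw [step_iterate, hK _ (by omega)] at this
  simp [sparse] at this

end GapSpace

/-- There is a dynamical system on a compact metric space with
shadowing for which the collection of ω-limit sets is a proper subcollection of the
collection of internally chain transitive sets; in particular it fails limit
shadowing. -/
theorem exists_shadowing_omega_ne_ict :
    ∃ (X : Type) (_ : MetricSpace X) (_ : CompactSpace X) (f : X → X),
      Continuous f ∧ Shadowing f ∧
      {A : Set X | ∃ x : X, A = OmegaLimitSet f x} ⊂ {A : Set X | IsICT f A} ∧
      ¬ LimitShadowing f := by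
  refine ⟨GapSpace, inferInstance, inferInstance, GapSpace.step, GapSpace.continuous_step,
    GapSpace.shadowing_step, ?_, GapSpace.not_limitShadowing_step⟩
  refine (Set.ssubset_iff_of_subset ?_).2 ⟨GapSpace.fullFibre, GapSpace.isICT_fullFibre, ?_⟩
  · rintro A ⟨x, rfl⟩
    exact isICT_omegaLimitSet GapSpace.continuous_step x
  · rintro ⟨x, hx⟩
    exact GapSpace.fullFibre_ne_omegaLimitSet x hx
end

section
/- There exists a topologically transitive dynamical system (X, f), with X a compact metric space and f: X → X continuous, which has the shadowing property but for which ω_f ≠ ICT(f); in particular, this system fails limit shadowing. -/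
namespace LoopShift

/-- The ambient compact space: a point is a sequence of pairs `(s, c)`, a symbol `s ∈ {0, 1, 2}`
together with a set `c ⊆ ℕ` of forbidden gaps (`c d = true` means that the gap `d + 1` is
forbidden). -/
abbrev Ambient : Type := ℕ → Fin 3 × (ℕ → Bool)

/-- The constraints defining the subshift: the set of forbidden gaps can only change next to a
symbol `2`, and two `1`s with no `2` between them are not at a forbidden distance. -/
def Admissible (x : Ambient) : Prop :=
  (∀ i d, (x i).1 ≠ 2 → (x (i + 1)).1 ≠ 2 → (x i).2 d = (x (i + 1)).2 d) ∧
  (∀ i d, (x i).1 = 1 → (x (i + (d + 1))).1 = 1 → (∀ k ≤ d + 1, (x (i + k)).1 ≠ 2) →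
    (x i).2 d = false)

/-- The phase space. -/
@[ext]
structure Sys : Type where
  /-- The underlying sequence. -/
  val : Ambient
  admissible : Admissible val

theorem metrizableSpace_induced :
    @TopologicalSpace.MetrizableSpace Sys (.induced Sys.val inferInstance) := by
  let _ : TopologicalSpace Sys := .induced Sys.val inferInstance
  have : TopologicalSpace.MetrizableSpace Ambient :=
    TopologicalSpace.metrizableSpace_of_t3_secondCountable _
  exact Topology.IsEmbedding.metrizableSpace (f := Sys.val) ⟨⟨rfl⟩, fun _ _ h => Sys.ext h⟩

/-- Any metric inducing the product topology. -/
noncomputable instance : MetricSpace Sys :=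
  @TopologicalSpace.metrizableSpaceMetric Sys (.induced Sys.val inferInstance)
    metrizableSpace_induced

theorem isEmbedding_val : Topology.IsEmbedding Sys.val :=
  ⟨⟨rfl⟩, fun _ _ h => Sys.ext h⟩

theorem continuous_val : Continuous Sys.val := isEmbedding_val.continuous

theorem continuous_symbol (i : ℕ) : Continuous fun x : Sys => (x.1 i).1 :=
  continuous_fst.comp ((continuous_apply i).comp continuous_val)

theorem continuous_gap (i d : ℕ) : Continuous fun x : Sys => (x.1 i).2 d :=
  (continuous_apply d).comp (continuous_snd.comp ((continuous_apply i).comp continuous_val))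

theorem isClopen_of_discrete {α : Type*} [TopologicalSpace α] [DiscreteTopology α]
    {Y : Type*} [TopologicalSpace Y] {g : Y → α}
    (hg : Continuous g) (P : α → Prop) : IsClopen {x | P (g x)} :=
  (isClopen_discrete {a | P a}).preimage hg

theorem isClosed_admissible : IsClosed {x : Ambient | Admissible x} := by
  have hs : ∀ i, Continuous fun x : Ambient => (x i).1 := fun i =>
    continuous_fst.comp (continuous_apply i)
  have hc : ∀ i d, Continuous fun x : Ambient => (x i).2 d := fun i d =>
    (continuous_apply d).comp (continuous_snd.comp (continuous_apply i))
  have hne : ∀ i, IsOpen {x : Ambient | (x i).1 ≠ 2} := fun i =>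
    (isClopen_of_discrete (hs i) (fun a => a ≠ 2)).isOpen
  have hone : ∀ i, IsOpen {x : Ambient | (x i).1 = 1} := fun i =>
    (isClopen_of_discrete (hs i) (fun a => a = 1)).isOpen
  refine IsClosed.and ?_ ?_
  · simp only [Set.ofPred_forall]
    refine isClosed_iInter fun i => isClosed_iInter fun d => ?_
    exact isClosed_imp (hne i) (isClosed_imp (hne (i + 1)) (isClosed_eq (hc i d) (hc (i + 1) d)))
  · simp only [Set.ofPred_forall]
    refine isClosed_iInter fun i => isClosed_iInter fun d => ?_
    refine isClosed_imp (hone i) (isClosed_imp (hone _) (isClosed_imp ?_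
      (isClosed_eq (hc i d) continuous_const)))
    simp only [Set.ofPred_forall]
    exact (Set.finite_Iic (d + 1)).isOpen_biInter fun k _ => hne (i + k)

instance : CompactSpace Sys :=
  have hrange : Set.range Sys.val = {x : Ambient | Admissible x} :=
    Set.ext fun x => ⟨fun ⟨y, hy⟩ => hy ▸ y.2, fun h => ⟨⟨x, h⟩, rfl⟩⟩
  ⟨isEmbedding_val.isCompact_iff.2 (by
    rw [Set.image_univ, hrange]; exact isClosed_admissible.isCompact)⟩

/-- The shift map. -/
def shift (x : Sys) : Sys :=
  ⟨fun i => x.1 (i + 1), fun i d h h' => x.2.1 (i + 1) d h h', fun i d h h' hk => by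
    refine x.2.2 (i + 1) d h ?_ ?_
    · rw [add_right_comm]; exact h'
    · intro k hk'
      rw [add_right_comm]; exact hk k hk'⟩

@[simp] theorem shift_val (x : Sys) (i : ℕ) : (shift x).1 i = x.1 (i + 1) := rfl

@[simp] theorem iterate_shift_val (x : Sys) (n i : ℕ) : (shift^[n] x).1 i = x.1 (n + i) := by
  induction n generalizing x with
  | zero => simp
  | succ n ih => rw [Function.iterate_succ_apply, ih, shift_val]; congr 1; omega

theorem continuous_shift : Continuous shift := by
  refine isEmbedding_val.continuous_iff.2 (continuous_pi fun i => ?_)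
  exact (continuous_apply (i + 1)).comp continuous_val

/-! ### The finite-resolution relation -/

/-- `x` and `y` cannot be told apart at resolution `n`: on the first `n + 2` positions they have
the same symbols and forbid the same gaps `≤ n`. -/
def Agree (n : ℕ) (x y : Sys) : Prop :=
  ∀ i ≤ n + 1, (x.1 i).1 = (y.1 i).1 ∧ ∀ d < n, (x.1 i).2 d = (y.1 i).2 d

theorem isClopen_agree (n : ℕ) : IsClopen {p : Sys × Sys | Agree n p.1 p.2} := by
  simp only [Agree, Set.ofPred_forall]
  refine (Set.finite_Iic (n + 1)).isClopen_biInter fun i _ => ?_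
  refine IsClopen.inter ?_ ?_
  · exact isClopen_of_discrete (g := fun p : Sys × Sys => ((p.1.1 i).1, (p.2.1 i).1))
      (((continuous_symbol i).comp continuous_fst).prodMk
        ((continuous_symbol i).comp continuous_snd)) (fun a => a.1 = a.2)
  · suffices h : IsClopen {p : Sys × Sys | ∀ d < n, (p.1.1 i).2 d = (p.2.1 i).2 d} from h
    simp only [Set.ofPred_forall]
    refine (Set.finite_Iio n).isClopen_biInter fun d _ => ?_
    exact isClopen_of_discrete (g := fun p : Sys × Sys => ((p.1.1 i).2 d, (p.2.1 i).2 d))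
      (((continuous_gap i d).comp continuous_fst).prodMk
        ((continuous_gap i d).comp continuous_snd)) (fun a => a.1 = a.2)

theorem agree_of_dist_lt (n : ℕ) : ∃ δ : ℝ, 0 < δ ∧ ∀ x y : Sys, dist x y < δ → Agree n x y := by
  have h : {p : Sys × Sys | Agree n p.1 p.2} ∈ uniformity Sys := by
    rw [← nhdsSet_diagonal_eq_uniformity]
    refine (isClopen_agree n).isOpen.mem_nhdsSet.2 ?_
    rintro ⟨x, y⟩ hxy
    obtain rfl : x = y := hxy
    exact fun i _ => ⟨rfl, fun d _ => rfl⟩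
  obtain ⟨δ, hδ, h⟩ := Metric.mem_uniformity_dist.1 h
  exact ⟨δ, hδ, fun x y hxy => h hxy⟩

/-- By compactness: the closed relations `Agree n` decrease to the diagonal. -/
theorem dist_lt_of_agree {ε : ℝ} (hε : 0 < ε) : ∃ n, ∀ x y : Sys, Agree n x y → dist x y < ε := by
  have hanti : ∀ m n, m ≤ n → ∀ x y : Sys, Agree n x y → Agree m x y :=
    fun m n hmn x y h i hi =>
      ⟨(h i (by omega)).1, fun d hd => (h i (by omega)).2 d (by omega)⟩
  obtain ⟨n, hn⟩ := exists_subset_nhds_of_compactSpace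
    (V := fun n : ℕ => {p : Sys × Sys | Agree n p.1 p.2})
    (U := {p : Sys × Sys | dist p.1 p.2 < ε})
    (directed_of_isDirected_le fun m n hmn p hp => hanti m n hmn p.1 p.2 hp)
    (fun n => (isClopen_agree n).isClosed) (by
      rintro ⟨x, y⟩ hxy
      rw [Set.mem_iInter] at hxy
      have hxy' : x = y := by
        refine Sys.ext (funext fun i => Prod.ext (hxy i i (by omega)).1 (funext fun d => ?_))
        exact (hxy (i + d + 1) i (by omega)).2 d (by omega)
      subst hxy'
      refine (isOpen_lt (by fun_prop) continuous_const).mem_nhds ?_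
      simpa using hε)
  exact ⟨n, fun x y h => hn (show (x, y) ∈ {p : Sys × Sys | Agree n p.1 p.2} from h)⟩

/-! ### Transitivity and shadowing -/

/-- The first `N` entries of `x`, then a symbol `2`, then `y`. It is admissible because a window
without `2` lies entirely on one side of position `N`. -/
def splice (N : ℕ) (x y : Sys) : Sys :=
  ⟨fun i => if i < N then x.1 i else if i = N then (2, fun _ => false) else y.1 (i - (N + 1)), by
    refine ⟨fun i d h h' => ?_, fun i d h h' hk => ?_⟩
    · rcases lt_trichotomy i N with hi | hi | hi
      · rcases (show i + 1 < N ∨ i + 1 = N by omega) with hi' | hi'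
        · simp only [hi, hi', if_true] at h h' ⊢
          exact x.2.1 i d h h'
        · simp [hi'] at h'
      · simp [hi] at h
      · have e : i + 1 - (N + 1) = i - (N + 1) + 1 := by omega
        simp only [show ¬ i < N by omega, show ¬ i = N by omega, show ¬ i + 1 < N by omega,
          show ¬ i + 1 = N by omega, if_false, e] at h h' ⊢
        exact y.2.1 _ d h h'
    · have hN : i + (d + 1) < N ∨ N < i := by
        by_contra hcon
        have := hk (N - i) (by omega)
        simp [show i + (N - i) = N by omega] at this
      rcases hN with hN | hN
      · simp only [show i < N by omega, hN, if_true] at h h' ⊢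
        refine x.2.2 i d h h' fun k hk' => ?_
        have := hk k hk'
        simpa only [show i + k < N by omega, if_true] using this
      · have e : ∀ k, i + k - (N + 1) = i - (N + 1) + k := fun k => by omega
        simp only [show ¬ i < N by omega, show ¬ i = N by omega, show ¬ i + (d + 1) < N by omega,
          show ¬ i + (d + 1) = N by omega, if_false, e] at h h' ⊢
        refine y.2.2 _ d h h' fun k hk' => ?_
        have := hk k hk'
        simpa only [show ¬ i + k < N by omega, show ¬ i + k = N by omega, if_false, e] using this⟩

theorem transitive (U V : Set Sys) (hU : IsOpen U) (_ : IsOpen V) (hU' : U.Nonempty)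
    (hV' : V.Nonempty) : ∃ n : ℕ, (shift^[n] '' U ∩ V).Nonempty := by
  obtain ⟨x, hx⟩ := hU'
  obtain ⟨y, hy⟩ := hV'
  obtain ⟨ε, hε, hball⟩ := Metric.isOpen_iff.1 hU x hx
  obtain ⟨n, hn⟩ := dist_lt_of_agree hε
  refine ⟨n + 3, y, ⟨splice (n + 2) x y, hball (hn _ _ fun i hi => ?_), ?_⟩, hy⟩
  · simp [splice, show i < n + 2 by omega]
  · refine Sys.ext (funext fun i => ?_)
    rw [iterate_shift_val]
    simp only [splice, show ¬ n + 3 + i < n + 2 by omega, show ¬ n + 3 + i = n + 2 by omega,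
      if_false, show n + 3 + i - (n + 2 + 1) = i by omega]

/-- Forgetting the forbidden gaps larger than `n`. -/
def truncate (n : ℕ) (a : Fin 3 × (ℕ → Bool)) : Fin 3 × (ℕ → Bool) :=
  (a.1, fun d => if d < n then a.2 d else false)

/-- The truncated diagonal sequence `k ↦ truncate n (x k 0)` shadows a pseudo-orbit `x`: it is
admissible because truncation leaves only constraints visible in windows of length `n + 2`. -/
theorem shadowing_shift : Shadowing shift := by
  intro ε hε
  obtain ⟨n, hn⟩ := dist_lt_of_agree hε
  obtain ⟨δ, hδ, hagree⟩ := agree_of_dist_lt n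
  refine ⟨δ, hδ, fun x hx => ?_⟩
  have key : ∀ i k, i ≤ n + 1 → truncate n ((x (k + i)).1 0) = truncate n ((x k).1 i) := by
    intro i
    induction i with
    | zero => intro k _; rfl
    | succ i ih =>
      intro k hi
      have h1 := ih (k + 1) (by omega)
      have h2 := hagree _ _ (hx k) i (by omega)
      rw [show k + (i + 1) = k + 1 + i by omega, h1]
      refine Prod.ext h2.1.symm (funext fun d => ?_)
      by_cases hd : d < n
      · simp only [truncate, hd, if_true]
        exact (h2.2 d hd).symm
      · simp [truncate, hd]
  have hs : ∀ i k, i ≤ n + 1 → ((x (k + i)).1 0).1 = ((x k).1 i).1 := fun i k hi =>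
    by simpa only [truncate] using congrArg Prod.fst (key i k hi)
  have hc : ∀ i k d, i ≤ n + 1 → d < n → ((x (k + i)).1 0).2 d = ((x k).1 i).2 d := by
    intro i k d hi hd
    simpa [truncate, hd] using congrFun (congrArg Prod.snd (key i k hi)) d
  have hz : Admissible fun k => truncate n ((x k).1 0) := by
    refine ⟨fun i d h h' => ?_, fun i d h h' hk => ?_⟩
    · by_cases hd : d < n
      · simp only [truncate, hd, if_true] at h h' ⊢
        rw [hs 1 i (by omega)] at h'
        rw [hc 1 i d (by omega) hd]
        exact (x i).2.1 0 d h h'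
      · simp [truncate, hd]
    · by_cases hd : d < n
      · simp only [truncate, hd, if_true] at h h' hk ⊢
        rw [hs (d + 1) i (by omega)] at h'
        refine (x i).2.2 0 d h (by rwa [zero_add]) fun k hk' => ?_
        rw [zero_add, ← hs k i (by omega)]
        exact hk k hk'
      · simp [truncate, hd]
  refine ⟨⟨_, hz⟩, fun k => hn _ _ fun i hi => ?_⟩
  rw [iterate_shift_val]
  refine ⟨hs i k hi, fun d hd => ?_⟩
  simp only [truncate, hd, if_true]
  exact hc i k d hi hd

/-! ### The internally chain transitive set -/

/-- The fixed point with all symbols `0` and all gaps forbidden. -/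
def fixedPt : Sys :=
  ⟨fun _ => (0, fun _ => true), by simp [Admissible]⟩

/-- The point with a single `1`, at position `i`, and all gaps forbidden. -/
def single (i : ℕ) : Sys :=
  ⟨fun j => (if j = i then 1 else 0, fun _ => true), by
    refine ⟨fun _ _ _ _ => rfl, fun j d h h' _ => ?_⟩
    have h1 : j = i := by by_contra hne; simp [hne] at h
    have h2 : j + (d + 1) = i := by by_contra hne; simp [hne] at h'
    omega⟩

theorem shift_fixedPt : shift fixedPt = fixedPt := rfl

theorem shift_single_zero : shift (single 0) = fixedPt := by
  refine Sys.ext (funext fun j => ?_)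
  simp [single, fixedPt]

theorem shift_single_succ (i : ℕ) : shift (single (i + 1)) = single i := by
  refine Sys.ext (funext fun j => ?_)
  simp [single]

theorem tendsto_single : Filter.Tendsto single Filter.atTop (nhds fixedPt) := by
  rw [isEmbedding_val.tendsto_nhds_iff]
  refine tendsto_pi_nhds.2 fun j => tendsto_const_nhds.congr' ?_
  filter_upwards [Filter.eventually_gt_atTop j] with i hi
  simp [single, fixedPt, hi.ne]

/-- The points without symbol `2` and with all gaps forbidden, i.e. `fixedPt` and all
`single i`. -/
def loop : Set Sys := {x | ∀ i, (x.1 i).1 ≠ 2 ∧ ∀ d, (x.1 i).2 d = true}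

theorem fixedPt_mem : fixedPt ∈ loop := fun i => by simp [fixedPt]

theorem single_mem (i : ℕ) : single i ∈ loop := fun j => by
  by_cases h : j = i <;> simp [single, h]

theorem eq_of_mem_loop {x : Sys} (hx : x ∈ loop) : x = fixedPt ∨ ∃ i, x = single i := by
  have hgap : ∀ i, (x.1 i).2 = fun _ => true := fun i => funext (hx i).2
  have hno : ∀ i d, (x.1 i).1 = 1 → (x.1 (i + (d + 1))).1 ≠ 1 := fun i d h h' => by
    have := x.2.2 i d h h' fun k _ => (hx _).1
    simp [hgap] at this
  have hzero : ∀ i, (x.1 i).1 ≠ 1 → (x.1 i).1 = 0 := fun i h => by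
    have := (hx i).1
    omega
  by_cases h : ∃ i, (x.1 i).1 = 1
  · obtain ⟨i, hi⟩ := h
    refine Or.inr ⟨i, Sys.ext (funext fun j => Prod.ext ?_ (hgap j))⟩
    rcases lt_trichotomy j i with hj | hj | hj
    · have h0 : (x.1 j).1 ≠ 1 := fun h1 => hno j (i - j - 1) h1 (by
        rwa [show j + (i - j - 1 + 1) = i by omega])
      simp [single, hj.ne, hzero j h0]
    · simp [single, hj, hi]
    · have h0 := hno i (j - i - 1) hi
      rw [show i + (j - i - 1 + 1) = j by omega] at h0
      simp [single, hj.ne', hzero j h0]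
  · push Not at h
    exact Or.inl (Sys.ext (funext fun j => Prod.ext (hzero j (h j)) (hgap j)))

theorem isClosed_loop : IsClosed loop := by
  simp only [loop, Set.ofPred_forall]
  refine isClosed_iInter fun i => IsClosed.and
    (isClopen_of_discrete (continuous_symbol i) (fun a => a ≠ 2)).isClosed ?_
  simp only [Set.ofPred_forall]
  exact isClosed_iInter fun d => isClosed_eq (continuous_gap i d) continuous_const

/-- One step of a `δ`-pseudo-orbit inside `A`. -/
def Step (A : Set Sys) (δ : ℝ) (a b : Sys) : Prop := a ∈ A ∧ b ∈ A ∧ dist (shift a) b < δ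

theorem chain_of_reflTransGen {A : Set Sys} {δ : ℝ} {a b : Sys} (hb : b ∈ A)
    (h : Relation.ReflTransGen (Step A δ) a b) :
    ∃ (l : ℕ) (c : ℕ → Sys), c 0 = a ∧ c l = b ∧ (∀ i ≤ l, c i ∈ A) ∧
      ∀ i < l, dist (shift (c i)) (c (i + 1)) < δ := by
  induction h using Relation.ReflTransGen.head_induction_on with
  | refl => exact ⟨0, fun _ => b, rfl, rfl, fun _ _ => hb, fun i hi => absurd hi (by omega)⟩
  | head hstep hrest ih =>
    rename_i a₀ a₁
    obtain ⟨l, c, h0, hl, hA, hd⟩ := ih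
    refine ⟨l + 1, fun i => Nat.casesOn i a₀ c, rfl, hl, fun i hi => ?_, fun i hi => ?_⟩
    · cases i with
      | zero => exact hstep.1
      | succ i => exact hA i (by omega)
    · cases i with
      | zero => simpa [h0] using hstep.2.2
      | succ i => exact hd i (by omega)

theorem isICT_loop : IsICT shift loop := by
  refine ⟨⟨_, fixedPt_mem⟩, isClosed_loop, fun x hx i => hx (i + 1), fun δ hδ a ha b hb => ?_⟩
  refine chain_of_reflTransGen hb ?_
  have hdown : ∀ i, Step loop δ (single (i + 1)) (single i) := fun i =>
    ⟨single_mem _, single_mem _, by rw [shift_single_succ, dist_self]; exact hδ⟩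
  have hchain : ∀ k i, Relation.ReflTransGen (Step loop δ) (single (i + k)) (single i) := by
    intro k i
    induction k with
    | zero => exact .refl
    | succ k ih => exact .head (hdown (i + k)) ih
  have hto : Relation.ReflTransGen (Step loop δ) a fixedPt := by
    rcases eq_of_mem_loop ha with rfl | ⟨i, rfl⟩
    · exact .refl
    · have := hchain i 0
      rw [zero_add] at this
      exact this.tail ⟨single_mem _, fixedPt_mem, by rwa [shift_single_zero, dist_self]⟩
  refine hto.trans ?_
  rcases eq_of_mem_loop hb with rfl | ⟨i, rfl⟩
  · exact .refl
  · obtain ⟨N, hN⟩ := Metric.tendsto_atTop.1 tendsto_single δ hδ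
    refine .head ⟨fixedPt_mem, single_mem (i + N), ?_⟩ (hchain N i)
    rw [shift_fixedPt, dist_comm]
    exact hN _ (by omega)

/-! ### No orbit follows the loop asymptotically -/

/-- Once the symbol `2` has disappeared for good, the set of forbidden gaps is frozen; if every
gap is seen to be forbidden infinitely often then all of them are, and at most one more `1` can
occur. -/
theorem not_frequently_one (z : Sys) (h2 : ∀ᶠ k in Filter.atTop, (z.1 k).1 ≠ 2)
    (hgap : ∀ d, ∃ᶠ k in Filter.atTop, (z.1 k).2 d = true)
    (h1 : ∃ᶠ k in Filter.atTop, (z.1 k).1 = 1) : False := by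
  obtain ⟨N, hN⟩ := Filter.eventually_atTop.1 h2
  have hconst : ∀ k d, (z.1 (N + k)).2 d = (z.1 N).2 d := by
    intro k d
    induction k with
    | zero => rfl
    | succ k ih =>
      rw [← ih]
      exact (z.2.1 (N + k) d (hN _ (by omega)) (hN _ (by omega))).symm
  rw [Filter.frequently_atTop] at h1
  obtain ⟨i, hi, hi1⟩ := h1 N
  obtain ⟨j, hj, hj1⟩ := h1 (i + 1)
  have hfalse := z.2.2 i (j - i - 1) hi1 (by rwa [show i + (j - i - 1 + 1) = j by omega])
    fun k _ => hN _ (by omega)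
  obtain ⟨m, hm, hm1⟩ := Filter.frequently_atTop.1 (hgap (j - i - 1)) N
  rw [show i = N + (i - N) by omega, hconst] at hfalse
  rw [show m = N + (m - N) by omega, hconst] at hm1
  rw [show N + (i - N) = i by omega] at hfalse
  simp [hfalse] at hm1

theorem loop_ne_omega (z : Sys) : loop ≠ OmegaLimitSet shift z := by
  intro hA
  obtain ⟨φ, hφ, hlim⟩ : single 0 ∈ OmegaLimitSet shift z := hA ▸ single_mem 0
  have hfreq : ∀ {P : Fin 3 × (ℕ → Bool) → Prop}, (∀ᶠ k in Filter.atTop, P (z.1 (φ k))) →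
      ∃ᶠ k in Filter.atTop, P (z.1 k) := fun h =>
    hφ.tendsto_atTop.frequently h.frequently
  refine not_frequently_one z ?_ (fun d => hfreq (P := fun a => a.2 d = true) ?_)
    (hfreq (P := fun a => a.1 = 1) ?_)
  · -- otherwise a limit point of the times with symbol `2` would lie in `loop`
    by_contra hcon
    have hcon' : ∃ᶠ k in Filter.atTop, (z.1 k).1 = 2 := by
      simpa [Filter.Frequently] using hcon
    obtain ⟨ψ, hψ, h2⟩ := Filter.extraction_of_frequently_atTop hcon'
    obtain ⟨y, θ, hθ, hy⟩ := CompactSpace.tendsto_subseq fun k => shift^[ψ k] z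
    have hmem : y ∈ loop := by
      rw [hA]
      exact ⟨ψ ∘ θ, hψ.comp hθ, hy⟩
    have hopen := (isClopen_of_discrete (continuous_symbol 0) (fun a => a ≠ 2)).isOpen
    obtain ⟨k, hk⟩ := (hy.eventually (hopen.mem_nhds (hmem 0).1)).exists
    exact hk (by simpa using h2 (θ k))
  · have hopen := (isClopen_of_discrete (continuous_gap 0 d) (fun a => a = true)).isOpen
    filter_upwards [hlim.eventually (hopen.mem_nhds ((single_mem 0 0).2 d))] with k hk
    simpa using hk
  · have hopen := (isClopen_of_discrete (continuous_symbol 0) (fun a => a = 1)).isOpen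
    filter_upwards [hlim.eventually (hopen.mem_nhds (x := single 0) rfl)] with k hk
    simpa using hk

/-- On the block `m² ≤ n ≤ m² + 2m` this counts down from `2m` to `0`, so that
`n ↦ single (countdown n)` runs through the loop infinitely often, with vanishing errors. -/
def countdown (n : ℕ) : ℕ := (n.sqrt + 1) ^ 2 - 1 - n

theorem countdown_sq (m : ℕ) : countdown (m ^ 2) = 2 * m := by
  rw [countdown, Nat.sqrt_eq']
  have : (m + 1) ^ 2 = m ^ 2 + 2 * m + 1 := by ring
  omega

theorem countdown_step (n : ℕ) : countdown n = countdown (n + 1) + 1 ∨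
    (countdown n = 0 ∧ countdown (n + 1) = 2 * (n + 1).sqrt) := by
  have h1 : n < (n.sqrt + 1) ^ 2 := Nat.lt_succ_sqrt' n
  have h0 : n.sqrt ^ 2 ≤ n := Nat.sqrt_le' n
  rcases Nat.lt_or_ge (n + 1) ((n.sqrt + 1) ^ 2) with h | h
  · left
    have : (n + 1).sqrt = n.sqrt := (Nat.eq_sqrt'.2 ⟨by omega, h⟩).symm
    simp only [countdown, this]
    omega
  · right
    have e : n + 1 = (n.sqrt + 1) ^ 2 := by omega
    refine ⟨by simp only [countdown]; omega, ?_⟩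
    rw [e, countdown_sq, Nat.sqrt_eq']

theorem not_limitShadowing_shift : ¬ LimitShadowing shift := by
  intro h
  obtain ⟨z, hz⟩ := h (fun n => single (countdown n)) (by
    have hlim : Filter.Tendsto (fun n : ℕ => dist fixedPt (single (2 * (n + 1).sqrt)))
        Filter.atTop (nhds 0) := by
      have hs : Filter.Tendsto (fun n : ℕ => 2 * (n + 1).sqrt) Filter.atTop Filter.atTop := by
        refine Filter.tendsto_atTop.2 fun b => ?_
        filter_upwards [Filter.eventually_ge_atTop (b ^ 2)] with n hn
        have : b ≤ (n + 1).sqrt := Nat.le_sqrt'.2 (by omega)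
        omega
      have := (tendsto_const_nhds (x := fixedPt)).dist (tendsto_single.comp hs)
      rwa [dist_self] at this
    refine squeeze_zero (fun _ => dist_nonneg) (fun n => ?_) hlim
    rcases countdown_step n with hn | ⟨hn, hn'⟩
    · rw [hn, shift_single_succ, dist_self]
      exact dist_nonneg
    · rw [hn, hn', shift_single_zero])
  -- at each resolution, the orbit of `z` eventually agrees with the pseudo-orbit
  have hagree : ∀ n, ∀ᶠ k in Filter.atTop, Agree n (shift^[k] z) (single (countdown k)) := by
    intro n
    obtain ⟨δ, hδ, hn⟩ := agree_of_dist_lt n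
    filter_upwards [hz.eventually (gt_mem_nhds hδ)] with k hk using hn _ _ hk
  refine not_frequently_one z ?_ (fun d => Filter.Eventually.frequently ?_) ?_
  · filter_upwards [hagree 0] with k hk
    have := (hk 0 (by omega)).1
    rw [iterate_shift_val, add_zero] at this
    rw [this]
    exact (single_mem _ 0).1
  · filter_upwards [hagree (d + 1)] with k hk
    have := (hk 0 (by omega)).2 d (by omega)
    rw [iterate_shift_val, add_zero] at this
    rw [this]
    exact (single_mem _ 0).2 d
  · have hzero : ∃ᶠ k in Filter.atTop, countdown k = 0 := by
      refine Filter.frequently_atTop.2 fun a => ⟨a ^ 2 + 2 * a, by nlinarith, ?_⟩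
      have e : (a + 1) ^ 2 = a ^ 2 + 2 * a + 1 := by ring
      have : (a ^ 2 + 2 * a).sqrt = a := Nat.sqrt_add_eq' a (by omega)
      simp only [countdown, this]
      omega
    refine (hzero.and_eventually (hagree 0)).mono fun k hk => ?_
    have := (hk.2 0 (by omega)).1
    rw [iterate_shift_val, add_zero, hk.1] at this
    simpa [single] using this

end LoopShift

/-- There is a topologically transitive dynamical system on a compact
metric space with shadowing for which ω_f ≠ ICT(f); in particular it fails limit
shadowing. -/
theorem exists_transitive_shadowing_omega_ne_ict :
    ∃ (X : Type) (_ : MetricSpace X) (_ : CompactSpace X) (f : X → X),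
      Continuous f ∧
      (∀ U V : Set X, IsOpen U → IsOpen V → U.Nonempty → V.Nonempty →
        ∃ n : ℕ, (f^[n] '' U ∩ V).Nonempty) ∧
      Shadowing f ∧
      {A : Set X | ∃ x : X, A = OmegaLimitSet f x} ≠ {A : Set X | IsICT f A} ∧
      ¬ LimitShadowing f := by
  refine ⟨LoopShift.Sys, inferInstance, inferInstance, LoopShift.shift,
    LoopShift.continuous_shift, LoopShift.transitive, LoopShift.shadowing_shift, fun h => ?_,
    LoopShift.not_limitShadowing_shift⟩
  obtain ⟨z, hz⟩ : LoopShift.loop ∈ {A | ∃ x, A = OmegaLimitSet LoopShift.shift x} :=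
    h ▸ LoopShift.isICT_loop
  exact LoopShift.loop_ne_omega z hz
end

section
/- Let (X, f) be a dynamical system on a compact metric space and let F_1 ⊆ F_2 ⊆ … ⊆ X be an increasing sequence of closed f-invariant subsets with closure(⋃_{n≥1} F_n) = X. Assume that for each n ∈ ℕ there is a continuous map π_n: X → F_n which is: (i) non-expanding, i.e. d(π_n(x), π_n(y)) ≤ d(x,y) for all x, y; (ii) commuting with f, i.e. π_n ∘ f = f ∘ π_n; and (iii) a nearest point projection, i.e. d(x, π_n(x)) = min{ d(x,y) : y ∈ F_n } for all x. If for each n ∈ ℕ the restriction f|_{F_n}: F_n → F_n has shadowing, then f has shadowing on X. -/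
/-- Some `π N` is uniformly `ε`-close to the identity: the open sets
`{x | dist x (π n x) < ε}` increase with `n`, since `π n x` is a nearest point of the growing
set `F n`, and cover `X` by density of the union of the `F n`. -/
lemma exists_uniformly_close_projection {X : Type*} [MetricSpace X] [CompactSpace X]
    (F : ℕ → Set X) (hFmono : Monotone F) (hFdense : closure (⋃ n, F n) = Set.univ)
    (π : ℕ → X → X) (hπmem : ∀ n x, π n x ∈ F n) (hπcont : ∀ n, Continuous (π n))
    (hπnear : ∀ n x, ∀ y ∈ F n, dist x (π n x) ≤ dist x y) {ε : ℝ} (hε : 0 < ε) :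
    ∃ N, ∀ x, dist x (π N x) < ε := by
  have hopen : ∀ n, IsOpen {x | dist x (π n x) < ε} := fun n =>
    isOpen_lt (continuous_id.dist (hπcont n)) continuous_const
  have hmono : Monotone fun n => {x | dist x (π n x) < ε} := fun m n hmn x hx =>
    (hπnear n x _ (hFmono hmn (hπmem m x))).trans_lt hx
  have hcover : Set.univ ⊆ ⋃ n, {x | dist x (π n x) < ε} := fun x _ => by
    have hx : x ∈ closure (⋃ n, F n) := hFdense ▸ Set.mem_univ x
    obtain ⟨y, hy, hxy⟩ := Metric.mem_closure_iff.1 hx ε hε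
    obtain ⟨n, hn⟩ := Set.mem_iUnion.1 hy
    exact Set.mem_iUnion.2 ⟨n, (hπnear n x y hn).trans_lt hxy⟩
  obtain ⟨N, hN⟩ := isCompact_univ.elim_directed_cover _ hopen hcover hmono.directed_le
  exact ⟨N, fun x => hN (Set.mem_univ x)⟩

/-- If an increasing sequence of closed invariant sets `F n` with dense
union admits nonexpanding, `f`-commuting nearest-point projections `π n : X → F n`, and
`f` has shadowing on each `F n`, then `f` has shadowing on `X`. -/
theorem shadowing_of_shadowing_on_approximating_subsystems
    {X : Type*} [MetricSpace X] [CompactSpace X] (f : X → X) (hf : Continuous f)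
    (F : ℕ → Set X) (hFclosed : ∀ n, IsClosed (F n))
    (hFinv : ∀ n, Set.MapsTo f (F n) (F n))
    (hFmono : Monotone F) (hFdense : closure (⋃ n, F n) = Set.univ)
    (π : ℕ → X → X) (hπmem : ∀ n x, π n x ∈ F n)
    (hπcont : ∀ n, Continuous (π n))
    (hπnonexp : ∀ n x y, dist (π n x) (π n y) ≤ dist x y)
    (hπcomm : ∀ n x, π n (f x) = f (π n x))
    (hπnear : ∀ n x, ∀ y ∈ F n, dist x (π n x) ≤ dist x y)
    (hshad : ∀ n, ShadowingOn f (F n)) :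
    Shadowing f := by
  intro ε hε
  obtain ⟨N, hN⟩ := exists_uniformly_close_projection F hFmono hFdense π hπmem hπcont hπnear
    (half_pos hε)
  obtain ⟨δ, hδ, hsh⟩ := hshad N (ε / 2) (half_pos hε)
  refine ⟨δ, hδ, fun x hx => ?_⟩
  obtain ⟨z, -, hz⟩ := hsh (fun n => π N (x n)) (fun n => hπmem N _) fun n => by
    rw [← hπcomm]
    exact (hπnonexp N _ _).trans_lt (hx n)
  refine ⟨z, fun n => ?_⟩
  calc dist (f^[n] z) (x n)
      ≤ dist (f^[n] z) (π N (x n)) + dist (x n) (π N (x n)) := dist_triangle_right _ _ _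
    _ < ε / 2 + ε / 2 := add_lt_add (hz n) (hN (x n))
    _ = ε := add_halves ε
end

section
/- Let f: [0,1] → [0,1] be a continuous interval map with shadowing, and assume that f has only finitely many maximal ω-limit sets. Then the restriction of f to any of these maximal ω-limit sets also has shadowing. -/
/-- `A` is the ω-limit set of some point of `[0,1]` under the interval map `f`. -/
def IsOmegaLimitSetOn (f : ℝ → ℝ) (A : Set ℝ) : Prop :=
  ∃ x ∈ Set.Icc (0 : ℝ) 1, A = OmegaLimitSet f x

/-- `A` is a maximal ω-limit set of the interval map `f`. -/
def IsMaximalOmegaLimitSet (f : ℝ → ℝ) (A : Set ℝ) : Prop :=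
  IsOmegaLimitSetOn f A ∧ ∀ B : Set ℝ, IsOmegaLimitSetOn f B → A ⊆ B → B = A

/-! ### Pseudo-orbits and chain transitivity -/

/-- `w` is an infinite `δ`-pseudo-orbit of `F` contained in `L`. -/
def IsPseudoOrbit (F : ℝ → ℝ) (L : Set ℝ) (δ : ℝ) (w : ℕ → ℝ) : Prop :=
  (∀ n, w n ∈ L) ∧ ∀ n, dist (F (w n)) (w (n + 1)) < δ

/-- Internal chain transitivity: any two points of `L` are joined by `δ`-chains of positive length
inside `L`. A chain is encoded as an initial segment of an infinite pseudo-orbit in `L`; this is no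
restriction when `L` is forward invariant. -/
def ICT (F : ℝ → ℝ) (L : Set ℝ) : Prop :=
  ∀ u ∈ L, ∀ v ∈ L, ∀ δ > 0, ∃ w, IsPseudoOrbit F L δ w ∧ w 0 = u ∧ ∃ m, 1 ≤ m ∧ w m = v

theorem IsPseudoOrbit.mono {F : ℝ → ℝ} {L L' : Set ℝ} {δ δ' : ℝ} {w : ℕ → ℝ}
    (h : IsPseudoOrbit F L δ w) (hL : L ⊆ L') (hδ : δ ≤ δ') : IsPseudoOrbit F L' δ' w :=
  ⟨fun n => hL (h.1 n), fun n => (h.2 n).trans_le hδ⟩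

theorem IsPseudoOrbit.glue {F : ℝ → ℝ} {L : Set ℝ} {δ : ℝ} {w w' : ℕ → ℝ} {m : ℕ}
    (h : IsPseudoOrbit F L δ w) (h' : IsPseudoOrbit F L δ w') (hm : w m = w' 0) :
    ∃ v, IsPseudoOrbit F L δ v ∧ (∀ i ≤ m, v i = w i) ∧ ∀ i, v (m + i) = w' i := by
  refine ⟨fun i => if i ≤ m then w i else w' (i - m), ⟨fun n => ?_, fun n => ?_⟩, ?_, ?_⟩
  · dsimp only
    split_ifs
    exacts [h.1 _, h'.1 _]
  · dsimp only
    rcases lt_trichotomy n m with hn | hn | hn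
    · rw [if_pos hn.le, if_pos (by omega)]
      exact h.2 n
    · subst hn
      rw [if_pos le_rfl, if_neg (by omega), hm, show n + 1 - n = 0 + 1 by omega]
      exact h'.2 0
    · rw [if_neg (by omega), if_neg (by omega), show n + 1 - m = n - m + 1 by omega]
      exact h'.2 _
  · intro i hi
    simp [hi]
  · intro i
    rcases Nat.eq_zero_or_pos i with rfl | hi
    · simp [hm]
    · have : ¬ (m + i ≤ m) := by omega
      simp [this]

theorem isPseudoOrbit_orbit {F : ℝ → ℝ} {L : Set ℝ} (hL : Set.MapsTo F L L) {δ : ℝ} (hδ : 0 < δ)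
    {u : ℝ} (hu : u ∈ L) : IsPseudoOrbit F L δ (fun n => F^[n] u) :=
  ⟨fun n => hL.iterate n hu, fun n => by simpa [Function.iterate_succ_apply'] using hδ⟩

/-- A small perturbation of a pseudo-orbit is a pseudo-orbit. -/
theorem exists_perturb {F : ℝ → ℝ} (hF : UniformContinuous F) {δ : ℝ} (hδ : 0 < δ) :
    ∃ η > 0, ∀ w w' : ℕ → ℝ, ∀ L : Set ℝ, (∀ n, w' n ∈ L) → (∀ n, dist (w n) (w' n) < η) →
      (∀ n, dist (F (w n)) (w (n + 1)) < η) → IsPseudoOrbit F L δ w' := by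
  obtain ⟨η, hη, h⟩ := Metric.uniformContinuous_iff.1 hF (δ / 3) (by positivity)
  refine ⟨min η (δ / 3), by positivity, fun w w' L hL h1 h2 => ⟨hL, fun n => ?_⟩⟩
  have e1 := h ((h1 n).trans_le (min_le_left _ _))
  have e2 := (h1 (n + 1)).trans_le (min_le_right _ _)
  have e3 := (h2 n).trans_le (min_le_right _ _)
  have := dist_triangle4 (F (w' n)) (F (w n)) (w (n + 1)) (w' (n + 1))
  rw [dist_comm (F (w' n)) (F (w n))] at this
  linarith

theorem ICT.closure {F : ℝ → ℝ} (hF : UniformContinuous F) {L : Set ℝ} (h : ICT F L) :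
    ICT F (closure L) := by
  intro u hu v hv δ hδ
  obtain ⟨η, hη, hp⟩ := exists_perturb hF hδ
  obtain ⟨u', hu', huu⟩ := Metric.mem_closure_iff.1 hu η hη
  obtain ⟨v', hv', hvv⟩ := Metric.mem_closure_iff.1 hv η hη
  obtain ⟨w, hw, h0, m, hm, hwm⟩ := h u' hu' v' hv' η hη
  have hm0 : m ≠ 0 := by omega
  refine ⟨fun i => if i = 0 then u else if i = m then v else w i,
    hp w _ _ (fun n => ?_) (fun n => ?_) hw.2, by simp, m, hm, by simp [hm0]⟩
  · split_ifs
    exacts [hu, hv, subset_closure (hw.1 n)]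
  · split_ifs with h1 h2
    · rw [h1, h0, dist_comm]; exact huu
    · rw [h2, hwm, dist_comm]; exact hvv
    · simpa using hη

/-- Internally chain transitive sets sharing a point `q` have internally chain transitive union:
chains are routed through `q`. -/
theorem ICT.sUnion {F : ℝ → ℝ} {S : Set (Set ℝ)} {q : ℝ} (h : ∀ s ∈ S, ICT F s)
    (hq : ∀ s ∈ S, q ∈ s) : ICT F (⋃₀ S) := by
  rintro u ⟨s, hs, hu⟩ v ⟨t, ht, hv⟩ δ hδ
  obtain ⟨w, hw, h0, m, hm, hwm⟩ := h s hs u hu q (hq s hs) δ hδ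
  obtain ⟨w', hw', h0', m', hm', hwm'⟩ := h t ht q (hq t ht) v hv δ hδ
  obtain ⟨x, hx, hx1, hx2⟩ := (hw.mono (Set.subset_sUnion_of_mem hs) le_rfl).glue
    (hw'.mono (Set.subset_sUnion_of_mem ht) le_rfl) (hwm.trans h0'.symm)
  exact ⟨x, hx, by rw [hx1 0 (by omega), h0], m + m', by omega, by rw [hx2, hwm']⟩

/-! ### ω-limit sets -/

theorem mem_omega_iff {F : ℝ → ℝ} {x y : ℝ} :
    y ∈ OmegaLimitSet F x ↔ ∀ ε > 0, ∀ N, ∃ n ≥ N, dist (F^[n] x) y < ε := by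
  constructor
  · rintro ⟨φ, hφ, hlim⟩ ε hε N
    obtain ⟨K, hK⟩ := Metric.tendsto_atTop.1 hlim ε hε
    exact ⟨φ (max K N), (le_max_right _ _).trans (hφ.id_le _), hK _ (le_max_left _ _)⟩
  · intro h
    have hfreq : MapClusterPt y Filter.atTop (fun n => F^[n] x) := by
      rw [Metric.nhds_basis_ball.mapClusterPt_iff_frequently]
      intro ε hε
      exact Filter.frequently_atTop.2 fun N => (h ε hε N)
    exact hfreq.tendsto_subseq

theorem isClosed_omega (F : ℝ → ℝ) (x : ℝ) : IsClosed (OmegaLimitSet F x) := by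
  refine isClosed_of_closure_subset fun y hy => mem_omega_iff.2 fun ε hε N => ?_
  obtain ⟨y', hy', hyy⟩ := Metric.mem_closure_iff.1 hy (ε / 2) (by positivity)
  obtain ⟨n, hn, h⟩ := mem_omega_iff.1 hy' (ε / 2) (by positivity) N
  refine ⟨n, hn, ?_⟩
  have := dist_triangle (F^[n] x) y' y
  rw [dist_comm y' y] at this
  linarith

theorem mapsTo_omega {F : ℝ → ℝ} (hF : UniformContinuous F) (x : ℝ) :
    Set.MapsTo F (OmegaLimitSet F x) (OmegaLimitSet F x) := by
  rintro y ⟨φ, hφ, hlim⟩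
  refine ⟨fun k => φ k + 1, fun a b h => Nat.add_lt_add_right (hφ h) 1, ?_⟩
  simp only [Function.iterate_succ_apply']
  exact (hF.continuous.tendsto y).comp hlim

theorem omega_subset {F : ℝ → ℝ} (hI : ∀ x, F x ∈ Set.Icc (0 : ℝ) 1) (x : ℝ) :
    OmegaLimitSet F x ⊆ Set.Icc 0 1 := by
  rintro y ⟨φ, hφ, hlim⟩
  refine isClosed_Icc.mem_of_tendsto hlim (Filter.eventually_atTop.2 ⟨1, fun k hk => ?_⟩)
  have : 1 ≤ φ k := hk.trans (hφ.id_le k)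
  obtain ⟨m, hm⟩ : ∃ m, φ k = m + 1 := ⟨φ k - 1, by omega⟩
  rw [hm, Function.iterate_succ_apply']
  exact hI _

theorem exists_omega_near {F : ℝ → ℝ} {x : ℝ}
    (hx : ∀ n, F^[n] x ∈ Set.Icc (0 : ℝ) 1) {η : ℝ} (hη : 0 < η) :
    ∃ N, ∀ n ≥ N, ∃ y ∈ OmegaLimitSet F x, dist (F^[n] x) y < η := by
  by_contra! hcon
  -- Infinitely many iterates are far from the ω-limit set; a cluster point of them contradicts this.
  have hfr : ∃ᶠ n in Filter.atTop, ∀ y ∈ OmegaLimitSet F x, η ≤ dist (F^[n] x) y :=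
    Filter.frequently_atTop.2 hcon
  obtain ⟨ψ, hψ, hfar⟩ := Filter.extraction_of_frequently_atTop hfr
  obtain ⟨y, -, φ, hφ, hlim⟩ := isCompact_Icc.tendsto_subseq (fun k => hx (ψ k))
  have hy : y ∈ OmegaLimitSet F x := ⟨ψ ∘ φ, hψ.comp hφ, hlim⟩
  obtain ⟨K, hK⟩ := Metric.tendsto_atTop.1 hlim η hη
  exact absurd (hK K le_rfl) (not_lt.2 (hfar (φ K) y hy))

theorem iterate_mem {F : ℝ → ℝ} (hI : ∀ x, F x ∈ Set.Icc (0 : ℝ) 1) {x : ℝ}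
    (hx : x ∈ Set.Icc (0 : ℝ) 1) (n : ℕ) : F^[n] x ∈ Set.Icc (0 : ℝ) 1 :=
  Set.MapsTo.iterate (fun _ _ => hI _) n hx

theorem ict_omega {F : ℝ → ℝ} (hF : UniformContinuous F) (hI : ∀ x, F x ∈ Set.Icc (0 : ℝ) 1)
    {x : ℝ} (hx : x ∈ Set.Icc (0 : ℝ) 1) : ICT F (OmegaLimitSet F x) := by
  intro u hu v hv δ hδ
  obtain ⟨η, hη, hp⟩ := exists_perturb hF hδ
  obtain ⟨N, hN⟩ := exists_omega_near (iterate_mem hI hx) hη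
  obtain ⟨s, hs, hsu⟩ := mem_omega_iff.1 hu η hη N
  obtain ⟨t, ht, htv⟩ := mem_omega_iff.1 hv η hη (s + 1)
  choose! g hg hgd using hN
  have hm0 : t - s ≠ 0 := by omega
  -- A tail of the orbit of `x` is moved into `ω(x)`, with the two prescribed values.
  refine ⟨fun i => if i = 0 then u else if i = t - s then v else g (s + i),
    hp (fun i => F^[s + i] x) _ _ (fun n => ?_) (fun n => ?_) (fun n => ?_), by simp, t - s,
    by omega, by simp [hm0]⟩
  · split_ifs
    exacts [hu, hv, hg _ (by omega)]
  · split_ifs with h1 h2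
    · rw [h1]; exact hsu
    · rw [h2, show s + (t - s) = t by omega]; exact htv
    · exact hgd _ (by omega)
  · rw [← add_assoc, Function.iterate_succ_apply', dist_self]
    exact hη

/-! ### Loops through a neighbourhood of a point -/

/-- Chains from a periodic point `r` to `v` occur, for all `δ`, with lengths in a residue class
modulo the period that does not depend on `δ`. -/
theorem exists_residue {F : ℝ → ℝ} {L : Set ℝ} (hict : ICT F L) {r : ℝ} (hr : r ∈ L) {p : ℕ}
    (hp : 1 ≤ p) {v : ℝ} (hv : v ∈ L) :
    ∃ s : Fin p, ∀ δ > 0, ∃ w m, IsPseudoOrbit F L δ w ∧ w 0 = r ∧ w m = v ∧ m % p = s := by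
  by_contra! hcon
  choose d hd hcon using hcon
  have : Nonempty (Fin p) := ⟨⟨0, hp⟩⟩
  obtain ⟨s₀, hs₀⟩ := Finite.exists_min d
  obtain ⟨w, hw, h0, m, -, hwm⟩ := hict r hr v hv (d s₀) (hd s₀)
  exact hcon ⟨m % p, Nat.mod_lt _ hp⟩ w m (hw.mono le_rfl (hs₀ _)) h0 hwm rfl

theorem exists_pad {F : ℝ → ℝ} {L : Set ℝ} (hL : Set.MapsTo F L L) {r : ℝ} (hr : r ∈ L) {p : ℕ}
    (hper : F^[p] r = r) {δ : ℝ} (hδ : 0 < δ) {w : ℕ → ℝ} (hw : IsPseudoOrbit F L δ w)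
    (h0 : w 0 = r) {m n : ℕ} (hmn : m ≤ n) (hmod : m % p = n % p) :
    ∃ w', IsPseudoOrbit F L δ w' ∧ w' 0 = r ∧ w' n = w m := by
  obtain ⟨k, hk⟩ := (Nat.modEq_iff_dvd' hmn).1 hmod
  have hrk : F^[p * k] r = r := by
    rw [Function.iterate_mul]
    exact Function.iterate_fixed hper k
  obtain ⟨v, hv, hv1, hv2⟩ := (isPseudoOrbit_orbit hL hδ hr).glue hw (m := p * k)
    (hrk.trans h0.symm)
  refine ⟨v, hv, by simpa using hv1 0 (Nat.zero_le _), ?_⟩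
  rw [← hv2 m]
  congr 1
  omega

/-- The fork: `r` can reach `a` and `b` simultaneously, with a point `c` of `L` strictly
in between. -/
theorem exists_fork {F : ℝ → ℝ} {L : Set ℝ} (hL : Set.MapsTo F L L) (hict : ICT F L)
    (hinf : L.Infinite) {r : ℝ} (hr : r ∈ L) {p : ℕ} (hp : 1 ≤ p) (hper : F^[p] r = r) :
    ∃ a ∈ L, ∃ c ∈ L, ∃ b ∈ L, a < c ∧ c < b ∧ ∀ δ > 0, ∃ w w' m,
      IsPseudoOrbit F L δ w ∧ IsPseudoOrbit F L δ w' ∧ w 0 = r ∧ w' 0 = r ∧ w m = a ∧ w' m = b := by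
  choose s hs using fun v : L => exists_residue hict hr hp v.2
  have : Infinite L := hinf.to_subtype
  obtain ⟨k, hk⟩ := Finite.exists_infinite_fiber s
  obtain ⟨t, hts, htc⟩ := (Set.infinite_coe_iff.1 hk).exists_subset_card_eq 3
  let e := t.orderEmbOfFin htc
  have he : ∀ i, s (e i) = k := fun i => hts (t.orderEmbOfFin_mem htc i)
  refine ⟨e 0, (e 0).2, e 1, (e 1).2, e 2, (e 2).2, e.strictMono (by decide),
    e.strictMono (by decide), fun δ hδ => ?_⟩
  obtain ⟨w, m, hw, h0, hm, hmod⟩ := hs (e 0) δ hδ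
  obtain ⟨w', m', hw', h0', hm', hmod'⟩ := hs (e 2) δ hδ
  rw [he] at hmod hmod'
  rcases le_total m m' with h | h
  · obtain ⟨v, hv, hv0, hvm⟩ := exists_pad hL hr hper hδ hw h0 h (hmod.trans hmod'.symm)
    exact ⟨v, w', m', hv, hw', hv0, h0', hvm.trans hm, hm'⟩
  · obtain ⟨v, hv, hv0, hvm⟩ := exists_pad hL hr hper hδ hw' h0' h (hmod'.trans hmod.symm)
    exact ⟨w, v, m, hw, hv, h0, hv0, hm, hvm.trans hm'⟩

/-- The interval between the `i`-th iterates of `s` and `t` covers the next one, so points can be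
pulled back along this sequence of intervals. -/
theorem exists_pullback {F : ℝ → ℝ} (hF : Continuous F) (s t : ℝ) (M : ℕ) :
    ∀ q ∈ Set.uIcc (F^[M] s) (F^[M] t), ∃ y, F^[M] y = q ∧
      ∀ i ≤ M, F^[i] y ∈ Set.uIcc (F^[i] s) (F^[i] t) := by
  induction M with
  | zero =>
    intro q hq
    refine ⟨q, rfl, fun i hi => ?_⟩
    obtain rfl : i = 0 := by omega
    exact hq
  | succ M ih =>
    intro q hq
    rw [Function.iterate_succ_apply', Function.iterate_succ_apply'] at hq
    obtain ⟨q', hq', rfl⟩ := intermediate_value_uIcc hF.continuousOn hq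
    obtain ⟨y, hy, hyi⟩ := ih q' hq'
    refine ⟨y, by rw [Function.iterate_succ_apply', hy], fun i hi => ?_⟩
    rcases Nat.le_succ_iff.1 hi with h | rfl
    · exact hyi i h
    · simp only [Nat.succ_eq_add_one, Function.iterate_succ_apply'] at hq ⊢
      rw [hy]
      exact hq

/-- Any chain in `L` from `c` is, up to time `T`, shadowed by points of `I = [c - e₀, c + e₀]`
whose `M`-th iterates fill `I` again. -/
theorem exists_loop_s8 {F : ℝ → ℝ} (hF : Continuous F) (hS : ShadowingOn F (Set.Icc (0 : ℝ) 1))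
    {L : Set ℝ} (hLI : L ⊆ Set.Icc 0 1) (hict : ICT F L) {r a b c e₀ : ℝ} (hr : r ∈ L)
    (hac : a + e₀ ≤ c - e₀) (hcb : c + e₀ ≤ b - e₀)
    (hfork : ∀ δ > 0, ∃ w w' m, IsPseudoOrbit F L δ w ∧ IsPseudoOrbit F L δ w' ∧
      w 0 = r ∧ w' 0 = r ∧ w m = a ∧ w' m = b) {ε : ℝ} (hε : 0 < ε) (hεe : ε ≤ e₀) :
    ∃ δ > 0, ∀ w, IsPseudoOrbit F L δ w → w 0 = c → ∀ T, ∃ M, 1 ≤ M ∧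
      ∀ q ∈ Set.Icc (c - e₀) (c + e₀), ∃ y ∈ Set.Icc (c - e₀) (c + e₀), F^[M] y = q ∧
        ∀ i ≤ T, dist (F^[i] y) (w i) ≤ ε := by
  obtain ⟨δ, hδ, hsh⟩ := hS ε hε
  refine ⟨δ, hδ, fun w hw h0 T => ?_⟩
  obtain ⟨u, hu, hu0, n, hn, hun⟩ := hict (w T) (hw.1 T) r hr δ hδ
  obtain ⟨α, β, m, hα, hβ, hα0, hβ0, hαm, hβm⟩ := hfork δ hδ
  obtain ⟨x, hx, hx1, hx2⟩ := hw.glue hu hu0.symm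
  have hxr : x (T + n) = r := by rw [hx2, hun]
  obtain ⟨A, hA, hA1, hA2⟩ := hx.glue hα (hxr.trans hα0.symm)
  obtain ⟨B, hB, hB1, hB2⟩ := hx.glue hβ (hxr.trans hβ0.symm)
  obtain ⟨s, -, hs⟩ := hsh A (fun k => hLI (hA.1 k)) hA.2
  obtain ⟨t, -, ht⟩ := hsh B (fun k => hLI (hB.1 k)) hB.2
  have hsM := hs (T + n + m)
  have htM := ht (T + n + m)
  rw [hA2, hαm, Real.dist_eq, abs_lt] at hsM
  rw [hB2, hβm, Real.dist_eq, abs_lt] at htM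
  have hnear : ∀ i ≤ T, ∀ y ∈ Set.uIcc (F^[i] s) (F^[i] t), dist y (w i) ≤ ε := by
    intro i hi y hy
    have h1 := hs i
    have h2 := ht i
    rw [hA1 i (by omega), hx1 i hi, Real.dist_eq, abs_lt] at h1
    rw [hB1 i (by omega), hx1 i hi, Real.dist_eq, abs_lt] at h2
    rw [Real.dist_eq, abs_le]
    rcases Set.mem_uIcc.1 hy with h | h <;> constructor <;> linarith [h.1, h.2]
  refine ⟨T + n + m, by omega, fun q hq => ?_⟩
  obtain ⟨y, hy, hyi⟩ := exists_pullback hF s t (T + n + m) q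
    (Set.mem_uIcc.2 (Or.inl ⟨by linarith [hq.1], by linarith [hq.2]⟩))
  refine ⟨y, ?_, hy, fun i hi => hnear i hi _ (hyi i (by omega))⟩
  have := hnear 0 (Nat.zero_le _) _ (hyi 0 (Nat.zero_le _))
  rw [h0, Real.dist_eq, abs_le, Function.iterate_zero, id] at this
  constructor <;> linarith [this.1, this.2]

/-- Infinitely many loops can be followed one after the other. -/
theorem exists_concat_s8 {F : ℝ → ℝ} (hF : Continuous F) {I : Set ℝ} (hI : IsCompact I)
    (hne : I.Nonempty) (C : ℕ → Set ℝ) (hC : ∀ j, IsClosed (C j)) (M : ℕ → ℕ)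
    (hmove : ∀ j, ∀ q ∈ I, ∃ y ∈ I, F^[M j] y = q ∧ y ∈ C j) :
    ∃ z ∈ I, ∀ j, F^[∑ i ∈ Finset.range j, M i] z ∈ I ∩ C j := by
  have hfin : ∀ n, ∀ q ∈ I, ∃ y ∈ I, F^[∑ i ∈ Finset.range n, M i] y = q ∧
      ∀ j < n, F^[∑ i ∈ Finset.range j, M i] y ∈ I ∩ C j := by
    intro n
    induction n with
    | zero => exact fun q hq => ⟨q, hq, by simp, by simp⟩
    | succ n ih =>
      intro q hq
      obtain ⟨y', hy', hq', hyC⟩ := hmove n q hq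
      obtain ⟨y, hy, hyy, hyj⟩ := ih y' hy'
      refine ⟨y, hy, ?_, fun j hj => ?_⟩
      · rw [Finset.sum_range_succ, add_comm, Function.iterate_add_apply, hyy, hq']
      · rcases Nat.lt_succ_iff_lt_or_eq.1 hj with h | rfl
        · exact hyj j h
        · rw [hyy]
          exact ⟨hy', hyC⟩
  let K : ℕ → Set ℝ := fun n => I ∩ ⋂ j, ⋂ (_ : j < n), F^[∑ i ∈ Finset.range j, M i] ⁻¹' (I ∩ C j)
  have hKcl : ∀ n, IsClosed (K n) := fun n =>
    hI.isClosed.inter (isClosed_iInter fun j => isClosed_iInter fun _ =>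
      (hI.isClosed.inter (hC j)).preimage (hF.iterate _))
  obtain ⟨z, hz⟩ := IsCompact.nonempty_iInter_of_sequence_nonempty_isCompact_isClosed K
    (fun n y hy => ⟨hy.1, Set.mem_iInter₂.2 fun j hj => Set.mem_iInter₂.1 hy.2 j (by omega)⟩)
    (fun n => by
      obtain ⟨q, hq⟩ := hne
      obtain ⟨y, hy, -, hyj⟩ := hfin n q hq
      exact ⟨y, hy, Set.mem_iInter₂.2 hyj⟩)
    (hI.of_isClosed_subset (hKcl 0) Set.inter_subset_left) hKcl
  rw [Set.mem_iInter] at hz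
  exact ⟨z, (hz 0).1, fun j => Set.mem_iInter₂.1 (hz (j + 1)).2 j (Nat.lt_succ_self j)⟩

/-- An infinite internally chain transitive set `L` with a periodic point lies in an ω-limit set,
which may be chosen to contain a point shadowing a given finite pseudo-orbit in `L`. -/
theorem exists_omega_superset {F : ℝ → ℝ} (hF : UniformContinuous F)
    (hS : ShadowingOn F (Set.Icc (0 : ℝ) 1)) {L : Set ℝ} (hLI : L ⊆ Set.Icc 0 1)
    (hL : Set.MapsTo F L L) (hict : ICT F L) (hinf : L.Infinite)
    {r : ℝ} (hr : r ∈ L) {p : ℕ} (hp : 1 ≤ p) (hper : F^[p] r = r) {ε : ℝ} (hε : 0 < ε) :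
    ∃ δ > 0, ∀ x, IsPseudoOrbit F L δ x → ∀ n, ∃ z ∈ Set.Icc (0 : ℝ) 1,
      L ⊆ OmegaLimitSet F z ∧ ∃ y ∈ OmegaLimitSet F z, ∀ i ≤ n, dist (F^[i] y) (x i) ≤ ε := by
  have hFc := hF.continuous
  obtain ⟨a, ha, c, hc, b, hb, hac, hcb, hfork⟩ := exists_fork hL hict hinf hr hp hper
  obtain ⟨e₀, he₀, he1, he2⟩ : ∃ e₀ > 0, a + e₀ ≤ c - e₀ ∧ c + e₀ ≤ b - e₀ :=
    ⟨min ((c - a) / 2) ((b - c) / 2), lt_min (by linarith) (by linarith),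
      by linarith [min_le_left ((c - a) / 2) ((b - c) / 2)],
      by linarith [min_le_right ((c - a) / 2) ((b - c) / 2)]⟩
  have hloop := fun (e : ℝ) (h : 0 < e) (h' : e ≤ e₀) =>
    exists_loop_s8 hFc hS hLI hict hr he1 he2 hfork h h'
  obtain ⟨δ, hδ, hδloop⟩ := hloop (min ε e₀) (lt_min hε he₀) (min_le_right _ _)
  refine ⟨δ, hδ, fun x hx n => ?_⟩
  obtain ⟨v, hv, hv0, k, hk, hvk⟩ := hict c hc (x 0) (hx.1 0) δ hδ
  obtain ⟨w, hw, hw1, hw2⟩ := hv.glue hx hvk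
  obtain ⟨M₀, hM₀, hmove₀⟩ := hδloop w hw (by rw [hw1 0 (Nat.zero_le _), hv0]) (k + n)
  have : Nonempty L := ⟨⟨c, hc⟩⟩
  -- The targets run through a dense sequence of `L`, each term being repeated infinitely often.
  let d : ℕ → L := TopologicalSpace.denseSeq L
  have hmove : ∀ j : ℕ, ∃ M T : ℕ, 1 ≤ M ∧ ∀ q ∈ Set.Icc (c - e₀) (c + e₀),
      ∃ y ∈ Set.Icc (c - e₀) (c + e₀), F^[M] y = q ∧
        (∀ i ≤ k + n, dist (F^[i] y) (w i) ≤ min ε e₀) ∧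
        dist (F^[T] y) (d (Nat.unpair j).1) ≤ 1 / ((j : ℝ) + 1) := by
    intro j
    obtain ⟨δ', hδ', hl⟩ := hloop (min (1 / ((j : ℝ) + 1)) e₀)
      (lt_min Nat.one_div_pos_of_nat he₀) (min_le_right _ _)
    obtain ⟨u, hu, hu0, T, hT, huT⟩ := hict c hc _ (d (Nat.unpair j).1).2 δ' hδ'
    obtain ⟨M, hM, hm⟩ := hl u hu hu0 T
    refine ⟨M + M₀, T + M₀, by omega, fun q hq => ?_⟩
    obtain ⟨y', hy', hyq, hyT⟩ := hm q hq
    obtain ⟨y, hy, hyy, hyw⟩ := hmove₀ y' hy'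
    refine ⟨y, hy, by rw [Function.iterate_add_apply, hyy, hyq], hyw, ?_⟩
    rw [Function.iterate_add_apply, hyy, ← huT]
    exact (hyT T le_rfl).trans (min_le_left _ _)
  choose M T hM hmove using hmove
  let C₀ : Set ℝ := {y | ∀ i ≤ k + n, dist (F^[i] y) (w i) ≤ min ε e₀}
  have hC₀ : IsClosed C₀ := by
    simp only [C₀, Set.ofPred_forall]
    exact isClosed_iInter fun i => isClosed_iInter fun _ =>
      isClosed_le ((hFc.iterate i).dist continuous_const) continuous_const
  obtain ⟨z, hz, hzj⟩ := exists_concat_s8 hFc (isCompact_Icc (a := c - e₀) (b := c + e₀))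
    ⟨c, by constructor <;> linarith⟩
    (fun j => C₀ ∩ {y | dist (F^[T j] y) (d (Nat.unpair j).1) ≤ 1 / ((j : ℝ) + 1)})
    (fun j => hC₀.inter
      (isClosed_le ((hFc.iterate _).dist continuous_const) continuous_const)) M hmove
  have hmono : StrictMono fun j => ∑ i ∈ Finset.range j, M i :=
    strictMono_nat_of_lt_succ fun j => by
      rw [Finset.sum_range_succ]
      have := hM j
      omega
  have hzI : z ∈ Set.Icc (0 : ℝ) 1 :=
    ⟨by linarith [hz.1, (hLI ha).1], by linarith [hz.2, (hLI hb).2]⟩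
  refine ⟨z, hzI, ?_, ?_⟩
  · have hd : ∀ i, (d i : ℝ) ∈ OmegaLimitSet F z := by
      refine fun i => mem_omega_iff.2 fun η hη N => ?_
      obtain ⟨l, hl⟩ := exists_nat_one_div_lt hη
      have hpair : max l N ≤ Nat.pair i (max l N) := Nat.right_le_pair _ _
      have hjl : l ≤ Nat.pair i (max l N) := (le_max_left _ _).trans hpair
      have hjN : N ≤ Nat.pair i (max l N) := (le_max_right _ _).trans hpair
      have h := (hzj (Nat.pair i (max l N))).2.2
      simp only [Set.mem_ofPred_eq, Nat.unpair_pair, ← Function.iterate_add_apply] at h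
      refine ⟨_, ?_, h.trans_lt (lt_of_le_of_lt ?_ hl)⟩
      · exact (hjN.trans (hmono.id_le _)).trans (Nat.le_add_left _ _)
      · exact Nat.one_div_le_one_div hjl
    intro y hy
    have hcl : (⟨y, hy⟩ : L) ∈ closure (Set.range d) := TopologicalSpace.denseRange_denseSeq L _
    have := map_mem_closure continuous_subtype_val hcl
      (t := OmegaLimitSet F z) (by rintro _ ⟨i, rfl⟩; exact hd i)
    rwa [(isClosed_omega F z).closure_eq] at this
  · obtain ⟨y, hy, φ, hφ, hlim⟩ := (isCompact_Icc.inter_right hC₀).tendsto_subseq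
      (fun j => ⟨(hzj j).1, (hzj j).2.1⟩)
    have hyω : y ∈ OmegaLimitSet F z := ⟨_, hmono.comp hφ, hlim⟩
    refine ⟨F^[k] y, (mapsTo_omega hF z).iterate k hyω, fun i hi => ?_⟩
    have := hy.2 (k + i) (by omega)
    rw [hw2, add_comm, Function.iterate_add_apply] at this
    exact this.trans (min_le_left _ _)

/-! ### Finite invariant sets -/

theorem exists_gap {L : Set ℝ} (hL : L.Finite) :
    ∃ δ > 0, ∀ u ∈ L, ∀ v ∈ L, dist u v < δ → u = v := by
  by_cases h : L.Nontrivial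
  · exact ⟨L.infsep, hL.infsep_pos_iff_nontrivial.2 h, fun u hu v hv huv => by
      by_contra hne
      exact absurd huv (not_lt.2 (Set.infsep_le_dist_of_mem hu hv hne))⟩
  · exact ⟨1, one_pos, fun u hu v hv _ => Set.not_nontrivial_iff.1 h hu hv⟩

/-- In a finite invariant set, pseudo-orbits with small jumps are orbits. -/
theorem exists_orbit_of_finite {F : ℝ → ℝ} {L : Set ℝ} (hL : L.Finite)
    (hmaps : Set.MapsTo F L L) :
    ∃ δ > 0, ∀ w, IsPseudoOrbit F L δ w → ∀ n, w n = F^[n] (w 0) := by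
  obtain ⟨δ, hδ, hgap⟩ := exists_gap hL
  refine ⟨δ, hδ, fun w hw n => ?_⟩
  induction n with
  | zero => rfl
  | succ n ih =>
    rw [Function.iterate_succ_apply', ← ih]
    exact (hgap _ (hmaps (hw.1 n)) _ (hw.1 (n + 1)) (hw.2 n)).symm

theorem shadowingOn_of_finite {F : ℝ → ℝ} {L : Set ℝ} (hL : L.Finite)
    (hmaps : Set.MapsTo F L L) : ShadowingOn F L := by
  intro ε hε
  obtain ⟨δ, hδ, h⟩ := exists_orbit_of_finite hL hmaps
  refine ⟨δ, hδ, fun x hx hx' => ⟨x 0, hx 0, fun n => ?_⟩⟩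
  rw [h x ⟨hx, hx'⟩ n, dist_self]
  exact hε

/-! ### Periodic points and maximal ω-limit sets -/

theorem mem_omega_of_periodic {F : ℝ → ℝ} {r : ℝ} {p : ℕ} (hp : 1 ≤ p) (hper : F^[p] r = r) :
    r ∈ OmegaLimitSet F r := by
  refine mem_omega_iff.2 fun ε hε N => ⟨p * N, Nat.le_mul_of_pos_left N hp, ?_⟩
  rw [Function.iterate_mul, Function.iterate_fixed hper N, dist_self]
  exact hε

/-- Every periodic point lies in a maximal ω-limit set: the closure of the union of all ω-limit sets
containing the point is one. -/
theorem exists_maximal_of_periodic {F : ℝ → ℝ} (hF : UniformContinuous F)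
    (hI : ∀ x, F x ∈ Set.Icc (0 : ℝ) 1) (hS : ShadowingOn F (Set.Icc (0 : ℝ) 1))
    {r : ℝ} (hrI : r ∈ Set.Icc (0 : ℝ) 1) {p : ℕ} (hp : 1 ≤ p) (hper : F^[p] r = r) :
    ∃ B, IsMaximalOmegaLimitSet F B ∧ r ∈ B := by
  let S : Set (Set ℝ) := {B | IsOmegaLimitSetOn F B ∧ r ∈ B}
  have hrω := mem_omega_of_periodic hp hper
  have hrS : OmegaLimitSet F r ∈ S := ⟨⟨r, hrI, rfl⟩, hrω⟩
  have hSL : ∀ B ∈ S, B ⊆ closure (⋃₀ S) := fun B hB =>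
    (Set.subset_sUnion_of_mem hB).trans subset_closure
  have hr : r ∈ closure (⋃₀ S) := hSL _ hrS hrω
  have hLI : closure (⋃₀ S) ⊆ Set.Icc 0 1 := by
    refine closure_minimal (Set.sUnion_subset ?_) isClosed_Icc
    rintro _ ⟨⟨x, -, rfl⟩, -⟩
    exact omega_subset hI x
  have hL : Set.MapsTo F (closure (⋃₀ S)) (closure (⋃₀ S)) := by
    refine Set.MapsTo.closure ?_ hF.continuous
    rintro y ⟨_, ⟨⟨x, hx, rfl⟩, hxr⟩, hy⟩
    exact ⟨_, ⟨⟨x, hx, rfl⟩, hxr⟩, mapsTo_omega hF x hy⟩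
  have hict : ICT F (closure (⋃₀ S)) := by
    refine ICT.closure hF (ICT.sUnion (q := r) ?_ fun s hs => hs.2)
    rintro _ ⟨⟨x, hx, rfl⟩, -⟩
    exact ict_omega hF hI hx
  obtain ⟨z, hz, hLz⟩ : ∃ z ∈ Set.Icc (0 : ℝ) 1, closure (⋃₀ S) ⊆ OmegaLimitSet F z := by
    by_cases hfin : (closure (⋃₀ S)).Finite
    · refine ⟨r, hrI, fun v hv => ?_⟩
      obtain ⟨δ, hδ, h⟩ := exists_orbit_of_finite hfin hL
      obtain ⟨w, hw, h0, m, -, hm⟩ := hict r hr v hv δ hδ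
      rw [← hm, h w hw m, h0]
      exact (mapsTo_omega hF r).iterate m hrω
    · obtain ⟨δ, hδ, h⟩ := exists_omega_superset hF hS hLI hL hict hfin hr hp hper one_pos
      obtain ⟨z, hz, hLz, -⟩ := h _ (isPseudoOrbit_orbit hL hδ hr) 0
      exact ⟨z, hz, hLz⟩
  exact ⟨_, ⟨⟨z, hz, rfl⟩, fun B hB hzB =>
    ((hSL B ⟨hB, hzB (hLz hr)⟩).trans hLz).antisymm hzB⟩, hLz hr⟩

/-- Shadowing a closed pseudo-orbit through `x₀` gives a periodic point near `x₀`: an iterate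
`F^m` sends the orbit closure of a shadowing point under `F^m` to itself, hence it
has a fixed point in the convex hull of this closure. -/
theorem exists_periodic_near {F : ℝ → ℝ} (hF : UniformContinuous F)
    (hI : ∀ x, F x ∈ Set.Icc (0 : ℝ) 1) (hS : ShadowingOn F (Set.Icc (0 : ℝ) 1)) {A : Set ℝ}
    (hAI : A ⊆ Set.Icc 0 1) (hict : ICT F A) {x₀ : ℝ} (hx₀ : x₀ ∈ A) {ε : ℝ} (hε : 0 < ε) :
    ∃ r ∈ Set.Icc (0 : ℝ) 1, ∃ p, 1 ≤ p ∧ F^[p] r = r ∧ dist r x₀ ≤ ε := by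
  obtain ⟨δ, hδ, hsh⟩ := hS ε hε
  obtain ⟨w, hw, h0, m, hm, hwm⟩ := hict x₀ hx₀ x₀ hx₀ δ hδ
  obtain ⟨z, -, hz⟩ := hsh (fun i => w (i % m)) (fun n => hAI (hw.1 _)) (fun n => by
    have h := hw.2 (n % m)
    rcases Nat.lt_or_ge (n % m + 1) m with h1 | h1
    · have : (n + 1) % m = n % m + 1 := by
        rw [Nat.add_mod, Nat.mod_eq_of_lt (show 1 < m by omega), Nat.mod_eq_of_lt h1]
      simpa [this] using h
    · have h2 : n % m + 1 = m := le_antisymm (Nat.mod_lt n hm) h1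
      have : (n + 1) % m = 0 := by
        rw [← Nat.mod_add_mod, h2, Nat.mod_self]
      rw [h2, hwm] at h
      simpa [this, h0] using h)
  let G := F^[m]
  have hG : Continuous G := hF.continuous.iterate m
  let Y : Set ℝ := Set.range fun j => G^[j] z
  have hGY : Set.MapsTo G (closure Y) (closure Y) := by
    refine Set.MapsTo.closure ?_ hG
    rintro _ ⟨j, rfl⟩
    exact ⟨j + 1, Function.iterate_succ_apply' G j z⟩
  have hYb : closure Y ⊆ Metric.closedBall x₀ ε := by
    refine closure_minimal ?_ Metric.isClosed_closedBall
    rintro _ ⟨j, rfl⟩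
    have := hz (m * j)
    rw [Function.iterate_mul] at this
    simpa [h0] using this.le
  have hYc : IsCompact (closure Y) :=
    (isCompact_closedBall x₀ ε).of_isClosed_subset isClosed_closure hYb
  have hYne : (closure Y).Nonempty := ⟨z, subset_closure ⟨0, rfl⟩⟩
  obtain ⟨s, hs⟩ := hYc.exists_isLeast hYne
  obtain ⟨t, ht⟩ := hYc.exists_isGreatest hYne
  obtain ⟨r, hr, hfix⟩ := exists_mem_Icc_isFixedPt (f := G) hG.continuousOn (hs.2 ht.1)
    (hs.2 (hGY hs.1)) (ht.2 (hGY ht.1))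
  have hfix' : F^[m] r = r := hfix
  refine ⟨r, ?_, m, hm, hfix', ?_⟩
  · obtain ⟨k, rfl⟩ : ∃ k, m = k + 1 := ⟨m - 1, by omega⟩
    rw [← hfix', Function.iterate_succ_apply']
    exact hI _
  · have h1 := hYb hs.1
    have h2 := hYb ht.1
    rw [Metric.mem_closedBall, Real.dist_eq, abs_le] at h1 h2
    rw [Real.dist_eq, abs_le]
    constructor <;> linarith [hr.1, hr.2]

/-- If there are only finitely many maximal ω-limit sets, each infinite one contains a periodic
point. -/
theorem exists_periodic_mem {F : ℝ → ℝ} (hF : UniformContinuous F)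
    (hI : ∀ x, F x ∈ Set.Icc (0 : ℝ) 1) (hS : ShadowingOn F (Set.Icc (0 : ℝ) 1))
    (hfin : {A : Set ℝ | IsMaximalOmegaLimitSet F A}.Finite) {A : Set ℝ}
    (hA : IsMaximalOmegaLimitSet F A) (hinf : A.Infinite) :
    ∃ r ∈ A, ∃ p, 1 ≤ p ∧ F^[p] r = r := by
  obtain ⟨⟨x, hx, rfl⟩, hmax⟩ := hA
  obtain ⟨x₀, hx₀⟩ := hinf.nonempty
  have hper := fun n : ℕ => exists_periodic_near hF hI hS (omega_subset hI x) (ict_omega hF hI hx)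
    hx₀ (Nat.one_div_pos_of_nat (α := ℝ) (n := n))
  choose r hrI p hp hrp hrd using hper
  choose B hB hrB using fun n => exists_maximal_of_periodic hF hI hS (hrI n) (hp n) (hrp n)
  have : Finite {A : Set ℝ | IsMaximalOmegaLimitSet F A} := hfin
  obtain ⟨⟨B₀, hB₀⟩, hinfB⟩ := Finite.exists_infinite_fiber
    (fun n => (⟨B n, hB n⟩ : {A : Set ℝ | IsMaximalOmegaLimitSet F A}))
  have hfib : ∀ N, ∃ n ≥ N, B n = B₀ := fun N => by
    obtain ⟨n, hn, hNn⟩ := (Set.infinite_coe_iff.1 hinfB).exists_gt N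
    exact ⟨n, hNn.le, congrArg Subtype.val hn⟩
  obtain ⟨⟨b, hb, hbB⟩, -⟩ := id hB₀
  -- The points `r n` with `B n = B₀` converge to `x₀`.
  have hx₀B : x₀ ∈ B₀ := by
    have hcl : IsClosed B₀ := hbB ▸ isClosed_omega F b
    rw [← hcl.closure_eq, Metric.mem_closure_iff]
    intro ε hε
    obtain ⟨N, hN⟩ := exists_nat_one_div_lt hε
    obtain ⟨n, hn, hBn⟩ := hfib N
    refine ⟨r n, hBn ▸ hrB n, ?_⟩
    rw [dist_comm]
    exact ((hrd n).trans (Nat.one_div_le_one_div hn)).trans_lt hN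
  obtain ⟨n, -, hBn⟩ := hfib 0
  have hrn : r n ∈ B₀ := hBn ▸ hrB n
  subst hbB
  have hict : ICT F (OmegaLimitSet F x ∪ OmegaLimitSet F b) := by
    rw [← Set.sUnion_pair]
    refine ICT.sUnion (q := x₀) ?_ ?_
    · rintro _ (rfl | rfl)
      exacts [ict_omega hF hI hx, ict_omega hF hI hb]
    · rintro _ (rfl | rfl)
      exacts [hx₀, hx₀B]
  have hmaps : Set.MapsTo F (OmegaLimitSet F x ∪ OmegaLimitSet F b)
      (OmegaLimitSet F x ∪ OmegaLimitSet F b) :=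
    (mapsTo_omega hF x).union_union (mapsTo_omega hF b)
  obtain ⟨δ, hδ, h⟩ := exists_omega_superset hF hS
    (Set.union_subset (omega_subset hI x) (omega_subset hI b)) hmaps hict
    (hinf.mono Set.subset_union_left) (Or.inr hrn) (hp n) (hrp n) one_pos
  obtain ⟨z, hz, hsub, -⟩ := h _ (isPseudoOrbit_orbit hmaps hδ (Or.inr hrn)) 0
  have hzA := hmax _ ⟨z, hz, rfl⟩ (Set.subset_union_left.trans hsub)
  exact ⟨r n, hzA ▸ hsub (Or.inr hrn), p n, hp n, hrp n⟩

theorem shadowingOn_maximal_core {F : ℝ → ℝ} (hF : UniformContinuous F)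
    (hI : ∀ x, F x ∈ Set.Icc (0 : ℝ) 1) (hS : ShadowingOn F (Set.Icc (0 : ℝ) 1))
    (hfin : {A : Set ℝ | IsMaximalOmegaLimitSet F A}.Finite) {A : Set ℝ}
    (hA : IsMaximalOmegaLimitSet F A) : ShadowingOn F A := by
  obtain ⟨x₀, hx₀, hAx⟩ := hA.1
  have hmaps : Set.MapsTo F A A := hAx ▸ mapsTo_omega hF x₀
  have hAI : A ⊆ Set.Icc 0 1 := hAx ▸ omega_subset hI x₀
  have hict : ICT F A := hAx ▸ ict_omega hF hI hx₀
  have hAcl : IsClosed A := hAx ▸ isClosed_omega F x₀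
  by_cases hAfin : A.Finite
  · exact shadowingOn_of_finite hAfin hmaps
  obtain ⟨r, hr, p, hp, hper⟩ := exists_periodic_mem hF hI hS hfin hA hAfin
  intro ε hε
  obtain ⟨δ, hδ, h⟩ := exists_omega_superset hF hS hAI hmaps hict hAfin hr hp hper (half_pos hε)
  refine ⟨δ, hδ, fun x hxA hx => ?_⟩
  -- Points of `A` shadowing longer and longer initial segments form a nested sequence of
  -- nonempty compact sets.
  let K : ℕ → Set ℝ := fun n => A ∩ ⋂ i, ⋂ (_ : i ≤ n), {y | dist (F^[i] y) (x i) ≤ ε / 2}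
  have hKcl : ∀ n, IsClosed (K n) := fun n =>
    hAcl.inter (isClosed_iInter fun i => isClosed_iInter fun _ =>
      isClosed_le ((hF.continuous.iterate i).dist continuous_const) continuous_const)
  obtain ⟨z, hz⟩ := IsCompact.nonempty_iInter_of_sequence_nonempty_isCompact_isClosed K
    (fun n y hy => ⟨hy.1, Set.mem_iInter₂.2 fun j hj => Set.mem_iInter₂.1 hy.2 j (by omega)⟩)
    (fun n => by
      obtain ⟨z, hz, hsub, y, hy, hyi⟩ := h x ⟨hxA, hx⟩ n
      rw [hA.2 _ ⟨z, hz, rfl⟩ hsub] at hy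
      exact ⟨y, hy, Set.mem_iInter₂.2 hyi⟩)
    ((isCompact_Icc.of_isClosed_subset hAcl hAI).of_isClosed_subset (hKcl 0) Set.inter_subset_left)
    hKcl
  rw [Set.mem_iInter] at hz
  refine ⟨z, (hz 0).1, fun n => lt_of_le_of_lt ?_ (half_lt_self hε)⟩
  exact Set.mem_iInter₂.1 (hz n).2 n le_rfl

/-- If a continuous interval map with shadowing has only finitely many
maximal ω-limit sets, then its restriction to each of them has shadowing. -/
theorem shadowingOn_maximal_omegaLimitSet_of_finite
    (f : ℝ → ℝ)
    (hmaps : Set.MapsTo f (Set.Icc (0 : ℝ) 1) (Set.Icc (0 : ℝ) 1))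
    (hcont : ContinuousOn f (Set.Icc (0 : ℝ) 1))
    (hshad : ShadowingOn f (Set.Icc (0 : ℝ) 1))
    (hfin : {A : Set ℝ | IsMaximalOmegaLimitSet f A}.Finite) :
    ∀ A : Set ℝ, IsMaximalOmegaLimitSet f A → ShadowingOn f A := by
  -- `F` is `f` precomposed with the retraction of `ℝ` onto `[0,1]`.
  let F : ℝ → ℝ := Set.IccExtend zero_le_one (Set.domRestrict (Set.Icc (0 : ℝ) 1) f)
  have hFf : ∀ x ∈ Set.Icc (0 : ℝ) 1, F x = f x := fun x hx => Set.IccExtend_of_mem _ _ hx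
  have hF : UniformContinuous F :=
    (CompactSpace.uniformContinuous_of_continuous hcont.domRestrict).comp
      (LipschitzWith.projIcc zero_le_one).uniformContinuous
  have hI : ∀ x, F x ∈ Set.Icc (0 : ℝ) 1 := fun x =>
    hmaps (Set.projIcc (0 : ℝ) 1 zero_le_one x).2
  have hiter : ∀ x ∈ Set.Icc (0 : ℝ) 1, ∀ n, F^[n] x = f^[n] x := by
    intro x hx n
    induction n with
    | zero => rfl
    | succ n ih =>
      rw [Function.iterate_succ_apply', Function.iterate_succ_apply', ← ih,
        hFf _ (iterate_mem hI hx n)]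
  have hω : ∀ x ∈ Set.Icc (0 : ℝ) 1, OmegaLimitSet F x = OmegaLimitSet f x := by
    intro x hx
    unfold OmegaLimitSet
    simp only [hiter x hx]
  have hon : IsOmegaLimitSetOn F = IsOmegaLimitSetOn f := by
    funext A
    refine propext (exists_congr fun x => and_congr_right fun hx => ?_)
    rw [hω x hx]
  have hmaxeq : IsMaximalOmegaLimitSet F = IsMaximalOmegaLimitSet f := by
    funext A
    unfold IsMaximalOmegaLimitSet
    rw [hon]
  have hsh : ∀ A ⊆ Set.Icc (0 : ℝ) 1, (ShadowingOn F A ↔ ShadowingOn f A) := by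
    refine fun A hA => forall₂_congr fun ε _ => exists_congr fun δ => and_congr_right fun _ =>
      forall₂_congr fun x hx => imp_congr ?_ (exists_congr fun z => and_congr_right fun hz => ?_)
    · exact forall_congr' fun n => by rw [hFf _ (hA (hx n))]
    · exact forall_congr' fun n => by rw [hiter z (hA hz)]
  intro A hA
  rw [← hmaxeq] at hA hfin
  have hAI : A ⊆ Set.Icc 0 1 := by
    obtain ⟨⟨x, -, rfl⟩, -⟩ := hA
    exact omega_subset hI x
  exact (hsh A hAI).1 (shadowingOn_maximal_core hF hI ((hsh _ subset_rfl).2 hshad) hfin hA)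
end
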